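/- arXiv:2510.18451 — 7 statements merged into one kernel-verified Lean document; each statement's English description precedes it below -/
import Mathlib

section
/- Let Ψ : (0,∞) → (0,∞) and ω : (0,∞) → (0,1) be such that lim_{q→∞} q²Ψ(q) = 0, lim_{q→∞} ω(q) = 0, and the map q ↦ q²Ψ(q) is non-increasing on (0,∞). Suppose furthermore that ω(q) ≥ (45/Ψ(q)) · Ψ(1/(2qΨ(q))) for all sufficiently large q. Then the set E(Ψ,ω) is uncountable. -/
open Filter Set

/-- A real number `x` is `Ψ`-approximable: `|x - p/q| ≤ Ψ q` for infinitely many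
pairs `(p, q) ∈ ℤ × ℕ` (with `q > 0`).  `WSet Ψ` is the set `W(Ψ)` of such `x`. -/
def WSet (Ψ : ℝ → ℝ) : Set ℝ :=
  {x : ℝ | {pq : ℤ × ℕ | 0 < pq.2 ∧ |x - (pq.1 : ℝ) / (pq.2 : ℝ)| ≤ Ψ (pq.2 : ℝ)}.Infinite}

/-- `ESet Ψ ω` is the set `E(Ψ, ω)` of `x ∈ W(Ψ)` such that for all sufficiently large
`q ∈ ℕ` one has `|x - p/q| ≥ (1 - ω q) * Ψ q` for every `p ∈ ℤ`. -/
def ESet (Ψ ω : ℝ → ℝ) : Set ℝ :=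
  {x : ℝ | x ∈ WSet Ψ ∧ ∃ Q : ℕ, ∀ q : ℕ, Q ≤ q → ∀ p : ℤ,
    (1 - ω (q : ℝ)) * Ψ (q : ℝ) ≤ |x - (p : ℝ) / (q : ℝ)|}

/-!
A point of `E(Ψ, ω)` avoiding a given sequence `z₀, z₁, …` is the common point of nested intervals
`I₀ ⊇ I₁ ⊇ …`, where `Iₙ` lies at the outer edge of the ball of radius `Ψ(qₙ)` around a reduced
fraction `pₙ/qₙ`, on one side of it.

Let `I` be the interval attached to `p/q` and put `Q = 1/(2qΨ(q))`. A fraction `u/r ≠ p/q` with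
`q ≤ r ≤ Q` is at distance at least `1/(rq) ≥ 2Ψ(q)` from `p/q`, hence at least `Ψ(q)` from all of
`I`. As `I` has length `18Ψ(Q)`, it contains, at distance `Ψ(Q)` from its ends, a point `y` whose
distance to any fraction `u/r` is at least `min (2Ψ(Q)) (1/(64r²))`. By Dirichlet's theorem there is
`p'/q'` with `|y - p'/q'| ≤ 1/q'²` and `q'` as large as desired. The ball of radius `Ψ(q')` around
`p'/q'` is then contained in `I`, and it avoids the balls of radius `Ψ(r)` around `u/r` for
`Q ≤ r < q'`: if `r` is much smaller than `q'` because `y` does, and otherwise because distinct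
fractions repel each other. The next interval lies in this ball, on the left or on the right of
`p'/q'`, whichever misses the current `zₙ`.
-/

/-! ### Nested compact sets -/

theorem exists_seq_rel_mem_of_nested {σ X : Type*} [TopologicalSpace X] [T2Space X]
    {I : ℕ → σ → Set X} (hne : ∀ n s, (I n s).Nonempty) (hcomp : ∀ n s, IsCompact (I n s))
    {R : ℕ → σ → σ → Prop} (hsub : ∀ n s t, R n s t → I (n + 1) t ⊆ I n s)
    (hstep : ∀ n s, ∃ t, R n s t) (s₀ : σ) :
    ∃ (g : ℕ → σ) (x : X), g 0 = s₀ ∧ (∀ n, R n (g n) (g (n + 1))) ∧ ∀ n, x ∈ I n (g n) := by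
  choose f hf using hstep
  let g : ℕ → σ := fun n => Nat.rec s₀ f n
  have hg : ∀ n, R n (g n) (g (n + 1)) := fun n => hf n (g n)
  obtain ⟨x, hx⟩ := IsCompact.nonempty_iInter_of_sequence_nonempty_isCompact_isClosed
    (fun n => I n (g n)) (fun n => hsub n _ _ (hg n)) (fun n => hne n _) (hcomp 0 _)
    (fun n => (hcomp n _).isClosed)
  exact ⟨g, x, rfl, hg, mem_iInter.1 hx⟩

theorem exists_le_and_lt_succ_of_strictMono {d : ℕ → ℕ} (hd : StrictMono d) {r : ℕ} (hr : d 0 ≤ r) :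
    ∃ n, d n ≤ r ∧ r < d (n + 1) := by
  have hcover := iUnion_Ico_map_succ_eq_Ici (fun n => hd.monotone (Nat.zero_le n))
    hd.not_bddAbove_range_of_wellFoundedLT
  simpa only [mem_iUnion, mem_Ico, Order.succ_eq_add_one] using hcover.ge (mem_Ici.2 hr)

/-! ### Badly approximable points in a given interval -/

theorem one_div_den_mul_den_le_abs_sub {s t : ℚ} (h : s ≠ t) :
    1 / ((s.den : ℝ) * t.den) ≤ |(s : ℝ) - t| := by
  have hden : (s - t).den ≤ s.den * t.den :=
    Nat.le_of_dvd (Nat.mul_pos s.den_pos t.den_pos) (Rat.sub_den_dvd s t)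
  have hden' : ((s - t).den : ℝ) ≤ s.den * t.den := by exact_mod_cast hden
  have hnum : (1 : ℝ) ≤ |((s - t).num : ℝ)| := by
    exact_mod_cast Int.one_le_abs (Rat.num_ne_zero.2 (sub_ne_zero.2 h))
  rw [← Rat.cast_sub, Rat.cast_def, abs_div, Nat.abs_cast]
  gcongr

theorem den_intCast_div_natCast_dvd (u : ℤ) (r : ℕ) : (u / r : ℚ).den ∣ r := by
  have hdvd := Rat.den_dvd u r
  rw [← Rat.intCast_div_eq_divInt] at hdvd
  exact_mod_cast hdvd

/-- Two distinct fractions of denominator less than `(2l)^(-1/2)` are more than `2l` apart, so they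
cannot be close to the leftmost and to the rightmost quarter of the interval respectively. Hence one
of these two quarters will do. -/
theorem exists_quarter_forall_le_abs_sub (c : ℝ) {l : ℝ} (hl : 0 < l) :
    ∃ c', Icc c' (c' + l / 4) ⊆ Icc c (c + l) ∧ ∀ x ∈ Icc c' (c' + l / 4), ∀ s : ℚ,
      2 * l * (s.den : ℝ) ^ 2 < 1 → l / 8 ≤ |x - s| := by
  by_contra! hbad
  obtain ⟨x, hx, s, hs, hxs⟩ := hbad c (Icc_subset_Icc le_rfl (by linarith))
  obtain ⟨y, hy, t, ht, hyt⟩ :=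
    hbad (c + 3 * l / 4) (Icc_subset_Icc (by linarith) (by linarith))
  rw [abs_lt] at hxs hyt
  have hst : (s : ℝ) < t := by linarith [hx.2, hy.1]
  have hgap := one_div_den_mul_den_le_abs_sub (Rat.cast_lt.1 hst).ne
  have hfar : 2 * l < 1 / ((s.den : ℝ) * t.den) := by
    rw [lt_div_iff₀ (by positivity)]
    nlinarith [mul_nonneg hl.le (sq_nonneg ((s.den : ℝ) - t.den))]
  have hnear : |(s : ℝ) - t| < 2 * l := by
    rw [abs_lt]
    constructor <;> linarith [hx.1, hy.2]
  linarith

theorem exists_mem_Icc_forall_scale (c : ℝ) {H : ℝ} (hH : 0 < H) :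
    ∃ y ∈ Icc c (c + H), ∀ (k : ℕ) (s : ℚ),
      2 * (H / 4 ^ k) * (s.den : ℝ) ^ 2 < 1 → H / 4 ^ k / 8 ≤ |y - s| := by
  have hpos : ∀ k : ℕ, 0 < H / 4 ^ k := fun k => by positivity
  have hquarter : ∀ k : ℕ, H / 4 ^ k / 4 = H / 4 ^ (k + 1) := fun k => by
    rw [pow_succ, div_div]
  obtain ⟨g, y, hg0, hg, hy⟩ := exists_seq_rel_mem_of_nested
    (I := fun k a => Icc a (a + H / 4 ^ k))
    (R := fun k a b => Icc b (b + H / 4 ^ k / 4) ⊆ Icc a (a + H / 4 ^ k) ∧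
      ∀ x ∈ Icc b (b + H / 4 ^ k / 4), ∀ s : ℚ,
        2 * (H / 4 ^ k) * (s.den : ℝ) ^ 2 < 1 → H / 4 ^ k / 8 ≤ |x - s|)
    (fun k a => nonempty_Icc.2 (by linarith [hpos k])) (fun _ _ => isCompact_Icc)
    (fun k a b h => hquarter k ▸ h.1)
    (fun k a => exists_quarter_forall_le_abs_sub a (hpos k)) c
  refine ⟨y, by simpa [hg0] using hy 0, fun k => (hg k).2 y ?_⟩
  rw [hquarter]
  exact hy (k + 1)

theorem exists_mem_Icc_forall_min_le_abs_sub (c : ℝ) {H : ℝ} (hH : 0 < H) :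
    ∃ y ∈ Icc c (c + H), ∀ s : ℚ, min (H / 8) (1 / (64 * (s.den : ℝ) ^ 2)) ≤ |y - s| := by
  obtain ⟨y, hyI, hy⟩ := exists_mem_Icc_forall_scale c hH
  refine ⟨y, hyI, fun s => ?_⟩
  rcases lt_or_ge (2 * H * (s.den : ℝ) ^ 2) 1 with hsmall | hlarge
  · exact (min_le_left _ _).trans (by simpa using hy 0 s (by simpa using hsmall))
  · -- The first scale `H / 4 ^ (k + 1)` that sees `s` is comparable to `1 / s.den ^ 2`.
    obtain ⟨k, hk, hk'⟩ := exists_nat_pow_near hlarge (by norm_num : (1 : ℝ) < 4)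
    have hscale : 2 * (H / 4 ^ (k + 1)) * (s.den : ℝ) ^ 2 < 1 := by
      rwa [mul_div_assoc', div_mul_eq_mul_div, div_lt_one (by positivity)]
    refine (min_le_right _ _).trans (le_trans ?_ (hy (k + 1) s hscale))
    rw [div_div, div_le_div_iff₀ (by positivity) (by positivity), pow_succ]
    linarith

theorem irrational_of_forall_pos_le_abs_sub {y : ℝ} {f : ℚ → ℝ} (hf : ∀ s, 0 < f s)
    (hy : ∀ s : ℚ, f s ≤ |y - s|) : Irrational y := by
  rintro ⟨s, rfl⟩
  simpa using (hf s).trans_le (hy s)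

theorem exists_rat_lt_den_abs_sub_le_of_irrational {y : ℝ} (hy : Irrational y) (N : ℕ) :
    ∃ t : ℚ, N < t.den ∧ |y - t| ≤ 1 / (t.den : ℝ) ^ 2 := by
  obtain ⟨ε, hfar, hε⟩ : ∃ ε : ℝ, (∀ s : ℚ, s.den ≤ N → ε ≤ dist y s) ∧ 0 < ε :=
    (((hy.eventually_forall_le_dist_cast_rat_of_den_le N).filter_mono
      nhdsWithin_le_nhds).and (self_mem_nhdsWithin (s := Ioi 0))).exists
  obtain ⟨n, hn⟩ := exists_nat_one_div_lt hε
  obtain ⟨t, ht, htn⟩ := Real.exists_rat_abs_sub_le_and_den_le y (Nat.succ_pos n)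
  have hd : (1 : ℝ) ≤ t.den := Nat.one_le_cast.2 t.den_pos
  have htn' : (t.den : ℝ) ≤ n + 1 := by exact_mod_cast htn
  push_cast at ht
  refine ⟨t, ?_, ht.trans ?_⟩
  · by_contra! hle
    have hle' : 1 / (((n : ℝ) + 1 + 1) * t.den) ≤ 1 / ((n : ℝ) + 1) := by
      gcongr
      nlinarith
    have hdist := hfar t hle
    rw [Real.dist_eq] at hdist
    linarith
  · rw [sq]
    gcongr
    linarith

/-! ### Balls around a Dirichlet approximation -/

theorem le_abs_sub_of_den_mul_le {x y : ℝ} {s t : ℚ} (hst : 20 * (s.den : ℝ) ≤ t.den)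
    (hys : 1 / (64 * (s.den : ℝ) ^ 2) ≤ |y - s|) (hyt : |y - t| ≤ 1 / (t.den : ℝ) ^ 2)
    (hxt : |x - t| ≤ 1 / (100 * (t.den : ℝ) ^ 2)) :
    1 / (100 * (s.den : ℝ) ^ 2) ≤ |x - s| := by
  have htri : |y - s| ≤ |y - t| + |x - t| + |x - s| :=
    calc |y - s| ≤ |y - t| + |t - x| + |x - s| :=
          (abs_sub_le y x s).trans (by gcongr; exact abs_sub_le y t x)
      _ = |y - t| + |x - t| + |x - s| := by rw [abs_sub_comm (t : ℝ) x]
  have hsq : 1 / (t.den : ℝ) ^ 2 ≤ 1 / 400 * (1 / (s.den : ℝ) ^ 2) :=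
    calc 1 / (t.den : ℝ) ^ 2 ≤ 1 / (20 * (s.den : ℝ)) ^ 2 := by gcongr
      _ = 1 / 400 * (1 / (s.den : ℝ) ^ 2) := by rw [mul_pow, one_div_mul_one_div]; norm_num
  have hpos : 0 < 1 / (s.den : ℝ) ^ 2 := by positivity
  rw [← one_div_mul_one_div] at hys hxt ⊢
  linarith

theorem le_abs_sub_of_lt_den_mul {x : ℝ} {s t : ℚ} (hst : s.den < t.den)
    (hts : (t.den : ℝ) < 20 * s.den) (hxt : |x - t| ≤ 1 / (100 * (t.den : ℝ) ^ 2)) :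
    1 / (100 * (s.den : ℝ) ^ 2) ≤ |x - s| := by
  have hgap := one_div_den_mul_den_le_abs_sub (ne_of_apply_ne Rat.den hst.ne)
  have htri : |(s : ℝ) - t| ≤ |x - s| + |x - t| := by
    rw [abs_sub_comm x s]
    exact abs_sub_le _ _ _
  have hprod : 1 / (20 * (s.den : ℝ) ^ 2) ≤ 1 / ((s.den : ℝ) * t.den) := by
    refine one_div_le_one_div_of_le (by positivity) ?_
    calc (s.den : ℝ) * t.den ≤ s.den * (20 * s.den) := by gcongr
      _ = 20 * (s.den : ℝ) ^ 2 := by ring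
  have hsq : 1 / (t.den : ℝ) ^ 2 ≤ 1 / (s.den : ℝ) ^ 2 := by gcongr
  have hpos : 0 < 1 / (s.den : ℝ) ^ 2 := by positivity
  rw [← one_div_mul_one_div] at hprod hxt ⊢
  linarith

theorem exists_rat_forall_min_le_abs_sub (c : ℝ) {δ : ℝ} (hδ : 0 < δ) (N : ℕ) :
    ∃ t : ℚ, N < t.den ∧ ∀ x : ℝ, |x - t| ≤ 1 / (100 * (t.den : ℝ) ^ 2) →
      x ∈ Icc c (c + 18 * δ) ∧
        ∀ s : ℚ, s.den < t.den → min δ (1 / (100 * (s.den : ℝ) ^ 2)) ≤ |x - s| := by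
  -- `18 = 1 + 16 + 1`: the outer parts absorb `|x - y| ≤ δ`, and `16 * δ / 8` exceeds `δ` by `δ`.
  obtain ⟨y, ⟨hcy, hyc⟩, hy⟩ :=
    exists_mem_Icc_forall_min_le_abs_sub (c + δ) (H := 16 * δ) (by positivity)
  have hirr := irrational_of_forall_pos_le_abs_sub
    (fun s : ℚ => lt_min (by positivity) (by positivity)) hy
  obtain ⟨M, hM⟩ := exists_nat_gt (2 / δ)
  obtain ⟨t, hden, hyt⟩ := exists_rat_lt_den_abs_sub_le_of_irrational hirr (max N M)
  obtain ⟨hNt, hMt⟩ := max_lt_iff.1 hden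
  have ht1 : (1 : ℝ) ≤ t.den := Nat.one_le_cast.2 t.den_pos
  have htδ : 2 * (1 / (t.den : ℝ) ^ 2) ≤ δ := by
    have hlarge := (div_lt_iff₀ hδ).1 (hM.trans (Nat.cast_lt.2 hMt))
    rw [mul_one_div, div_le_iff₀ (by positivity)]
    nlinarith
  refine ⟨t, hNt, fun x hxt => ?_⟩
  have hxy : |x - y| ≤ δ := by
    have htri := abs_sub_le x t y
    rw [abs_sub_comm (t : ℝ) y] at htri
    have hpos : 0 < 1 / (t.den : ℝ) ^ 2 := by positivity
    rw [← one_div_mul_one_div] at hxt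
    linarith
  refine ⟨?_, fun s hst => min_le_iff.2 ((min_le_iff.1 (hy s)).imp (fun hys => ?_) fun hys => ?_)⟩
  · rw [abs_le] at hxy
    constructor <;> linarith
  · have htri := abs_sub_le y x s
    rw [abs_sub_comm y x] at htri
    linarith
  · exact (le_or_gt (20 * (s.den : ℝ)) t.den).elim
      (fun hts => le_abs_sub_of_den_mul_le hts hys hyt hxt)
      fun hts => le_abs_sub_of_lt_den_mul hst hts hxt

/-! ### Functions `Ψ` with `q²Ψ(q)` non-increasing -/

theorem sq_mul_le_of_mul_le {Ψ : ℝ → ℝ} (hΨpos : ∀ q : ℝ, 0 < q → 0 < Ψ q)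
    (hmono : AntitoneOn (fun q : ℝ => q ^ 2 * Ψ q) (Ioi 0)) {a b k : ℝ} (ha : 0 < a)
    (hk : 1 ≤ k) (hkab : k * a ≤ b) : k ^ 2 * Ψ b ≤ Ψ a := by
  have hab : a ≤ b := (le_mul_of_one_le_left ha.le hk).trans hkab
  have hb := hΨpos b (ha.trans_le hab)
  have hchain : a ^ 2 * (k ^ 2 * Ψ b) ≤ a ^ 2 * Ψ a :=
    calc a ^ 2 * (k ^ 2 * Ψ b) = (k * a) ^ 2 * Ψ b := by ring
      _ ≤ b ^ 2 * Ψ b := by gcongr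
      _ ≤ a ^ 2 * Ψ a := hmono ha (ha.trans_le hab) hab
  exact le_of_mul_le_mul_left hchain (by positivity)

theorem antitoneOn_of_antitoneOn_sq_mul {Ψ : ℝ → ℝ} (hΨpos : ∀ q : ℝ, 0 < q → 0 < Ψ q)
    (hmono : AntitoneOn (fun q : ℝ => q ^ 2 * Ψ q) (Ioi 0)) : AntitoneOn Ψ (Ioi 0) :=
  fun a ha b _ hab => by simpa using sq_mul_le_of_mul_le hΨpos hmono ha le_rfl (by simpa using hab)

theorem exists_rat_ball_avoiding {Ψ : ℝ → ℝ} (hΨpos : ∀ q : ℝ, 0 < q → 0 < Ψ q)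
    (hmono : AntitoneOn (fun q : ℝ => q ^ 2 * Ψ q) (Ioi 0)) {Q : ℝ} (hQ : 0 < Q)
    (hsmall : Q ^ 2 * Ψ Q ≤ 1 / 100) (c : ℝ) (N : ℕ) :
    ∃ t : ℚ, N < t.den ∧ ∀ x : ℝ, |x - t| ≤ Ψ t.den → x ∈ Icc c (c + 18 * Ψ Q) ∧
      ∀ (s : ℚ) (r : ℕ), s.den ≤ r → Q ≤ r → r < t.den → Ψ r ≤ |x - s| := by
  have hbound : ∀ r : ℝ, Q ≤ r → Ψ r ≤ 1 / (100 * r ^ 2) := fun r hr => by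
    have hr0 := hQ.trans_le hr
    rw [le_div_iff₀ (by positivity)]
    linarith [hmono hQ hr0 hr]
  obtain ⟨M, hM⟩ := exists_nat_ge Q
  obtain ⟨t, hden, ht⟩ := exists_rat_forall_min_le_abs_sub c (hΨpos Q hQ) (max N M)
  obtain ⟨hNt, hMt⟩ := max_lt_iff.1 hden
  have hQt : Q ≤ t.den := hM.trans (by exact_mod_cast hMt.le)
  refine ⟨t, hNt, fun x hx => ?_⟩
  obtain ⟨hxc, hxs⟩ := ht x (hx.trans (hbound _ hQt))
  refine ⟨hxc, fun s r hsr hQr hrt => le_trans (le_min ?_ ?_) (hxs s (hsr.trans_lt hrt))⟩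
  · exact antitoneOn_of_antitoneOn_sq_mul hΨpos hmono hQ (hQ.trans_le hQr) hQr
  · exact (hbound r hQr).trans (by gcongr)

/-! ### Shells and stages -/

/-- The bound `Q = 1/(2qΨ(q))` up to which denominators are harmless near a fraction `p/q`: any
other fraction of denominator at most `Q` is at distance at least `2Ψ(q)` from `p/q`. -/
noncomputable def isolationBound (Ψ : ℝ → ℝ) (q : ℝ) : ℝ :=
  1 / (2 * q * Ψ q)

/-- The difference `18Ψ(Q)`, with `Q = isolationBound Ψ q`, between the two radii of a shell. It is
the length of interval needed by `exists_rat_ball_avoiding`. -/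
noncomputable def shellWidth (Ψ : ℝ → ℝ) (q : ℝ) : ℝ :=
  18 * Ψ (isolationBound Ψ q)

/-- The points whose approximation by the fraction `t`, of reduced denominator `q`, is of quality
`Ψ(q)` but not much better. -/
def shell (Ψ : ℝ → ℝ) (t : ℚ) : Set ℝ :=
  {x | Ψ t.den - shellWidth Ψ t.den ≤ |x - t| ∧ |x - t| ≤ Ψ t.den}

/-- The point `x` is not much closer than `Ψ(r)` to a fraction of denominator `r`, not necessarily
reduced. -/
def AvoidsDen (Ψ : ℝ → ℝ) (x : ℝ) (r : ℕ) : Prop :=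
  ∀ u : ℤ, Ψ r - shellWidth Ψ r ≤ |x - u / r|

/-- One step of the nested construction: a fraction `center` whose denominator is so large that its
shell is thin compared with `Ψ`, and the left end of one of the two components of this shell. -/
structure Stage (Ψ : ℝ → ℝ) where
  center : ℚ
  left : ℝ
  small : (center.den : ℝ) ^ 2 * Ψ center.den ≤ 1 / 100
  subset_shell : Icc left (left + shellWidth Ψ center.den) ⊆ shell Ψ center

namespace Stage

/-- The component of the shell singled out by a stage. -/
def interval {Ψ : ℝ → ℝ} (S : Stage Ψ) : Set ℝ :=
  Icc S.left (S.left + shellWidth Ψ S.center.den)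

/-- The relation between consecutive stages `S` and `T` of the nested construction: `T` refines `S`
and takes care of all denominators from that of `S` up to that of `T`. -/
structure IsSucc {Ψ : ℝ → ℝ} (S T : Stage Ψ) : Prop where
  den_lt : S.center.den < T.center.den
  subset : T.interval ⊆ S.interval
  avoidsDen : ∀ x ∈ T.interval, ∀ r : ℕ, S.center.den ≤ r → r < T.center.den → AvoidsDen Ψ x r

end Stage

section Stages

variable {Ψ : ℝ → ℝ}

theorem isolationBound_pos (hΨpos : ∀ q : ℝ, 0 < q → 0 < Ψ q) {q : ℝ} (hq : 0 < q) :
    0 < isolationBound Ψ q := by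
  have := hΨpos q hq
  unfold isolationBound
  positivity

theorem shellWidth_pos (hΨpos : ∀ q : ℝ, 0 < q → 0 < Ψ q) {q : ℝ} (hq : 0 < q) :
    0 < shellWidth Ψ q :=
  mul_pos (by norm_num) (hΨpos _ (isolationBound_pos hΨpos hq))

theorem fifty_mul_le_isolationBound (hΨpos : ∀ q : ℝ, 0 < q → 0 < Ψ q) {q : ℝ} (hq : 0 < q)
    (hsmall : q ^ 2 * Ψ q ≤ 1 / 100) : 50 * q ≤ isolationBound Ψ q := by
  have := hΨpos q hq
  rw [isolationBound, le_div_iff₀ (by positivity)]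
  linarith

theorem four_mul_shellWidth_le (hΨpos : ∀ q : ℝ, 0 < q → 0 < Ψ q)
    (hmono : AntitoneOn (fun q : ℝ => q ^ 2 * Ψ q) (Ioi 0)) {q : ℝ} (hq : 0 < q)
    (hsmall : q ^ 2 * Ψ q ≤ 1 / 100) : 4 * shellWidth Ψ q ≤ Ψ q := by
  have hratio := sq_mul_le_of_mul_le hΨpos hmono hq (by norm_num)
    (fifty_mul_le_isolationBound hΨpos hq hsmall)
  have hpos := shellWidth_pos hΨpos hq
  unfold shellWidth at hpos ⊢
  linarith

theorem le_abs_sub_of_den_le_isolationBound (hΨpos : ∀ q : ℝ, 0 < q → 0 < Ψ q) {s t : ℚ} {x : ℝ}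
    (hst : s ≠ t) (hs : (s.den : ℝ) ≤ isolationBound Ψ t.den) (hxt : |x - t| ≤ Ψ t.den) :
    Ψ t.den ≤ |x - s| := by
  have hs0 : (0 : ℝ) < s.den := by positivity
  have ht0 : (0 : ℝ) < t.den := by positivity
  have hΨt := hΨpos t.den ht0
  have hgap := one_div_den_mul_den_le_abs_sub hst
  have htri : |(s : ℝ) - t| ≤ |x - s| + |x - t| := by
    rw [abs_sub_comm x s]
    exact abs_sub_le _ _ _
  have hfar : 2 * Ψ t.den ≤ 1 / ((s.den : ℝ) * t.den) := by
    rw [isolationBound, le_div_iff₀ (by positivity)] at hs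
    rw [le_div_iff₀ (by positivity)]
    linarith
  linarith

theorem avoidsDen_of_mem_shell (hΨpos : ∀ q : ℝ, 0 < q → 0 < Ψ q)
    (hmono : AntitoneOn (fun q : ℝ => q ^ 2 * Ψ q) (Ioi 0)) {t : ℚ}
    (hsmall : (t.den : ℝ) ^ 2 * Ψ t.den ≤ 1 / 100) {x : ℝ} (hx : x ∈ shell Ψ t) {r : ℕ}
    (htr : t.den ≤ r) (hr : (r : ℝ) ≤ isolationBound Ψ t.den) : AvoidsDen Ψ x r := by
  intro u
  have ht0 : (0 : ℝ) < t.den := by positivity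
  have htr' : (t.den : ℝ) ≤ r := by exact_mod_cast htr
  have hr0 := ht0.trans_le htr'
  have hwidth := shellWidth_pos hΨpos hr0
  have hdvd := den_intCast_div_natCast_dvd u r
  rw [show (u : ℝ) / r = ((u / r : ℚ) : ℝ) by push_cast; rfl]
  by_cases hut : (u / r : ℚ) = t
  · rw [hut] at hdvd ⊢
    obtain ⟨k, rfl⟩ := hdvd
    obtain rfl | hk : k = 1 ∨ 2 ≤ k := by
      have : k ≠ 0 := by rintro rfl; simp at hr0
      omega
    · simpa using hx.1
    · have hk' : (2 : ℝ) * t.den ≤ (t.den * k : ℕ) := by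
        rw [mul_comm t.den]
        exact_mod_cast Nat.mul_le_mul_right _ hk
      have hquarter := sq_mul_le_of_mul_le hΨpos hmono ht0 (by norm_num) hk'
      linarith [hx.1, four_mul_shellWidth_le hΨpos hmono ht0 hsmall, hΨpos _ ht0]
  · have hle : ((u / r : ℚ).den : ℝ) ≤ r := by
      exact_mod_cast Nat.le_of_dvd (t.den_pos.trans_le htr) hdvd
    have hfar := le_abs_sub_of_den_le_isolationBound hΨpos hut (hle.trans hr) hx.2
    linarith [antitoneOn_of_antitoneOn_sq_mul hΨpos hmono ht0 hr0 htr']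

namespace Stage

theorem exists_center_eq_notMem_interval (hΨpos : ∀ q : ℝ, 0 < q → 0 < Ψ q)
    (hmono : AntitoneOn (fun q : ℝ => q ^ 2 * Ψ q) (Ioi 0)) {t : ℚ}
    (hsmall : (t.den : ℝ) ^ 2 * Ψ t.den ≤ 1 / 100) (z : ℝ) :
    ∃ S : Stage Ψ, S.center = t ∧ z ∉ S.interval := by
  have ht0 : (0 : ℝ) < t.den := by positivity
  have hΨt := hΨpos _ ht0
  have hwidth := four_mul_shellWidth_le hΨpos hmono ht0 hsmall
  rcases le_or_gt z t with hz | hz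
  · refine ⟨⟨t, t + (Ψ t.den - shellWidth Ψ t.den), hsmall, fun x hx => ⟨?_, ?_⟩⟩, rfl,
      fun h => ?_⟩
    · exact le_trans (by linarith [hx.1]) (le_abs_self _)
    · rw [abs_le]
      constructor <;> linarith [hx.1, hx.2]
    · linarith [h.1]
  · refine ⟨⟨t, t - Ψ t.den, hsmall, fun x hx => ⟨?_, ?_⟩⟩, rfl, fun h => ?_⟩
    · exact le_trans (by linarith [hx.2]) (neg_le_abs _)
    · rw [abs_le]
      constructor <;> linarith [hx.1, hx.2]
    · linarith [h.2]

theorem exists_isSucc_notMem_interval (hΨpos : ∀ q : ℝ, 0 < q → 0 < Ψ q)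
    (hmono : AntitoneOn (fun q : ℝ => q ^ 2 * Ψ q) (Ioi 0)) (S : Stage Ψ) (z : ℝ) :
    ∃ T : Stage Ψ, S.IsSucc T ∧ z ∉ T.interval := by
  have hq : (0 : ℝ) < S.center.den := by positivity
  have hQ := isolationBound_pos hΨpos hq
  have hqQ : (S.center.den : ℝ) ≤ isolationBound Ψ S.center.den := by
    linarith [fifty_mul_le_isolationBound hΨpos hq S.small]
  obtain ⟨t, hden, hball⟩ := exists_rat_ball_avoiding hΨpos hmono hQ
    ((hmono hq hQ hqQ).trans S.small) S.left S.center.den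
  have hden' : (S.center.den : ℝ) < t.den := by exact_mod_cast hden
  obtain ⟨T, rfl, hz⟩ := exists_center_eq_notMem_interval hΨpos hmono
    ((hmono hq (hq.trans hden') hden'.le).trans S.small) z
  have hsub : T.interval ⊆ S.interval := fun x hx => (hball x (T.subset_shell hx).2).1
  refine ⟨T, ⟨hden, hsub, fun x hx r hqr hrt => ?_⟩, hz⟩
  rcases le_total (r : ℝ) (isolationBound Ψ S.center.den) with hr | hr
  · exact avoidsDen_of_mem_shell hΨpos hmono S.small (S.subset_shell (hsub hx)) hqr hr
  · intro u
    have hle : (u / r : ℚ).den ≤ r :=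
      Nat.le_of_dvd (S.center.den_pos.trans_le hqr) (den_intCast_div_natCast_dvd u r)
    have hfar := (hball x (T.subset_shell hx).2).2 _ r hle hr hrt
    push_cast at hfar
    linarith [shellWidth_pos hΨpos (hQ.trans_le hr)]

theorem exists_seq_isSucc_mem_interval (hΨpos : ∀ q : ℝ, 0 < q → 0 < Ψ q)
    (hmono : AntitoneOn (fun q : ℝ => q ^ 2 * Ψ q) (Ioi 0)) (S₀ : Stage Ψ) (z : ℕ → ℝ) :
    ∃ (S : ℕ → Stage Ψ) (x : ℝ), (∀ n, (S n).IsSucc (S (n + 1))) ∧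
      (∀ n, x ∈ (S n).interval) ∧ x ∉ range z := by
  have hne : ∀ S : Stage Ψ, S.interval.Nonempty := fun S =>
    nonempty_Icc.2 (by
      have := shellWidth_pos hΨpos (q := S.center.den) (by positivity)
      linarith)
  obtain ⟨S, x, -, hS, hx⟩ := exists_seq_rel_mem_of_nested
    (I := fun _ => interval) (R := fun n S T => S.IsSucc T ∧ z n ∉ T.interval)
    (fun _ => hne) (fun _ _ => isCompact_Icc) (fun _ _ _ h => h.1.subset)
    (fun n S => exists_isSucc_notMem_interval hΨpos hmono S (z n)) S₀
  refine ⟨S, x, fun n => (hS n).1, hx, ?_⟩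
  rintro ⟨n, rfl⟩
  exact (hS n).2 (hx (n + 1))

end Stage

theorem mem_WSet_of_injective {x : ℝ} {t : ℕ → ℚ} (ht : Function.Injective t)
    (hx : ∀ n, |x - t n| ≤ Ψ (t n).den) : x ∈ WSet Ψ := by
  refine infinite_of_injective_forall_mem (f := fun n => ((t n).num, (t n).den))
    (fun m n hmn => ht ?_) fun n => ⟨(t n).den_pos, ?_⟩
  · exact Rat.ext (congrArg Prod.fst hmn) (congrArg Prod.snd hmn)
  · simpa only [Rat.cast_def] using hx n

theorem Stage.mem_WSet_and_avoidsDen {S : ℕ → Stage Ψ} (hS : ∀ n, (S n).IsSucc (S (n + 1)))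
    {x : ℝ} (hx : ∀ n, x ∈ (S n).interval) :
    x ∈ WSet Ψ ∧ ∀ r : ℕ, (S 0).center.den ≤ r → AvoidsDen Ψ x r := by
  have hden : StrictMono fun n => (S n).center.den :=
    strictMono_nat_of_lt_succ fun n => (hS n).den_lt
  refine ⟨mem_WSet_of_injective (t := fun n => (S n).center)
    (Function.Injective.of_comp (f := Rat.den) hden.injective)
    fun n => ((S n).subset_shell (hx n)).2, fun r hr => ?_⟩
  obtain ⟨n, hn, hn'⟩ := exists_le_and_lt_succ_of_strictMono hden hr
  exact (hS n).avoidsDen x (hx (n + 1)) r hn hn'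

end Stages

theorem uncountable_ESet_general {Ψ ω : ℝ → ℝ} (hΨpos : ∀ q : ℝ, 0 < q → 0 < Ψ q)
    (hsmall : ∀ᶠ q : ℝ in atTop, q ^ 2 * Ψ q ≤ 1 / 100)
    (hmono : AntitoneOn (fun q : ℝ => q ^ 2 * Ψ q) (Ioi 0))
    (hbig : ∀ᶠ q : ℝ in atTop, 18 / Ψ q * Ψ (1 / (2 * q * Ψ q)) ≤ ω q) :
    ¬ (ESet Ψ ω).Countable := by
  intro hcount
  obtain ⟨z, hz⟩ := countable_iff_exists_subset_range.1 hcount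
  obtain ⟨N, hN, hN0⟩ := ((tendsto_natCast_atTop_atTop.eventually hsmall).and
    (eventually_gt_atTop 0)).exists
  have hden : ((N : ℚ)⁻¹).den = N := Rat.inv_natCast_den_of_pos hN0
  obtain ⟨S₀, -⟩ := Stage.exists_center_eq_notMem_interval hΨpos hmono
    (t := (N : ℚ)⁻¹) (by rwa [hden]) 0
  obtain ⟨S, x, hS, hx, hxz⟩ := Stage.exists_seq_isSucc_mem_interval hΨpos hmono S₀ z
  obtain ⟨hxW, havoid⟩ := Stage.mem_WSet_and_avoidsDen hS hx
  obtain ⟨M, hM⟩ := eventually_atTop.1 (tendsto_natCast_atTop_atTop.eventually hbig)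
  refine hxz (hz ⟨hxW, max M (S 0).center.den, fun q hq p => ?_⟩)
  have hΨq := hΨpos q (by
    exact_mod_cast (S 0).center.den_pos.trans_le ((le_max_right _ _).trans hq))
  have hωq := hM q ((le_max_left _ _).trans hq)
  rw [div_mul_eq_mul_div, div_le_iff₀ hΨq] at hωq
  calc (1 - ω q) * Ψ q ≤ Ψ q - shellWidth Ψ q := by rw [shellWidth, isolationBound]; linarith
    _ ≤ |x - p / q| := havoid q ((le_max_right _ _).trans hq) p

/-- **Theorem.** If `q ↦ q²Ψ(q)` is non-increasing on `(0,∞)`, `q²Ψ(q) → 0`, `ω(q) → 0`,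
`ω` maps `(0,∞)` into `(0,1)`, and `ω(q) ≥ (45/Ψ(q))·Ψ(1/(2qΨ(q)))` for all sufficiently
large `q`, then `E(Ψ, ω)` is uncountable. -/
theorem uncountable_ESet (Ψ ω : ℝ → ℝ)
    (hΨpos : ∀ q : ℝ, 0 < q → 0 < Ψ q)
    (hωmem : ∀ q : ℝ, 0 < q → ω q ∈ Set.Ioo (0 : ℝ) 1)
    (hΨlim : Filter.Tendsto (fun q : ℝ => q ^ 2 * Ψ q) Filter.atTop (nhds 0))
    (hωlim : Filter.Tendsto ω Filter.atTop (nhds 0))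
    (hmono : AntitoneOn (fun q : ℝ => q ^ 2 * Ψ q) (Set.Ioi 0))
    (hbig : ∀ᶠ q : ℝ in Filter.atTop, 45 / Ψ q * Ψ (1 / (2 * q * Ψ q)) ≤ ω q) :
    ¬ (ESet Ψ ω).Countable := by
  refine uncountable_ESet_general hΨpos (hΨlim.eventually_le_const (by norm_num)) hmono ?_
  filter_upwards [hbig, eventually_gt_atTop 0] with q hq hq0
  have hΨq := hΨpos q hq0
  have hΨQ := hΨpos (1 / (2 * q * Ψ q)) (by positivity)
  exact le_trans (by gcongr; norm_num) hq
end

section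
/- Let τ > 2 and let Ψ : (0,∞) → (0,∞) be given by Ψ(q) = q^{−τ}. Then there exists C₀ > 0 such that for every C ≥ C₀, taking ω : (0,∞) → (0,∞) given by ω(q) = C·q^{−τ(τ−2)}, the set E(Ψ,ω) is uncountable. -/
/-!
Call the interval `(1 - ω(q)) Ψ(q) ≤ x - u ≤ Ψ(q)` the window of `u = p / q`; its length is
`C q ^ (-τ(τ - 1))`. The points of `E(Ψ, ω)` are found in nested sequences of windows, and the
point is that each window contains another one all of whose points satisfy the lower bound for the
denominators in between.

A fraction `p' / r ≠ u` with `r ≥ q` is at distance at least `1 / (q r)` from `u`, so only those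
with `r ≥ A := q ^ (τ - 1) / 3` come within `2 r ^ (-τ)` of the window of `u`. Counting separated
fractions over dyadic blocks of denominators, the points of an interval of length `L` this close to
such a fraction have measure `O(L A ^ (2 - τ) + A ^ (-τ))`. Here `L` is the length of the window and
`A ^ (-τ)` is a constant times `L / C`, so for `C` and `q` large at most half of the window is lost
and some irrational `y` in it is at distance at least `2 r ^ (-τ)` from every `p' / r ≠ u` with
`r ≥ q`.

Let `v` be a Dirichlet approximation of `y` of large denominator `n`, whose window lies within
`2 / n²` of `y`. On it, the lower bound for `q ≤ r < n` follows from the margin at `y` if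
`r ^ (τ - 1) < 2n`, and from the separation `1 / (r n)` between `p' / r` and `v` otherwise. The
window of `v` can moreover be chosen to miss any prescribed point, so no sequence exhausts
`E(Ψ, ω)`.
-/

open Filter Set

open MeasureTheory Metric Topology

section Fractions

lemma one_div_le_abs_div_sub_div {p p' : ℤ} {q r : ℕ} (hq : 0 < q) (hr : 0 < r)
    (h : (p : ℝ) / q ≠ p' / r) : 1 / ((q : ℝ) * r) ≤ |(p : ℝ) / q - p' / r| := by
  have hq' : (0 : ℝ) < q := Nat.cast_pos.2 hq
  have hr' : (0 : ℝ) < r := Nat.cast_pos.2 hr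
  have hdet : p * r - q * p' ≠ 0 := by
    rw [Ne, div_eq_div_iff hq'.ne' hr'.ne'] at h
    rw [sub_ne_zero, mul_comm (q : ℤ)]
    exact_mod_cast h
  rw [div_sub_div _ _ hq'.ne' hr'.ne', abs_div, abs_of_pos (mul_pos hq' hr')]
  gcongr
  exact_mod_cast Int.one_le_abs hdet

lemma one_div_le_abs_div_sub_ratCast {p : ℤ} {r : ℕ} {u : ℚ} (hr : 0 < r)
    (h : (p : ℝ) / r ≠ u) : 1 / ((r : ℝ) * u.den) ≤ |(p : ℝ) / r - u| := by
  rw [Rat.cast_def u] at h ⊢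
  exact one_div_le_abs_div_sub_div hr u.den_pos h

lemma den_dvd_of_intCast_div_natCast_eq {u : ℚ} {p : ℤ} {r : ℕ} (h : (p : ℝ) / r = u) :
    u.den ∣ r := by
  have hu : u = Rat.divInt p r := by
    rw [Rat.divInt_eq_div]
    exact_mod_cast h.symm
  have hdvd := Rat.den_dvd p r
  rw [← hu] at hdvd
  exact_mod_cast hdvd

lemma exists_lt_den_abs_sub_le_of_irrational {x : ℝ} (hx : Irrational x) (N : ℕ) :
    ∃ v : ℚ, N < v.den ∧ |x - v| ≤ 1 / (v.den : ℝ) ^ 2 := by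
  obtain ⟨m, hm⟩ := (tendsto_one_div_add_atTop_nhds_zero_nat.eventually
    (hx.eventually_forall_le_dist_cast_rat_of_den_le N)).exists
  obtain ⟨v, hv, hvm⟩ := Real.exists_rat_abs_sub_le_and_den_le x (Nat.succ_pos m)
  have hden : (1 : ℝ) ≤ v.den := by exact_mod_cast v.den_pos
  refine ⟨v, ?_, hv.trans ?_⟩
  · by_contra! hle
    have hlt : 1 / (((m + 1 : ℕ) + 1 : ℝ) * v.den) < 1 / ((m : ℝ) + 1) := by
      apply one_div_lt_one_div_of_lt (by positivity)
      push_cast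
      nlinarith
    exact absurd (hm v hle) (not_le.2 (hv.trans_lt hlt))
  · have hvm' : (v.den : ℝ) ≤ (m + 1 : ℕ) := by exact_mod_cast hvm
    apply one_div_le_one_div_of_le (by positivity)
    nlinarith

end Fractions

section Measure

lemma encard_le_of_pairwise_le_abs_sub {S : Set ℝ} {δ a b : ℝ} (hδ : 0 < δ)
    (hsep : S.Pairwise fun u v => δ ≤ |u - v|) (hS : S ⊆ Icc a b) :
    S.encard ≤ (⌊(b - a) / δ⌋₊ + 1 : ℕ) := by
  have hmaps : MapsTo (fun u => ⌊(u - a) / δ⌋₊) S (Finset.range (⌊(b - a) / δ⌋₊ + 1)) := by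
    intro u hu
    rw [Finset.mem_coe, Finset.mem_range, Nat.lt_succ_iff]
    have hub := (hS hu).2
    dsimp only
    gcongr
  have hinj : InjOn (fun u => ⌊(u - a) / δ⌋₊) S := by
    intro u hu v hv huv
    by_contra hne
    have hnonneg : ∀ w ∈ S, 0 ≤ (w - a) / δ := fun w hw =>
      div_nonneg (sub_nonneg.2 (hS hw).1) hδ.le
    have hfloor : ⌊(u - a) / δ⌋ = ⌊(v - a) / δ⌋ := by
      rw [← Int.natCast_floor_eq_floor (hnonneg u hu),
        ← Int.natCast_floor_eq_floor (hnonneg v hv)]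
      exact congrArg _ huv
    have hlt := Int.abs_sub_lt_one_of_floor_eq_floor hfloor
    rw [← sub_div, sub_sub_sub_cancel_right, abs_div, abs_of_pos hδ, div_lt_one hδ] at hlt
    exact hlt.not_ge (hsep hu hv hne)
  simpa only [encard_coe_eq_coe_finsetCard, Finset.card_range] using
    encard_le_encard_of_injOn hmaps hinj

lemma volume_thickening_le_of_pairwise_le_abs_sub {S : Set ℝ} {δ a b : ℝ} (hδ : 0 < δ)
    (hab : a ≤ b) (hsep : S.Pairwise fun u v => δ ≤ |u - v|) (hS : S ⊆ Icc a b) (ρ : ℝ) :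
    volume (thickening ρ S) ≤ ENNReal.ofReal (((b - a) / δ + 1) * (2 * ρ)) := by
  have hcard := encard_le_of_pairwise_le_abs_sub hδ hsep hS
  obtain ⟨T, rfl⟩ := (finite_of_encard_le_coe hcard).exists_finset_coe
  rw [encard_coe_eq_coe_finsetCard, Nat.cast_le] at hcard
  have hlen : 0 ≤ (b - a) / δ := div_nonneg (sub_nonneg.2 hab) hδ.le
  have hT : (T.card : ℝ) ≤ (b - a) / δ + 1 :=
    calc (T.card : ℝ) ≤ (⌊(b - a) / δ⌋₊ + 1 : ℕ) := Nat.cast_le.2 hcard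
      _ ≤ (b - a) / δ + 1 := by
        push_cast
        gcongr
        exact Nat.floor_le hlen
  calc volume (thickening ρ (T : Set ℝ))
      ≤ ∑ u ∈ T, volume (ball u ρ) := by
        rw [thickening_eq_biUnion_ball]
        exact measure_biUnion_finset_le T _
    _ = ENNReal.ofReal T.card * ENNReal.ofReal (2 * ρ) := by
        simp only [Real.volume_ball, Finset.sum_const, nsmul_eq_mul, ENNReal.ofReal_natCast]
    _ ≤ ENNReal.ofReal ((b - a) / δ + 1) * ENNReal.ofReal (2 * ρ) := by gcongr
    _ = ENNReal.ofReal (((b - a) / δ + 1) * (2 * ρ)) :=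
        (ENNReal.ofReal_mul (by positivity)).symm

lemma sdiff_union_nonempty_of_measure_lt {α : Type*} [MeasurableSpace α] {μ : Measure α}
    [NullSingletonClass μ] {s t c : Set α} (h : μ (s ∩ t) < μ s) (hc : c.Countable) :
    (s \ (t ∪ c)).Nonempty := by
  rw [sdiff_nonempty]
  intro hsub
  have hs : s ⊆ s ∩ t ∪ c := fun x hx => (hsub hx).imp_left fun ht => ⟨hx, ht⟩
  refine h.not_ge ((measure_mono hs).trans ((measure_union_le _ _).trans_eq ?_))
  rw [hc.measure_zero μ, add_zero]

/-- The real numbers at distance less than `ψ r` from some fraction of denominator `r ∈ R`. The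
fractions need not be in lowest terms, and `R` is a set of real numbers so that ranges of
denominators may have real endpoints. -/
def nearFractions (ψ : ℝ → ℝ) (R : Set ℝ) : Set ℝ :=
  {x | ∃ r : ℕ, (r : ℝ) ∈ R ∧ ∃ p : ℤ, |x - p / r| < ψ r}

/-- The fractions with denominators in `[N, 2N)` are `1 / (4N²)`-separated. Treating each
denominator on its own would replace the summand `1` by `N`, which would be too much for
`volume_powWindow_inter_nearFractions_le`. -/
lemma volume_nearFractions_Ico_le {ψ : ℝ → ℝ} {a b N ρ : ℝ} (hab : a ≤ b) (hN : 0 < N)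
    (hρ : 0 ≤ ρ) (hψ : ∀ r ∈ Ico N (2 * N), ψ r ≤ ρ) :
    volume (Icc a b ∩ nearFractions ψ (Ico N (2 * N))) ≤
      ENNReal.ofReal ((4 * N ^ 2 * (b - a + 2 * ρ) + 1) * (2 * ρ)) := by
  let S : Set ℝ := {u ∈ Icc (a - ρ) (b + ρ) |
    ∃ r : ℕ, (r : ℝ) ∈ Ico N (2 * N) ∧ ∃ p : ℤ, u = p / r}
  have hsep : S.Pairwise fun u v => 1 / (4 * N ^ 2) ≤ |u - v| := by
    rintro u ⟨-, r, ⟨hr, hr'⟩, p, rfl⟩ v ⟨-, s, ⟨hs, hs'⟩, q, rfl⟩ hne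
    have hr0 : (0 : ℝ) < r := hN.trans_le hr
    have hs0 : (0 : ℝ) < s := hN.trans_le hs
    refine le_trans ?_ (one_div_le_abs_div_sub_div (Nat.cast_pos.1 hr0) (Nat.cast_pos.1 hs0) hne)
    exact one_div_le_one_div_of_le (by positivity) (by nlinarith)
  have hsub : Icc a b ∩ nearFractions ψ (Ico N (2 * N)) ⊆ thickening ρ S := by
    rintro x ⟨hx, r, hr, p, hxp⟩
    have hlt : |x - p / r| < ρ := hxp.trans_le (hψ r hr)
    refine mem_thickening_iff.2 ⟨p / r, ⟨?_, r, hr, p, rfl⟩, by rwa [Real.dist_eq]⟩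
    rw [abs_lt] at hlt
    constructor <;> linarith [hx.1, hx.2]
  have hvol := volume_thickening_le_of_pairwise_le_abs_sub (by positivity) (by linarith)
    hsep (fun u hu => hu.1) ρ
  rw [div_div_eq_mul_div, div_one,
    show (b + ρ - (a - ρ)) * (4 * N ^ 2) = 4 * N ^ 2 * (b - a + 2 * ρ) by ring] at hvol
  exact (measure_mono hsub).trans hvol

lemma nearFractions_Ici_subset_iUnion {ψ : ℝ → ℝ} {A : ℝ} (hA : 0 < A) :
    nearFractions ψ (Ici A) ⊆ ⋃ j : ℕ, nearFractions ψ (Ico (A * 2 ^ j) (2 * (A * 2 ^ j))) := by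
  rintro x ⟨r, hr, hx⟩
  obtain ⟨j, hj, hj'⟩ := exists_nat_pow_near ((one_le_div hA).2 hr) one_lt_two
  rw [le_div_iff₀' hA] at hj
  rw [div_lt_iff₀' hA, pow_succ', mul_left_comm] at hj'
  exact mem_iUnion.2 ⟨j, r, ⟨hj, hj'⟩, hx⟩

end Measure

section Rate

/-- The function `Ψ(q) = q ^ (-τ)` of the theorem. -/
noncomputable def approxRate (τ q : ℝ) : ℝ := q ^ (-τ)

/-- The function `ω(q) = C q ^ (-τ(τ - 2))` of the theorem. -/
noncomputable def approxSlack (τ C q : ℝ) : ℝ := C * q ^ (-(τ * (τ - 2)))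

variable {τ C : ℝ}

lemma approxRate_pos {q : ℝ} (hq : 0 < q) : 0 < approxRate τ q :=
  Real.rpow_pos_of_pos hq _

lemma approxRate_le_approxRate (hτ : 0 ≤ τ) {q r : ℝ} (hq : 0 < q) (hqr : q ≤ r) :
    approxRate τ r ≤ approxRate τ q :=
  Real.rpow_le_rpow_of_nonpos hq hqr (neg_nonpos.2 hτ)

lemma approxRate_mul_rpow {q : ℝ} (hq : 0 < q) : approxRate τ q * (q ^ (τ - 1) * q) = 1 := by
  rw [approxRate, ← Real.rpow_add_one hq.ne', ← Real.rpow_add hq, sub_add_cancel,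
    neg_add_cancel, Real.rpow_zero]

lemma approxRate_le_half (hτ : 1 ≤ τ) {q r : ℝ} (hq : 0 < q) (hqr : 2 * q ≤ r) :
    approxRate τ r ≤ approxRate τ q / 2 := by
  calc approxRate τ r ≤ approxRate τ (2 * q) :=
        approxRate_le_approxRate (by linarith) (by linarith) hqr
    _ = 2 ^ (-τ) * approxRate τ q := Real.mul_rpow two_pos.le hq.le
    _ ≤ 2 ^ (-1 : ℝ) * approxRate τ q := by
        have := (approxRate_pos (τ := τ) hq).le
        gcongr
        exact one_le_two
    _ = approxRate τ q / 2 := by rw [Real.rpow_neg_one]; ring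

lemma approxSlack_nonneg (hC : 0 ≤ C) {q : ℝ} (hq : 0 ≤ q) : 0 ≤ approxSlack τ C q :=
  mul_nonneg hC (Real.rpow_nonneg hq _)

lemma one_sub_approxSlack_mul_le (hC : 0 ≤ C) {q : ℝ} (hq : 0 < q) :
    (1 - approxSlack τ C q) * approxRate τ q ≤ approxRate τ q :=
  mul_le_of_le_one_left (approxRate_pos hq).le (sub_le_self _ (approxSlack_nonneg hC hq.le))

/-- The constant in `volume_nearFractions_approxRate_Ici_le`; its denominator comes from summing the
geometric series of ratio `2 ^ (2 - τ)` over dyadic blocks of denominators. -/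
noncomputable def tailConst (τ : ℝ) : ℝ := 68 / (1 - 2 ^ (2 - τ))

lemma two_rpow_two_sub_lt_one (hτ : 2 < τ) : (2 : ℝ) ^ (2 - τ) < 1 :=
  Real.rpow_lt_one_of_one_lt_of_neg one_lt_two (by linarith)

lemma tailConst_pos (hτ : 2 < τ) : 0 < tailConst τ :=
  div_pos (by norm_num) (sub_pos.2 (two_rpow_two_sub_lt_one hτ))

lemma volume_nearFractions_approxRate_Ico_le (hτ : 2 ≤ τ) {a b N : ℝ} (hab : a ≤ b) (hN : 1 ≤ N) :
    volume (Icc a b ∩ nearFractions (fun r => 2 * approxRate τ r) (Ico N (2 * N))) ≤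
      ENNReal.ofReal (68 * ((b - a) * N ^ (2 - τ) + N ^ (-τ))) := by
  have hN0 : 0 < N := by linarith
  have hν : 0 < N ^ (-τ) := Real.rpow_pos_of_pos hN0 _
  have hsq : N ^ 2 * N ^ (-τ) = N ^ (2 - τ) := by
    rw [← Real.rpow_natCast, ← Real.rpow_add hN0, Nat.cast_ofNat, ← sub_eq_add_neg]
  have hle : N ^ 2 * N ^ (-τ) ≤ 1 := by
    rw [hsq]
    exact Real.rpow_le_one_of_one_le_of_nonpos hN (by linarith)
  refine (volume_nearFractions_Ico_le (ρ := 2 * N ^ (-τ)) hab hN0 (by positivity) ?_).trans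
    (ENNReal.ofReal_le_ofReal ?_)
  · intro r hr
    gcongr
    exact approxRate_le_approxRate (by linarith) hN0 hr.1
  · rw [← hsq]
    have hlen : 0 ≤ (b - a) * (N ^ 2 * N ^ (-τ)) :=
      mul_nonneg (sub_nonneg.2 hab) (by positivity)
    nlinarith

lemma volume_nearFractions_approxRate_Ici_le (hτ : 2 < τ) {a b A : ℝ} (hab : a ≤ b) (hA : 1 ≤ A) :
    volume (Icc a b ∩ nearFractions (fun r => 2 * approxRate τ r) (Ici A)) ≤
      ENNReal.ofReal (tailConst τ * ((b - a) * A ^ (2 - τ) + A ^ (-τ))) := by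
  have hA0 : 0 < A := by linarith
  have : 0 ≤ b - a := sub_nonneg.2 hab
  set θ : ℝ := 2 ^ (2 - τ) with hθ
  set D := (b - a) * A ^ (2 - τ) + A ^ (-τ) with hD
  let U : ℕ → Set ℝ := fun j =>
    Icc a b ∩ nearFractions (fun r => 2 * approxRate τ r) (Ico (A * 2 ^ j) (2 * (A * 2 ^ j)))
  have hscale : ∀ (s : ℝ) (j : ℕ), (A * 2 ^ j) ^ s = A ^ s * (2 ^ s) ^ j := fun s j => by
    rw [Real.mul_rpow hA0.le (by positivity), ← Real.rpow_pow_comm two_pos.le]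
  have hU : ∀ j, volume (U j) ≤ ENNReal.ofReal (68 * D * θ ^ j) := by
    intro j
    refine (volume_nearFractions_approxRate_Ico_le hτ.le hab
      (one_le_mul_of_one_le_of_one_le hA (one_le_pow₀ one_le_two))).trans
      (ENNReal.ofReal_le_ofReal ?_)
    have hdecay : (2 : ℝ) ^ (-τ) ≤ θ := by
      rw [hθ]
      gcongr
      · exact one_le_two
      · linarith
    calc 68 * ((b - a) * (A * 2 ^ j) ^ (2 - τ) + (A * 2 ^ j) ^ (-τ))
        = 68 * ((b - a) * (A ^ (2 - τ) * θ ^ j) + A ^ (-τ) * (2 ^ (-τ)) ^ j) := by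
          rw [hscale, hscale]
      _ ≤ 68 * ((b - a) * (A ^ (2 - τ) * θ ^ j) + A ^ (-τ) * θ ^ j) := by gcongr
      _ = 68 * D * θ ^ j := by rw [hD]; ring
  have hcover : Icc a b ∩ nearFractions (fun r => 2 * approxRate τ r) (Ici A) ⊆ ⋃ j, U j := by
    rw [← inter_iUnion]
    exact inter_subset_inter_right _ (nearFractions_Ici_subset_iUnion hA0)
  have hsum : HasSum (fun j => 68 * D * θ ^ j) (68 * D * (1 - θ)⁻¹) :=
    (hasSum_geometric_of_lt_one (by positivity) (two_rpow_two_sub_lt_one hτ)).mul_left _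
  calc volume (Icc a b ∩ nearFractions (fun r => 2 * approxRate τ r) (Ici A))
      ≤ ∑' j, volume (U j) := (measure_mono hcover).trans (measure_iUnion_le _)
    _ ≤ ∑' j, ENNReal.ofReal (68 * D * θ ^ j) := ENNReal.tsum_le_tsum hU
    _ = ENNReal.ofReal (68 * D * (1 - θ)⁻¹) := by
        rw [← ENNReal.ofReal_tsum_of_nonneg (fun j => by positivity) hsum.summable, hsum.tsum_eq]
    _ = ENNReal.ofReal (tailConst τ * D) := by
        rw [tailConst, div_eq_mul_inv, mul_right_comm]

end Rate

section Windows

/-- The points to the right of `u = p / q` (in lowest terms) that `u` approximates exactly as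
`E(Ψ, ω)` asks: `(1 - ω(q)) Ψ(q) ≤ x - u ≤ Ψ(q)`. -/
def window (Ψ ω : ℝ → ℝ) (u : ℚ) : Set ℝ :=
  Icc (u + (1 - ω u.den) * Ψ u.den) (u + Ψ u.den)

/-- The points satisfying the lower bound in the definition of `E(Ψ, ω)` for the single
denominator `r`. -/
def lowerBoundSet (Ψ ω : ℝ → ℝ) (r : ℕ) : Set ℝ :=
  {x | ∀ p : ℤ, (1 - ω r) * Ψ r ≤ |x - p / r|}

variable {Ψ ω : ℝ → ℝ}

lemma volume_interior_window (u : ℚ) :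
    volume (interior (window Ψ ω u)) = ENNReal.ofReal (ω u.den * Ψ u.den) := by
  rw [window, interior_Icc, Real.volume_Ioo]
  ring_nf

lemma window_nonempty {u : ℚ} (hΨ : 0 ≤ Ψ u.den) (hω : 0 ≤ ω u.den) :
    (window Ψ ω u).Nonempty := by
  refine nonempty_Icc.2 ?_
  gcongr
  exact mul_le_of_le_one_left hΨ (sub_le_self _ hω)

lemma half_le_sub_of_mem_window {u : ℚ} {x : ℝ} (hΨ : 0 ≤ Ψ u.den) (hω : ω u.den ≤ 1 / 2)
    (hx : x ∈ window Ψ ω u) : Ψ u.den / 2 ≤ x - u := by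
  nlinarith [hx.1]

lemma abs_sub_le_of_mem_window {u : ℚ} {x : ℝ} (hΨ : 0 ≤ Ψ u.den) (hω : ω u.den ≤ 2)
    (hx : x ∈ window Ψ ω u) : |x - u| ≤ Ψ u.den := by
  rw [abs_le]
  constructor <;> nlinarith [hx.1, hx.2]

lemma mem_ESet_of_strictMono_den {u : ℕ → ℚ} {x : ℝ} (hu : StrictMono fun k => (u k).den)
    (hΨ : ∀ k, |x - u k| ≤ Ψ (u k).den)
    (hlower : ∀ k, ∀ r ∈ Ico (u k).den (u (k + 1)).den, x ∈ lowerBoundSet Ψ ω r) :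
    x ∈ ESet Ψ ω := by
  refine ⟨infinite_of_injective_forall_mem (f := fun k => ((u k).num, (u k).den))
    (fun i j hij => hu.injective (congrArg Prod.snd hij)) fun k => ⟨(u k).den_pos, ?_⟩,
    (u 0).den, fun r hr => ?_⟩
  · rw [← Rat.cast_def]
    exact hΨ k
  · have hcover := iUnion_Ico_map_succ_eq_Ici (fun k => hu.monotone (Nat.zero_le k))
      (not_bddAbove_of_tendsto_atTop hu.tendsto_atTop)
    obtain ⟨k, hk⟩ := mem_iUnion.1 (hcover.ge hr)
    exact hlower k r hk

end Windows

section LargeDenominators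

/-- A lower bound for the denominators `r ≥ n` of the fractions, other than `u` itself, that come
close to the window of a rational `u` of denominator `n`; see `cutoff_le_of_abs_sub_lt`. -/
noncomputable def cutoff (τ n : ℝ) : ℝ := n ^ (τ - 1) / 3

/-- The finitely many ways in which a denominator `n` has to be large in the construction; all of
them hold for all sufficiently large `n`. -/
structure LargeDen (τ C n : ℝ) : Prop where
  slack_le : approxSlack τ C n ≤ 1 / 2
  one_le_cutoff : 1 ≤ cutoff τ n
  tail_le : tailConst τ * cutoff τ n ^ (2 - τ) ≤ 1 / 4
  eight_le : 8 ≤ (n / 4) ^ (τ - 2)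

variable {τ C : ℝ}

lemma tendsto_cutoff_atTop (hτ : 1 < τ) : Tendsto (cutoff τ) atTop atTop :=
  (tendsto_rpow_atTop (sub_pos.2 hτ)).atTop_div_const three_pos

lemma eventually_largeDen (hτ : 2 < τ) (C : ℝ) : ∀ᶠ n : ℝ in atTop, LargeDen τ C n := by
  have hτ' : 0 < τ - 2 := sub_pos.2 hτ
  have hcut : Tendsto (cutoff τ) atTop atTop := tendsto_cutoff_atTop (by linarith)
  have hslack : Tendsto (fun n => approxSlack τ C n) atTop (𝓝 0) := by
    simpa only [mul_zero, approxSlack] using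
      (tendsto_rpow_neg_atTop (mul_pos (two_pos.trans hτ) hτ')).const_mul C
  have htail : Tendsto (fun n => tailConst τ * cutoff τ n ^ (2 - τ)) atTop (𝓝 0) := by
    simpa only [mul_zero, neg_sub, Function.comp_def] using
      ((tendsto_rpow_neg_atTop hτ').comp hcut).const_mul (tailConst τ)
  have hpow : Tendsto (fun n : ℝ => (n / 4) ^ (τ - 2)) atTop atTop :=
    (tendsto_rpow_atTop hτ').comp (tendsto_id.atTop_div_const four_pos)
  filter_upwards [hslack.eventually_le_const one_half_pos, hcut.eventually_ge_atTop 1,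
    htail.eventually_le_const (show (0 : ℝ) < 1 / 4 by norm_num), hpow.eventually_ge_atTop 8]
    with n h₁ h₂ h₃ h₄ using ⟨h₁, h₂, h₃, h₄⟩

end LargeDenominators

section PowWindows

/-- The window of `u` for the functions `Ψ` and `ω` of the theorem. -/
abbrev powWindow (τ C : ℝ) (u : ℚ) : Set ℝ := window (approxRate τ) (approxSlack τ C) u

variable {τ C : ℝ} {u v : ℚ} {x y : ℝ} {p : ℤ} {r : ℕ}

lemma approxRate_den_pos (u : ℚ) : 0 < approxRate τ u.den :=
  approxRate_pos (Nat.cast_pos.2 u.den_pos)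

lemma abs_sub_le_of_mem_powWindow (h : LargeDen τ C u.den) (hx : x ∈ powWindow τ C u) :
    |x - u| ≤ approxRate τ u.den :=
  abs_sub_le_of_mem_window (approxRate_den_pos u).le (by linarith [h.slack_le]) hx

lemma mul_cutoff_rpow_neg {n : ℝ} (hn : 0 < n) :
    C * cutoff τ n ^ (-τ) = 3 ^ τ * (approxSlack τ C n * approxRate τ n) := by
  have hcutoff : cutoff τ n ^ (-τ) = 3 ^ τ * n ^ (-(τ * (τ - 1))) := by
    rw [cutoff, Real.div_rpow (by positivity) three_pos.le, ← Real.rpow_mul hn.le,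
      Real.rpow_neg three_pos.le, div_inv_eq_mul, mul_comm]
    ring_nf
  have hlength : approxSlack τ C n * approxRate τ n = C * n ^ (-(τ * (τ - 1))) := by
    rw [approxSlack, approxRate, mul_assoc, ← Real.rpow_add hn]
    ring_nf
  rw [hcutoff, hlength, mul_left_comm]

lemma volume_powWindow_inter_nearFractions_le (hτ : 2 < τ) (hC : 4 * tailConst τ * 3 ^ τ ≤ C)
    (h : LargeDen τ C u.den) :
    volume (powWindow τ C u ∩
        nearFractions (fun r => 2 * approxRate τ r) (Ici (cutoff τ u.den))) ≤
      ENNReal.ofReal (approxSlack τ C u.den * approxRate τ u.den / 2) := by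
  have hden : (0 : ℝ) < u.den := Nat.cast_pos.2 u.den_pos
  have hC0 : 0 ≤ C := le_trans (by have := tailConst_pos hτ; positivity) hC
  set L := approxSlack τ C u.den * approxRate τ u.den with hL
  have hL0 : 0 ≤ L := mul_nonneg (approxSlack_nonneg hC0 hden.le) (approxRate_den_pos u).le
  set A := cutoff τ u.den
  have hA0 : 0 ≤ A ^ (-τ) := Real.rpow_nonneg (by linarith [h.one_le_cutoff]) _
  have hmain : tailConst τ * A ^ (-τ) ≤ L / 4 := by
    have hscale : 3 ^ τ * (4 * (tailConst τ * A ^ (-τ))) ≤ 3 ^ τ * L :=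
      calc 3 ^ τ * (4 * (tailConst τ * A ^ (-τ)))
          = 4 * tailConst τ * 3 ^ τ * A ^ (-τ) := by ring
        _ ≤ C * A ^ (-τ) := by gcongr
        _ = 3 ^ τ * L := mul_cutoff_rpow_neg hden
    linarith [le_of_mul_le_mul_left hscale (by positivity)]
  refine (volume_nearFractions_approxRate_Ici_le hτ ?_ h.one_le_cutoff).trans
    (ENNReal.ofReal_le_ofReal ?_)
  · gcongr
    exact one_sub_approxSlack_mul_le hC0 hden
  · calc tailConst τ * ((u + approxRate τ u.den
            - (u + (1 - approxSlack τ C u.den) * approxRate τ u.den)) * A ^ (2 - τ) + A ^ (-τ))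
        = L * (tailConst τ * A ^ (2 - τ)) + tailConst τ * A ^ (-τ) := by rw [hL]; ring
      _ ≤ L * (1 / 4) + L / 4 := by
        gcongr
        exact h.tail_le
      _ = L / 2 := by ring

lemma cutoff_le_of_abs_sub_lt (hτ : 0 ≤ τ) (hx : |x - u| ≤ approxRate τ u.den) (hr : u.den ≤ r)
    (hne : (p : ℝ) / r ≠ u) (hlt : |x - p / r| < 2 * approxRate τ r) :
    cutoff τ u.den ≤ r := by
  set n : ℝ := (u.den : ℝ)
  have hn : 0 < n := Nat.cast_pos.2 u.den_pos
  have hnr : n ≤ r := Nat.cast_le.2 hr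
  have hr0 : (0 : ℝ) < r := hn.trans_le hnr
  have hclose : 1 / (r * n) ≤ 3 * approxRate τ n :=
    calc 1 / (r * n) ≤ |(p : ℝ) / r - u| :=
          one_div_le_abs_div_sub_ratCast (Nat.cast_pos.1 hr0) hne
      _ ≤ |(p : ℝ) / r - x| + |x - u| := abs_sub_le _ _ _
      _ ≤ 2 * approxRate τ n + approxRate τ n := by
        rw [abs_sub_comm _ x]
        linarith [approxRate_le_approxRate hτ hn hnr]
      _ = 3 * approxRate τ n := by ring
  rw [div_le_iff₀ (mul_pos hr0 hn)] at hclose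
  rw [cutoff, div_le_iff₀ three_pos]
  calc n ^ (τ - 1) = n ^ (τ - 1) * 1 := (mul_one _).symm
    _ ≤ n ^ (τ - 1) * (3 * approxRate τ n * (r * n)) := by gcongr
    _ = r * 3 * (approxRate τ n * (n ^ (τ - 1) * n)) := by ring
    _ = r * 3 := by rw [approxRate_mul_rpow hn, mul_one]

lemma exists_mem_interior_powWindow (hτ : 2 < τ) (hC : 4 * tailConst τ * 3 ^ τ ≤ C)
    (h : LargeDen τ C u.den) (c : ℝ) :
    ∃ y ∈ interior (powWindow τ C u), Irrational y ∧ y ≠ c ∧ ∀ r : ℕ, u.den ≤ r → ∀ p : ℤ,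
      (p : ℝ) / r ≠ u → 2 * approxRate τ r ≤ |y - p / r| := by
  have hC0 : 0 < C := lt_of_lt_of_le (by have := tailConst_pos hτ; positivity) hC
  have hlength : 0 < approxSlack τ C u.den * approxRate τ u.den :=
    mul_pos (mul_pos hC0 (Real.rpow_pos_of_pos (Nat.cast_pos.2 u.den_pos) _))
      (approxRate_den_pos u)
  have hlt : volume (interior (powWindow τ C u) ∩
      nearFractions (fun r => 2 * approxRate τ r) (Ici (cutoff τ u.den))) <
      volume (interior (powWindow τ C u)) := by
    rw [volume_interior_window]
    exact ((measure_mono (inter_subset_inter_left _ interior_subset)).trans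
      (volume_powWindow_inter_nearFractions_le hτ hC h)).trans_lt
      ((ENNReal.ofReal_lt_ofReal_iff hlength).2 (half_lt_self hlength))
  obtain ⟨y, hy, hy'⟩ := sdiff_union_nonempty_of_measure_lt hlt
    ((countable_range ((↑) : ℚ → ℝ)).union (countable_singleton c))
  simp only [mem_union, mem_singleton_iff, not_or] at hy'
  obtain ⟨hfar, hirr, hyc⟩ := hy'
  refine ⟨y, hy, hirr, hyc, fun r hr p hne => ?_⟩
  by_contra! hnear
  exact hfar ⟨r, cutoff_le_of_abs_sub_lt (by linarith)
    (abs_sub_le_of_mem_powWindow h (interior_subset hy)) hr hne hnear, p, hnear⟩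

lemma two_mul_approxRate_le_one_div_mul {n r : ℝ} (hn : 0 < n) (hr : 0 < r)
    (hnr : 2 * n ≤ r ^ (τ - 1)) : 2 * approxRate τ r ≤ 1 / (r * n) := by
  have hrate : 0 < approxRate τ r := approxRate_pos hr
  rw [le_div_iff₀ (mul_pos hr hn)]
  calc 2 * approxRate τ r * (r * n) = approxRate τ r * (2 * n * r) := by ring
    _ ≤ approxRate τ r * (r ^ (τ - 1) * r) := by gcongr
    _ = 1 := approxRate_mul_rpow hr

lemma two_mul_le_rpow {n : ℝ} (hn : 0 < n) (h : 8 ≤ (n / 4) ^ (τ - 2)) :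
    2 * n ≤ (n / 4) ^ (τ - 1) := by
  have hn' : 0 < n / 4 := by positivity
  calc 2 * n = 8 * (n / 4) := by ring
    _ ≤ (n / 4) ^ (τ - 2) * (n / 4) := by gcongr
    _ = (n / 4) ^ (τ - 1) := by rw [← Real.rpow_add_one hn'.ne']; ring_nf

lemma two_div_sq_le_approxRate {n r : ℝ} (hτ : 1 < τ) (hn : 0 < n)
    (h : 8 ≤ (n / 4) ^ (τ - 2)) (hr : 0 < r) (hrn : r ^ (τ - 1) < 2 * n) :
    2 / n ^ 2 ≤ approxRate τ r := by
  have hr4 : r ≤ n / 4 := by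
    have hlt := hrn.trans_le (two_mul_le_rpow hn h)
    exact ((Real.rpow_lt_rpow_iff hr.le (by positivity) (by linarith)).1 hlt).le
  have hrate : 0 < approxRate τ r := approxRate_pos hr
  rw [div_le_iff₀ (by positivity)]
  calc 2 = 2 * (approxRate τ r * (r ^ (τ - 1) * r)) := by rw [approxRate_mul_rpow hr, mul_one]
    _ ≤ 2 * (approxRate τ r * (2 * n * (n / 4))) := by gcongr
    _ = approxRate τ r * n ^ 2 := by ring

lemma two_mul_approxRate_le_one_div_mul_self {n : ℝ} (hτ : 1 ≤ τ) (hn : 0 < n)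
    (h : 8 ≤ (n / 4) ^ (τ - 2)) : 2 * approxRate τ n ≤ 1 / (n * n) := by
  refine two_mul_approxRate_le_one_div_mul hn hn ((two_mul_le_rpow hn h).trans ?_)
  gcongr
  all_goals linarith

lemma abs_sub_le_two_div_sq (hτ : 1 ≤ τ) (h : 8 ≤ ((v.den : ℝ) / 4) ^ (τ - 2))
    (hx : |x - v| ≤ approxRate τ v.den) (hy : |y - v| ≤ 1 / (v.den : ℝ) ^ 2) :
    |x - y| ≤ 2 / (v.den : ℝ) ^ 2 := by
  have hn : (0 : ℝ) < v.den := Nat.cast_pos.2 v.den_pos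
  have hrate := two_mul_approxRate_le_one_div_mul_self hτ hn h
  rw [← sq] at hrate
  calc |x - y| ≤ |x - v| + |v - y| := abs_sub_le _ _ _
    _ ≤ 1 / (v.den : ℝ) ^ 2 + 1 / (v.den : ℝ) ^ 2 := by
      rw [abs_sub_comm (v : ℝ)]
      linarith [approxRate_den_pos (τ := τ) v]
    _ = 2 / (v.den : ℝ) ^ 2 := by ring

lemma approxRate_le_abs_sub_of_lt_den (hτ : 1 < τ) (h : 8 ≤ ((v.den : ℝ) / 4) ^ (τ - 2))
    (hx : |x - v| ≤ approxRate τ v.den) (hy : |y - v| ≤ 1 / (v.den : ℝ) ^ 2) (hr : 0 < r)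
    (hrv : r < v.den) (hyp : 2 * approxRate τ r ≤ |y - p / r|) :
    approxRate τ r ≤ |x - p / r| := by
  have hr0 : (0 : ℝ) < r := Nat.cast_pos.2 hr
  have hn : (0 : ℝ) < v.den := Nat.cast_pos.2 v.den_pos
  rcases lt_or_ge ((r : ℝ) ^ (τ - 1)) (2 * v.den) with hsmall | hlarge
  · have hxy := (abs_sub_le_two_div_sq hτ.le h hx hy).trans
      (two_div_sq_le_approxRate hτ hn h hr0 hsmall)
    have htri := abs_sub_le y x ((p : ℝ) / r)
    rw [abs_sub_comm y x] at htri
    linarith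
  · have hne : (p : ℝ) / r ≠ v := fun hpv =>
      hrv.not_ge (Nat.le_of_dvd hr (den_dvd_of_intCast_div_natCast_eq hpv))
    have hsep := one_div_le_abs_div_sub_ratCast hr hne
    have hrate_r := two_mul_approxRate_le_one_div_mul hn hr0 hlarge
    have hrate_v : 2 * approxRate τ v.den ≤ 1 / (r * v.den) :=
      (two_mul_approxRate_le_one_div_mul_self hτ.le hn h).trans (by gcongr)
    have htri := abs_sub_le ((p : ℝ) / r) x v
    rw [abs_sub_comm _ x] at htri
    linarith

lemma one_sub_approxSlack_mul_le_of_div_eq (hτ : 1 ≤ τ) (hC : 0 ≤ C) (h : LargeDen τ C u.den)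
    (hx : x ∈ powWindow τ C u) (hr : 0 < r) (hpr : (p : ℝ) / r = u) :
    (1 - approxSlack τ C r) * approxRate τ r ≤ |x - p / r| := by
  rw [hpr]
  refine le_trans ?_ (le_abs_self _)
  obtain ⟨k, rfl⟩ := den_dvd_of_intCast_div_natCast_eq hpr
  obtain rfl | hk : k = 1 ∨ 2 ≤ k := by
    have := Nat.pos_of_mul_pos_left hr
    omega
  · rw [mul_one]
    linarith [hx.1]
  · have hden : (0 : ℝ) < u.den := Nat.cast_pos.2 u.den_pos
    have hmul : 2 * (u.den : ℝ) ≤ (u.den * k : ℕ) := by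
      rw [mul_comm u.den]
      exact_mod_cast Nat.mul_le_mul_right _ hk
    calc _ ≤ approxRate τ (u.den * k : ℕ) := one_sub_approxSlack_mul_le hC (Nat.cast_pos.2 hr)
      _ ≤ approxRate τ u.den / 2 := approxRate_le_half hτ hden hmul
      _ ≤ x - u := half_le_sub_of_mem_window (approxRate_den_pos u).le h.slack_le hx

lemma exists_powWindow_subset (hτ : 2 < τ) (hC : 4 * tailConst τ * 3 ^ τ ≤ C)
    (hu : ∀ n : ℕ, u.den ≤ n → LargeDen τ C n) (c : ℝ) :
    ∃ v : ℚ, u.den < v.den ∧ powWindow τ C v ⊆ powWindow τ C u \ {c} ∧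
      ∀ r ∈ Ico u.den v.den,
        powWindow τ C v ⊆ lowerBoundSet (approxRate τ) (approxSlack τ C) r := by
  have hC0 : 0 ≤ C := le_trans (by have := tailConst_pos hτ; positivity) hC
  obtain ⟨y, hy, hirr, hyc, hfar⟩ := exists_mem_interior_powWindow hτ hC (hu _ le_rfl) c
  obtain ⟨ε, hε, hball⟩ :=
    Metric.isOpen_iff.1 (isOpen_interior.sdiff isClosed_singleton) y ⟨hy, hyc⟩
  obtain ⟨m, hm⟩ := exists_nat_gt (2 / ε)
  obtain ⟨v, hv, hyv⟩ := exists_lt_den_abs_sub_le_of_irrational hirr (max u.den m)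
  rw [max_lt_iff] at hv
  have hLv := hu v.den hv.1.le
  have hsub : powWindow τ C v ⊆ interior (powWindow τ C u) \ {c} := by
    intro x hx
    have hmv : (m : ℝ) < v.den := Nat.cast_lt.2 hv.2
    have hv1 : (1 : ℝ) ≤ v.den := by exact_mod_cast v.den_pos
    refine hball (mem_ball.2 ?_)
    calc dist x y ≤ 2 / (v.den : ℝ) ^ 2 :=
          abs_sub_le_two_div_sq (by linarith) hLv.eight_le (abs_sub_le_of_mem_powWindow hLv hx) hyv
      _ ≤ 2 / (v.den : ℝ) := by
        gcongr
        exact le_self_pow₀ hv1 two_ne_zero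
      _ < ε := (div_lt_comm₀ (by positivity) hε).2 (hm.trans hmv)
  refine ⟨v, hv.1, fun x hx => ⟨interior_subset (hsub hx).1, (hsub hx).2⟩, ?_⟩
  rintro r ⟨hur, hrv⟩ x hx p
  have hr : 0 < r := u.den_pos.trans_le hur
  by_cases hpr : (p : ℝ) / r = u
  · exact one_sub_approxSlack_mul_le_of_div_eq (by linarith) hC0 (hu _ le_rfl)
      (interior_subset (hsub hx).1) hr hpr
  · exact (one_sub_approxSlack_mul_le hC0 (Nat.cast_pos.2 hr)).trans
      (approxRate_le_abs_sub_of_lt_den (by linarith) hLv.eight_le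
        (abs_sub_le_of_mem_powWindow hLv hx) hyv hr hrv (hfar r hur p hpr))

end PowWindows

/-- Cantor's diagonal argument: along a branch of the scheme `K` one can miss any given sequence of
points. -/
lemma not_countable_of_nested_compacts {X α : Type*} [TopologicalSpace X] [Nonempty α]
    {K : α → Set X} {R : α → α → Prop} {E : Set X} (hne : ∀ a, (K a).Nonempty)
    (hcompact : ∀ a, IsCompact (K a)) (hclosed : ∀ a, IsClosed (K a))
    (hstep : ∀ a c, ∃ b, R a b ∧ K b ⊆ K a \ {c})
    (hE : ∀ s : ℕ → α, (∀ k, R (s k) (s (k + 1))) → ⋂ k, K (s k) ⊆ E) : ¬E.Countable := by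
  intro hcount
  inhabit α
  have : Nonempty X := (hne default).to_type
  obtain ⟨c, hc⟩ := countable_iff_exists_subset_range.1 hcount
  choose next hR hK using hstep
  let s : ℕ → α := fun k => Nat.rec default (fun k a => next a (c k)) k
  obtain ⟨x, hx⟩ := IsCompact.nonempty_iInter_of_sequence_nonempty_isCompact_isClosed
    (fun k => K (s k)) (fun k => (hK (s k) (c k)).trans sdiff_subset) (fun k => hne _)
    (hcompact _) (fun k => hclosed _)
  obtain ⟨k, rfl⟩ := hc (hE s (fun k => hR (s k) (c k)) hx)
  exact (hK (s k) (c k) (mem_iInter.1 hx (k + 1))).2 rfl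

/-- **Theorem.** For `τ > 2` and `Ψ(q) = q^(−τ)`, there exists `C₀ > 0` such that for every
`C ≥ C₀`, taking `ω(q) = C·q^(−τ(τ−2))`, the set `E(Ψ, ω)` is uncountable. -/
theorem uncountable_ESet_rpow (τ : ℝ) (hτ : 2 < τ) :
    ∃ C₀ : ℝ, 0 < C₀ ∧ ∀ C : ℝ, C₀ ≤ C →
      ¬ (ESet (fun q : ℝ => q ^ (-τ)) (fun q : ℝ => C * q ^ (-(τ * (τ - 2))))).Countable := by
  have hC₀ : 0 < 4 * tailConst τ * 3 ^ τ := by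
    have := tailConst_pos hτ
    positivity
  refine ⟨_, hC₀, fun C hC => ?_⟩
  obtain ⟨N, hN⟩ := eventually_atTop.1
    (tendsto_natCast_atTop_atTop.eventually (eventually_largeDen hτ C))
  let α := {u : ℚ // ∀ n : ℕ, u.den ≤ n → LargeDen τ C n}
  have : Nonempty α := by
    refine ⟨⟨((N + 1 : ℕ) : ℚ)⁻¹, fun n hn => hN n ?_⟩⟩
    rw [Rat.inv_natCast_den_of_pos N.succ_pos] at hn
    exact N.le_succ.trans hn
  refine not_countable_of_nested_compacts (K := fun u : α => powWindow τ C u)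
    (R := fun u v => u.1.den < v.1.den ∧ ∀ r ∈ Ico u.1.den v.1.den,
      powWindow τ C v ⊆ lowerBoundSet (approxRate τ) (approxSlack τ C) r)
    (fun u => window_nonempty (approxRate_den_pos _).le
      (approxSlack_nonneg (hC₀.le.trans hC) (Nat.cast_nonneg _)))
    (fun _ => isCompact_Icc) (fun _ => isClosed_Icc) (fun u c => ?_) (fun u hR x hx => ?_)
  · obtain ⟨v, hden, hsub, hlower⟩ := exists_powWindow_subset hτ hC u.2 c
    exact ⟨⟨v, fun n hn => u.2 n (hden.le.trans hn)⟩, ⟨hden, hlower⟩, hsub⟩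
  · rw [mem_iInter] at hx
    exact mem_ESet_of_strictMono_den (strictMono_nat_of_lt_succ fun k => (hR k).1)
      (fun k => abs_sub_le_of_mem_powWindow ((u k).2 _ le_rfl) (hx k))
      (fun k r hr => (hR k).2 r hr (hx (k + 1)))
end

section
/- Let Ψ : (0,∞) → (0,∞) and ω : (0,∞) → (0,1) be such that lim_{q→∞} q²Ψ(q) = 0, lim_{q→∞} ω(q) = 0, the map q ↦ q²Ψ(q) is non-increasing on (0,∞), and Ψ satisfies the square divisibility condition. If ω(q) < ((1 − ω(1/Ψ(q)))/Ψ(q)) · Ψ(1/Ψ(q)) for all sufficiently large q, then E(Ψ,ω) = ∅. -/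
/-!
If `|x - p/q| ≤ Ψ(q)` with `q` large and `x ∈ E(Ψ, ω)`, then `x` lies within `ω(q)Ψ(q)` of one of
the two endpoints `p/q ± Ψ(q)`. Since `N = 1/Ψ(q)` is an integer multiple `qk` of `q`, these
endpoints are the rationals `(pk ± 1)/N`. The smallness hypothesis on `ω` reads
`ω(q)Ψ(q) < (1 - ω(N))Ψ(N)`, so one of them is closer to `x` than membership in `E(Ψ, ω)` permits
at the denominator `N ≥ q`.
-/

open Filter Set

/-- `Ψ` satisfies the *square divisibility condition*: for every positive integer `q`,
`Ψ(q)⁻¹` is a positive integer divisible by `q²`. -/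
def SquareDivisibility (Ψ : ℝ → ℝ) : Prop :=
  ∀ q : ℕ, 0 < q → ∃ k : ℕ, 0 < k ∧ (Ψ (q : ℝ))⁻¹ = (q : ℝ) ^ 2 * (k : ℝ)

theorem finite_setOf_abs_sub_intCast_div_le {K : Type*} [Field K] [LinearOrder K]
    [IsStrictOrderedRing K] [FloorRing K] (x r : K) {a : K} (ha : 0 < a) :
    {p : ℤ | |x - p / a| ≤ r}.Finite := by
  refine (finite_Icc ⌈(x - r) * a⌉ ⌊(x + r) * a⌋).subset fun p hp ↦ ?_
  obtain ⟨hlower, hupper⟩ := abs_le.mp hp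
  exact ⟨Int.ceil_le.mpr ((le_div_iff₀ ha).mp (by linarith)),
    Int.le_floor.mpr ((div_le_iff₀ ha).mp (by linarith))⟩

theorem mem_WSet_iff_frequently {Ψ : ℝ → ℝ} {x : ℝ} :
    x ∈ WSet Ψ ↔ ∃ᶠ q : ℕ in atTop, 0 < q ∧ ∃ p : ℤ, |x - p / q| ≤ Ψ q := by
  set S := {pq : ℤ × ℕ | 0 < pq.2 ∧ |x - pq.1 / pq.2| ≤ Ψ pq.2}
  have denominators : {q : ℕ | 0 < q ∧ ∃ p : ℤ, |x - p / q| ≤ Ψ q} = Prod.snd '' S := by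
    ext q
    simp [S]
  have finite_fiber : ∀ q ∈ Prod.snd '' S, (S ∩ Prod.snd ⁻¹' {q}).Finite := by
    rintro _ ⟨⟨_, q⟩, ⟨hq, -⟩, rfl⟩
    refine ((finite_setOf_abs_sub_intCast_div_le x (Ψ q) (Nat.cast_pos.mpr hq)).prod
      (finite_singleton q)).subset ?_
    rintro ⟨p, _⟩ ⟨⟨-, hp⟩, rfl⟩
    exact ⟨hp, rfl⟩
  rw [Nat.frequently_atTop_iff_infinite, denominators]
  exact ⟨fun hS himage ↦ hS (.of_finite_fibers Prod.snd himage finite_fiber), Infinite.of_image _⟩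

theorem abs_sub_add_eq_or_abs_sub_sub_eq {G : Type*} [AddCommGroup G] [LinearOrder G]
    [IsOrderedAddMonoid G] {x c r : G} (h : |x - c| ≤ r) :
    |x - (c + r)| = r - |x - c| ∨ |x - (c - r)| = r - |x - c| := by
  rcases le_total 0 (x - c) with hx | hx
  · left
    rw [abs_of_nonneg hx] at h ⊢
    rw [abs_sub_comm, ← abs_of_nonneg (sub_nonneg.mpr h)]
    congr 1
    abel
  · right
    rw [abs_of_nonpos hx] at h ⊢
    rw [← abs_of_nonneg (sub_nonneg.mpr h)]
    congr 1
    abel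

theorem exists_int_abs_sub_div_mul_eq {K : Type*} [Field K] [LinearOrder K]
    [IsStrictOrderedRing K] {x q : K} {p : ℤ} {k : ℕ} (hk : 0 < k)
    (h : |x - p / q| ≤ 1 / (q * k)) :
    ∃ a : ℤ, |x - a / (q * k)| = 1 / (q * k) - |x - p / q| := by
  have hpq : (p : K) / q = (p * k) / (q * k) :=
    (mul_div_mul_right _ _ (Nat.cast_ne_zero.mpr hk.ne')).symm
  rcases abs_sub_add_eq_or_abs_sub_sub_eq h with hright | hleft
  · refine ⟨p * k + 1, ?_⟩
    rw [← hright, hpq, ← add_div]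
    push_cast
    rfl
  · refine ⟨p * k - 1, ?_⟩
    rw [← hleft, hpq, ← sub_div]
    push_cast
    rfl

theorem ESet_eq_empty_of_sqDiv_general {Ψ ω : ℝ → ℝ}
    (hdiv : ∀ᶠ q : ℕ in atTop, ∃ k : ℕ, 0 < k ∧ (Ψ q)⁻¹ = q * k)
    (hsmall : ∀ᶠ q : ℕ in atTop, ω q < (1 - ω (1 / Ψ q)) / Ψ q * Ψ (1 / Ψ q)) :
    ESet Ψ ω = ∅ := by
  refine eq_empty_of_forall_notMem ?_
  rintro x ⟨hxW, Q, hQ⟩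
  obtain ⟨q, ⟨hq, p, hpq⟩, hQq, ⟨k, hk, hΨinv⟩, hω⟩ :=
    ((mem_WSet_iff_frequently.mp hxW).and_eventually
      ((eventually_ge_atTop Q).and (hdiv.and hsmall))).exists
  have hΨ : Ψ q = 1 / (q * k) := by rw [← hΨinv, one_div, inv_inv]
  have hΨpos : 0 < Ψ q := by rw [hΨ]; positivity
  have hN : 1 / Ψ q = (q * k : ℕ) := by rw [one_div, hΨinv, Nat.cast_mul]
  obtain ⟨a, ha⟩ := exists_int_abs_sub_div_mul_eq hk (hΨ ▸ hpq)
  rw [← hΨ, ← Nat.cast_mul] at ha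
  rw [hN, div_mul_eq_mul_div, lt_div_iff₀ hΨpos] at hω
  refine lt_irrefl ((1 - ω (q * k : ℕ)) * Ψ (q * k : ℕ)) ?_
  calc
    (1 - ω (q * k : ℕ)) * Ψ (q * k : ℕ) ≤ |x - a / (q * k : ℕ)| :=
      hQ (q * k) (hQq.trans (Nat.le_mul_of_pos_right q hk)) a
    _ = Ψ q - |x - p / q| := ha
    _ ≤ Ψ q - (1 - ω q) * Ψ q := sub_le_sub_left (hQ q hQq p) _
    _ = ω q * Ψ q := by ring
    _ < (1 - ω (q * k : ℕ)) * Ψ (q * k : ℕ) := hω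

/-- **Theorem.** Suppose `q²Ψ(q) → 0`, `ω(q) → 0`, `q ↦ q²Ψ(q)` is non-increasing on `(0,∞)`,
`ω` maps `(0,∞)` into `(0,1)`, and `Ψ` satisfies the square divisibility condition.  If
`ω(q) < ((1 − ω(1/Ψ(q)))/Ψ(q))·Ψ(1/Ψ(q))` for all sufficiently large `q`, then `E(Ψ,ω) = ∅`. -/
theorem ESet_eq_empty_of_sqDiv (Ψ ω : ℝ → ℝ)
    (hΨpos : ∀ q : ℝ, 0 < q → 0 < Ψ q)
    (hωmem : ∀ q : ℝ, 0 < q → ω q ∈ Set.Ioo (0 : ℝ) 1)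
    (hΨlim : Filter.Tendsto (fun q : ℝ => q ^ 2 * Ψ q) Filter.atTop (nhds 0))
    (hωlim : Filter.Tendsto ω Filter.atTop (nhds 0))
    (hmono : AntitoneOn (fun q : ℝ => q ^ 2 * Ψ q) (Set.Ioi 0))
    (hsq : SquareDivisibility Ψ)
    (hsmall : ∀ᶠ q : ℝ in Filter.atTop,
      ω q < (1 - ω (1 / Ψ q)) / Ψ q * Ψ (1 / Ψ q)) :
    ESet Ψ ω = ∅ := by
  refine ESet_eq_empty_of_sqDiv_general ?_ hsmall.natCast_atTop
  filter_upwards [eventually_gt_atTop 0] with q hq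
  obtain ⟨k, hk, hΨinv⟩ := hsq q hq
  exact ⟨q * k, Nat.mul_pos hq hk, by rw [hΨinv]; push_cast; ring⟩
end

section
/- Let Ψ : (0,∞) → (0,∞) and ω : (0,∞) → (0,1) be such that lim_{q→∞} q²Ψ(q) = 0, lim_{q→∞} ω(q) = 0, the map q ↦ q²Ψ(q) is non-increasing on (0,∞), and Ψ satisfies the square divisibility condition. If there exists c ∈ (0,1) such that ω(q) < (c/Ψ(q)) · Ψ(1/Ψ(q)) for all sufficiently large q, then E(Ψ,ω) = ∅. -/
/-!
Let `x ∈ E(Ψ, ω)` and let `p/q` with `q` large satisfy `|x - p/q| ≤ Ψ(q)`. Since also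
`|x - p/q| ≥ (1 - ω(q)) Ψ(q)`, the point `x` lies within `ω(q) Ψ(q)` of one of the two endpoints
`p/q ± Ψ(q)`. By square divisibility `N = 1/Ψ(q)` is a multiple of `q`, so this endpoint is a
rational `P/N`. Hence `|x - P/N| ≤ ω(q) Ψ(q) < c Ψ(N)`, while membership in `E(Ψ, ω)` gives
`|x - P/N| ≥ (1 - ω(N)) Ψ(N)`. As `N ≥ q` is large, `ω(N) ≤ 1 - c`, a contradiction.
-/

open Filter Set

theorem finite_setOf_abs_sub_intCast_div_le_s3 {q : ℝ} (hq : q ≠ 0) (x r : ℝ) :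
    {p : ℤ | |x - p / q| ≤ r}.Finite := by
  refine (Int.isClosedEmbedding_coe_real.isCompact_preimage
    (isCompact_closedBall (x * q) (r * |q|))).finite_of_discrete.subset fun p hp ↦ ?_
  have hscale : x * q - p = (x - p / q) * q := by field_simp
  rw [mem_preimage, Metric.mem_closedBall', Real.dist_eq, hscale, abs_mul]
  exact mul_le_mul_of_nonneg_right hp (abs_nonneg q)

theorem frequently_exists_abs_sub_le_of_mem_WSet {Ψ : ℝ → ℝ} {x : ℝ} (hx : x ∈ WSet Ψ) :
    ∃ᶠ q : ℕ in atTop, ∃ p : ℤ, |x - p / q| ≤ Ψ q := by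
  rw [Nat.frequently_atTop_iff_infinite]
  intro hfinite
  refine hx (Set.Finite.of_finite_fibers Prod.snd (hfinite.subset ?_) fun q _ ↦ ?_)
  · rintro _ ⟨⟨p, q⟩, ⟨-, hpq⟩, rfl⟩
    exact ⟨p, hpq⟩
  · rcases eq_or_ne q 0 with rfl | hq
    · exact finite_empty.subset fun pq ⟨⟨hpos, _⟩, hzero⟩ ↦ hpos.ne' hzero
    · refine ((finite_setOf_abs_sub_intCast_div_le_s3 (Nat.cast_ne_zero.2 hq) x (Ψ q)).image
        (·, q)).subset ?_
      rintro ⟨p, _⟩ ⟨⟨-, hpq⟩, rfl⟩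
      exact ⟨p, hpq, rfl⟩

theorem exists_int_abs_sub_mul_eq_abs_abs_sub {R : Type*} [Ring R] [LinearOrder R] (u r : R) :
    ∃ s : ℤ, |u - s * r| = |(|u| - r)| := by
  rcases abs_choice u with hu | hu
  · exact ⟨1, by rw [hu, Int.cast_one, one_mul]⟩
  · exact ⟨-1, by rw [hu, Int.cast_neg, Int.cast_one, neg_one_mul, ← abs_neg, neg_sub', neg_neg]⟩

namespace SquareDivisibility

variable {Ψ : ℝ → ℝ} {q : ℕ}

theorem pos (hΨ : SquareDivisibility Ψ) (hq : 0 < q) : 0 < Ψ q := by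
  obtain ⟨k, hk, hinv⟩ := hΨ q hq
  rw [← inv_pos, hinv]
  positivity

theorem exists_common_denominator (hΨ : SquareDivisibility Ψ) (hq : 0 < q) :
    ∃ N : ℕ, q ≤ N ∧ (N : ℝ) = (Ψ q)⁻¹ ∧
      ∀ p s : ℤ, ∃ P : ℤ, (P / N : ℝ) = p / q + s * Ψ q := by
  obtain ⟨k, hk, hinv⟩ := hΨ q hq
  have hval : Ψ q = ((q : ℝ) ^ 2 * k)⁻¹ := by rw [← hinv, inv_inv]
  refine ⟨q ^ 2 * k, ?_, by rw [hinv]; push_cast; rfl, fun p s ↦ ⟨p * (q * k) + s, ?_⟩⟩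
  · exact (Nat.le_self_pow two_ne_zero q).trans (Nat.le_mul_of_pos_right _ hk)
  · rw [hval]
    push_cast
    field_simp

theorem exists_abs_sub_div_le (hΨ : SquareDivisibility Ψ) (hq : 0 < q) {x w : ℝ} {p : ℤ}
    (hlower : (1 - w) * Ψ q ≤ |x - p / q|) (hupper : |x - p / q| ≤ Ψ q) :
    ∃ (N : ℕ) (P : ℤ), q ≤ N ∧ (N : ℝ) = (Ψ q)⁻¹ ∧ |x - P / N| ≤ w * Ψ q := by
  obtain ⟨N, hqN, hN, hfrac⟩ := hΨ.exists_common_denominator hq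
  obtain ⟨s, hs⟩ := exists_int_abs_sub_mul_eq_abs_abs_sub (x - p / q) (Ψ q)
  obtain ⟨P, hP⟩ := hfrac p s
  refine ⟨N, P, hqN, hN, ?_⟩
  calc |x - P / N| = |(|x - p / q| - Ψ q)| := by rw [hP, ← sub_sub, hs]
    _ = Ψ q - |x - p / q| := by rw [abs_of_nonpos (sub_nonpos.2 hupper), neg_sub]
    _ ≤ w * Ψ q := by linarith

end SquareDivisibility

theorem ESet_eq_empty_of_sqDiv'_general {Ψ ω : ℝ → ℝ} {c : ℝ} (hsq : SquareDivisibility Ψ)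
    (hω : ∀ᶠ q : ℕ in atTop, ω q ≤ 1 - c)
    (hsmall : ∀ᶠ q : ℕ in atTop, ω q < c / Ψ q * Ψ (1 / Ψ q)) :
    ESet Ψ ω = ∅ := by
  refine eq_empty_of_forall_notMem ?_
  rintro x ⟨hxW, hxE⟩
  obtain ⟨Q, hQ⟩ := eventually_atTop.1 ((eventually_atTop.2 hxE).and hω)
  obtain ⟨q, ⟨p, hupper⟩, hQq, hq, hωq⟩ :=
    ((frequently_exists_abs_sub_le_of_mem_WSet hxW).and_eventually
      ((eventually_ge_atTop Q).and ((eventually_gt_atTop 0).and hsmall))).exists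
  obtain ⟨N, P, hqN, hN, hnear⟩ := hsq.exists_abs_sub_div_le hq ((hQ q hQq).1 p) hupper
  obtain ⟨hlower, hωN⟩ := hQ N (hQq.trans hqN)
  rw [one_div, ← hN, div_mul_eq_mul_div, lt_div_iff₀ (hsq.pos hq)] at hωq
  have hcontra : |x - P / N| < |x - P / N| :=
    calc |x - P / N| ≤ ω q * Ψ q := hnear
      _ < c * Ψ N := hωq
      _ ≤ (1 - ω N) * Ψ N :=
        mul_le_mul_of_nonneg_right (le_sub_comm.1 hωN) (hsq.pos (hq.trans_le hqN)).le
      _ ≤ |x - P / N| := hlower P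
  exact hcontra.false

/-- **Theorem.** Suppose `q²Ψ(q) → 0`, `ω(q) → 0`, `q ↦ q²Ψ(q)` is non-increasing on `(0,∞)`,
`ω` maps `(0,∞)` into `(0,1)`, and `Ψ` satisfies the square divisibility condition.  If there
is `c ∈ (0,1)` with `ω(q) < (c/Ψ(q))·Ψ(1/Ψ(q))` for all sufficiently large `q`, then
`E(Ψ,ω) = ∅`. -/
theorem ESet_eq_empty_of_sqDiv' (Ψ ω : ℝ → ℝ)
    (hΨpos : ∀ q : ℝ, 0 < q → 0 < Ψ q)
    (hωmem : ∀ q : ℝ, 0 < q → ω q ∈ Set.Ioo (0 : ℝ) 1)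
    (hΨlim : Filter.Tendsto (fun q : ℝ => q ^ 2 * Ψ q) Filter.atTop (nhds 0))
    (hωlim : Filter.Tendsto ω Filter.atTop (nhds 0))
    (hmono : AntitoneOn (fun q : ℝ => q ^ 2 * Ψ q) (Set.Ioi 0))
    (hsq : SquareDivisibility Ψ)
    (c : ℝ) (hc : c ∈ Set.Ioo (0 : ℝ) 1)
    (hsmall : ∀ᶠ q : ℝ in Filter.atTop, ω q < c / Ψ q * Ψ (1 / Ψ q)) :
    ESet Ψ ω = ∅ :=
  ESet_eq_empty_of_sqDiv'_general hsq
    (tendsto_natCast_atTop_atTop.eventually (hωlim.eventually_le_const (sub_pos.2 hc.2)))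
    (tendsto_natCast_atTop_atTop.eventually hsmall)
end

section
/- Let Ψ : (0,∞) → (0,∞) and ω : (0,∞) → (0,1) be such that lim_{q→∞} q²Ψ(q) = 0, lim_{q→∞} ω(q) = 0, the map q ↦ q²Ψ(q) is non-increasing on (0,∞), and Ψ satisfies the square divisibility condition. If ω(q) ≥ (45/(16Ψ(q))) · Ψ(1/(8Ψ(q))) for all sufficiently large q, then E(Ψ,ω) is non-empty; moreover it is uncountable. -/
open Filter Set

/-!
Every fraction `a / b` stays at distance at least `δ / b ^ 2` from a badly approximable number `z`,
and `δ / b ^ 2` exceeds `Ψ b` for large `b`. Let `p / q` be a good approximation of `z` with `q`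
large. By square divisibility `1 / Ψ q` is an integer `N = q ^ 2 k`, so
`p / q + Ψ q = (p q k + 1) / N`. By the folding lemma the fraction on the right inherits from
`p / q` the property of being badly approximable by fractions of smaller denominator, `p / q` itself
excepted. Moving it back towards `p / q` by slightly more than `Ψ N`, to the image of a quadratic
irrational under a unimodular Möbius transformation, gives a badly approximable number `z'` close
to `z`. Its distance to `p / q` is less than `Ψ q` but more than `(1 - ω q) Ψ q`, because `ω q Ψ q`
exceeds `Ψ N` by a constant factor, and `z'` stays at distance more than `Ψ b` from all other
fractions of large denominator `b`.

Hence the badly approximable numbers that satisfy the lower bounds accumulate at each of themselves,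
and do so within the set of numbers having an approximation of denominator at least `M`, for
every `M`. The Baire category theorem in their closure yields uncountably many points of `E(Ψ, ω)`.
-/

section Baire

variable {X : Type*}

lemma dense_preimage_val_closure [TopologicalSpace X] {S U : Set X}
    (h : S ⊆ closure (S ∩ U)) : Dense ((↑) ⁻¹' U : Set (closure S)) := by
  rw [Subtype.dense_iff, Subtype.image_preimage_coe]
  exact closure_minimal (h.trans (closure_mono (inter_subset_inter_left U subset_closure)))
    isClosed_closure

/-- A countable set could be removed, one point at a time, from the dense `Gδ` subset
`⋂ n, V n` of the complete space `closure S`, which has no isolated point. -/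
lemma not_countable_closure_inter_iInter [MetricSpace X] [CompleteSpace X] {S : Set X}
    (hS : S.Nonempty) {V : ℕ → Set X} (hV : ∀ n, IsOpen (V n))
    (hacc : ∀ z ∈ S, ∀ n, AccPt z (𝓟 (S ∩ V n))) : ¬ (closure S ∩ ⋂ n, V n).Countable := by
  intro hcount
  have : CompleteSpace (closure S) := isClosed_closure.completeSpace_coe
  have : Nonempty (closure S) := hS.closure.to_subtype
  have hVo (n : ℕ) : IsOpen ((↑) ⁻¹' V n : Set (closure S)) :=
    (hV n).preimage continuous_subtype_val
  have hVd (n : ℕ) : Dense ((↑) ⁻¹' V n : Set (closure S)) :=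
    dense_preimage_val_closure fun z hz => (hacc z hz n).clusterPt.mem_closure
  have hco (e : X) : IsOpen ((↑) ⁻¹' {e}ᶜ : Set (closure S)) :=
    isOpen_compl_singleton.preimage continuous_subtype_val
  have hcd (e : X) : Dense ((↑) ⁻¹' {e}ᶜ : Set (closure S)) := by
    refine dense_preimage_val_closure fun z hz => ?_
    obtain rfl | hze := eq_or_ne z e
    · refine mem_closure_iff_frequently.mpr ((accPt_iff_frequently.mp (hacc z hz 0)).mono ?_)
      exact fun y hy => ⟨hy.2.1, hy.1⟩
    · exact subset_closure ⟨hz, hze⟩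
  obtain ⟨x, hxV, hxc⟩ := ((dense_iInter_of_isOpen hVo hVd).inter_of_Gδ
    (.iInter_of_isOpen hVo) (.biInter_of_isOpen hcount fun e _ => hco e)
    (dense_biInter_of_isOpen (fun e _ => hco e) hcount fun e _ => hcd e)).nonempty
  simp only [mem_iInter, mem_preimage] at hxV hxc
  exact hxc x ⟨x.2, mem_iInter.mpr hxV⟩ rfl

end Baire

/-- `x` is badly approximable with constant `δ`: `|x - a / b| ≥ δ / b ^ 2` for all fractions
`a / b`. The denominators are cleared, so that `b` may be negative. -/
def IsBadlyApproximable (δ x : ℝ) : Prop :=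
  ∀ a b : ℤ, b ≠ 0 → δ ≤ |(b : ℝ)| * |b * x - a|

/-- `x` is badly approximable with constant `δ` by fractions with denominators smaller than `n`.
This makes sense for rational `x` too, with `n` the denominator of `x`. -/
def IsBadlyApproximableBelow (n : ℤ) (δ x : ℝ) : Prop :=
  ∀ a b : ℤ, b ≠ 0 → |b| < n → δ ≤ |(b : ℝ)| * |b * x - a|

lemma abs_mul_div_sub {q : ℝ} (hq : 0 < q) (p a b : ℝ) :
    |b * (p / q) - a| = |b * p - a * q| / q := by
  rw [← abs_of_pos hq, ← abs_div, abs_of_pos hq]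
  congr 1
  field_simp

lemma abs_sub_div_eq {b : ℝ} (hb : 0 < b) (x a : ℝ) : |x - a / b| = |b * x - a| / b := by
  rw [← abs_of_pos hb, ← abs_div, abs_of_pos hb]
  congr 1
  field_simp

lemma abs_mul_abs_mul_sub_le (a b x y : ℝ) :
    |b| * |b * x - a| ≤ |b| * |b * y - a| + b ^ 2 * |x - y| := by
  calc |b| * |b * x - a| = |b| * |b * (x - y) + (b * y - a)| := by ring_nf
    _ ≤ |b| * (|b| * |x - y| + |b * y - a|) := by grw [abs_add_le, abs_mul]
    _ = |b| * |b * y - a| + b ^ 2 * |x - y| := by rw [← sq_abs b]; ring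

lemma IsBadlyApproximable.mono {δ δ' x : ℝ} (h : IsBadlyApproximable δ x) (hδ : δ' ≤ δ) :
    IsBadlyApproximable δ' x :=
  fun a b hb => hδ.trans (h a b hb)

lemma IsBadlyApproximable.div_sq_le {δ x : ℝ} (h : IsBadlyApproximable δ x) (a : ℤ) {b : ℕ}
    (hb : 0 < b) : δ / (b : ℝ) ^ 2 ≤ |x - a / b| := by
  have hb' : (0 : ℝ) < b := by exact_mod_cast hb
  have hδ := h a b (by exact_mod_cast hb.ne')
  rw [Int.cast_natCast, abs_of_pos hb'] at hδ
  rw [abs_sub_div_eq hb', div_le_div_iff₀ (by positivity) hb']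
  nlinarith

lemma one_le_abs_mul_sqrt_two_sub_mul_add (a : ℤ) {b : ℤ} (hb : b ≠ 0) :
    1 ≤ |b * √2 - a| * |b * √2 + a| := by
  have hirr : Irrational (b * √2) := irrational_sqrt_two.intCast_mul hb
  have hnorm : (b * √2 - a) * (b * √2 + a) = ((2 * b ^ 2 - a ^ 2 : ℤ) : ℝ) := by
    push_cast
    linear_combination (b : ℝ) ^ 2 * Real.sq_sqrt (zero_le_two (α := ℝ))
  have hne : (b * √2 - a) * (b * √2 + a) ≠ 0 := by
    refine mul_ne_zero (sub_ne_zero.mpr (hirr.ne_int a)) fun h => hirr.ne_int (-a) ?_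
    rw [Int.cast_neg, eq_neg_of_add_eq_zero_left h]
  rw [hnorm, Int.cast_ne_zero] at hne
  rw [← abs_mul, hnorm]
  exact_mod_cast Int.one_le_abs hne

lemma IsBadlyApproximable.natCast_add {δ x : ℝ} (h : IsBadlyApproximable δ x) (m : ℕ) :
    IsBadlyApproximable δ (m + x) := by
  intro a b hb
  refine (h (a - b * m) b hb).trans_eq ?_
  push_cast
  ring_nf

theorem isBadlyApproximable_sqrt_two : IsBadlyApproximable (1 / 4) √2 := by
  intro a b hb
  have hb1 : (1 : ℝ) ≤ |(b : ℝ)| := by exact_mod_cast Int.one_le_abs hb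
  have hnorm := one_le_abs_mul_sqrt_two_sub_mul_add a hb
  have hconj : |b * √2 + a| ≤ |b * √2 - a| + 3 * |(b : ℝ)| := by
    calc |b * √2 + a| = |2 * √2 * b - (b * √2 - a)| := by ring_nf
      _ ≤ |2 * √2 * (b : ℝ)| + |b * √2 - a| := abs_sub _ _
      _ = 2 * √2 * |(b : ℝ)| + |b * √2 - a| := by rw [abs_mul, abs_of_pos (by positivity)]
      _ ≤ |b * √2 - a| + 3 * |(b : ℝ)| := by
        have : √2 ≤ 3 / 2 := Real.sqrt_le_iff.mpr (by norm_num)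
        nlinarith
  by_contra! hlt
  have hlt' : |b * √2 - a| < 1 / 4 := by nlinarith [abs_nonneg (b * √2 - a)]
  nlinarith [abs_nonneg (b * √2 - a)]

section Unimodular

variable {P N r s : ℤ} {t η : ℝ}

lemma abs_mul_mobius_sub (hD : 0 < N * t + s) (a b : ℤ) :
    |b * ((P * t + r) / (N * t + s)) - a|
      = |((b * P - a * N : ℤ) : ℝ) * t - (a * s - b * r : ℤ)| / (N * t + s) := by
  rw [abs_mul_div_sub hD]
  push_cast
  ring_nf

lemma eq_of_unimodular (hdet : P * s - r * N = 1) (t : ℝ) (a b : ℤ) :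
    (b : ℝ) = (b * P - a * N : ℤ) * (N * t + s)
      - N * ((b * P - a * N : ℤ) * t - (a * s - b * r : ℤ)) := by
  have hdet' : (P : ℝ) * s - r * N = 1 := by exact_mod_cast hdet
  push_cast
  linear_combination -(b : ℝ) * hdet'

/-- In the basis `(P, N)`, `(r, s)` of `ℤ²` the vector `(a, b)` has coordinates `u`, `v`, and the
error of `a / b` at the image of `t` is, up to scaling, that of `u / v` at `t`. -/
lemma IsBadlyApproximable.min_le_mobius (ht : IsBadlyApproximable η t) (ht0 : 0 < t)
    (hdet : P * s - r * N = 1) (hN : 0 < N) (hs : 0 ≤ s) {a b : ℤ} (hab : b * P ≠ a * N) :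
    min (η / 2) (|(b : ℝ)| * t / (2 * (N * t + s)))
      ≤ |(b : ℝ)| * |b * ((P * t + r) / (N * t + s)) - a| := by
  have hN' : (0 : ℝ) < N := by exact_mod_cast hN
  have hs' : (0 : ℝ) ≤ s := by exact_mod_cast hs
  have hD : 0 < N * t + s := by positivity
  have hbD := eq_of_unimodular hdet t a b
  rw [abs_mul_mobius_sub hD]
  set D := N * t + s
  set v := b * P - a * N
  set u := a * s - b * r
  have hv : v ≠ 0 := sub_ne_zero.mpr hab
  have hv1 : (1 : ℝ) ≤ |(v : ℝ)| := by exact_mod_cast Int.one_le_abs hv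
  have hη : η ≤ |(v : ℝ)| * |v * t - u| := ht u v hv
  rw [← mul_div_assoc, le_div_iff₀ hD]
  set w := |v * t - u|
  rcases le_or_gt w (t * |(v : ℝ)| / 2) with hw | hw
  · have hvD : |(v : ℝ)| * D ≤ |(b : ℝ)| + N * w := by
      calc |(v : ℝ)| * D = |b + N * (v * t - u)| := by
            rw [hbD, sub_add_cancel, abs_mul, abs_of_pos hD]
        _ ≤ |(b : ℝ)| + N * w := by
            grw [abs_add_le, abs_mul (N : ℝ), abs_of_pos hN']
    have hNw : N * w ≤ |(v : ℝ)| * D / 2 := by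
      have : N * w ≤ N * (t * |(v : ℝ)| / 2) := by gcongr
      nlinarith [mul_nonneg hs' (abs_nonneg (v : ℝ))]
    calc min (η / 2) (|(b : ℝ)| * t / (2 * D)) * D ≤ η / 2 * D := by gcongr; exact min_le_left _ _
      _ ≤ |(v : ℝ)| * w / 2 * D := by gcongr
      _ = |(v : ℝ)| * D / 2 * w := by ring
      _ ≤ |(b : ℝ)| * w := by gcongr; linarith
  · calc min (η / 2) (|(b : ℝ)| * t / (2 * D)) * D ≤ |(b : ℝ)| * t / (2 * D) * D := by
          gcongr; exact min_le_right _ _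
      _ = |(b : ℝ)| * (t / 2) := by field_simp
      _ ≤ |(b : ℝ)| * w := by gcongr; nlinarith

lemma IsBadlyApproximable.mobius (ht : IsBadlyApproximable η t) (ht1 : 1 ≤ t)
    (hdet : P * s - r * N = 1) (hN : 0 < N) (hs : 0 ≤ s) :
    IsBadlyApproximable (min (η / 2) (1 / (2 * (N * t + s)))) ((P * t + r) / (N * t + s)) := by
  intro a b hb
  have hD : 0 < N * t + s := by positivity
  have hb1 : (1 : ℝ) ≤ |(b : ℝ)| := by exact_mod_cast Int.one_le_abs hb
  by_cases hab : b * P = a * N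
  · have hbu : b = N * (a * s - b * r) := by linear_combination -b * hdet + s * hab
    have hu1 : (1 : ℝ) ≤ |((a * s - b * r : ℤ) : ℝ)| := by
      exact_mod_cast Int.one_le_abs (right_ne_zero_of_mul (hbu ▸ hb))
    rw [abs_mul_mobius_sub hD, sub_eq_zero.mpr hab, Int.cast_zero, zero_mul, zero_sub, abs_neg]
    calc min (η / 2) (1 / (2 * (N * t + s))) ≤ 1 / (2 * (N * t + s)) := min_le_right _ _
      _ ≤ 1 * (1 / (N * t + s)) := by rw [one_mul]; gcongr; linarith
      _ ≤ |(b : ℝ)| * (|((a * s - b * r : ℤ) : ℝ)| / (N * t + s)) := by gcongr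
  · refine le_trans ?_ (ht.min_le_mobius (by linarith) hdet hN hs hab)
    gcongr
    nlinarith

lemma IsBadlyApproximable.min_le_mobius_of_le (ht : IsBadlyApproximable η t) (ht1 : 1 ≤ t)
    (hdet : P * s - r * N = 1) (hN : 0 < N) (hs : 0 ≤ s) (hsN : s ≤ N) {a b : ℤ} (hb : N ≤ |b|)
    (hab : b * P ≠ a * N) :
    min (η / 2) (1 / 4) ≤ |(b : ℝ)| * |b * ((P * t + r) / (N * t + s)) - a| := by
  have hN' : (0 : ℝ) < N := by exact_mod_cast hN
  have hsN' : (s : ℝ) ≤ N := by exact_mod_cast hsN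
  have hb' : (N : ℝ) ≤ |(b : ℝ)| := by exact_mod_cast hb
  refine le_trans ?_ (ht.min_le_mobius (by linarith) hdet hN hs hab)
  refine min_le_min_left _ ?_
  rw [div_le_div_iff₀ (by norm_num) (by positivity)]
  nlinarith

end Unimodular

lemma exists_det_eq_one {P N : ℤ} (hN : 0 < N) (hPN : IsCoprime P N) :
    ∃ r s : ℤ, P * s - r * N = 1 ∧ 0 ≤ s ∧ s < N := by
  obtain ⟨u, v, huv⟩ := hPN
  refine ⟨-(v + P * (u / N)), u % N, ?_, Int.emod_nonneg _ hN.ne', Int.emod_lt_of_pos _ hN⟩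
  linear_combination huv + P * Int.emod_add_mul_ediv u N

/-- The point is the image `(P * t + r) / (N * t + s)` of `t = m + √2`, with `D = N * t + s`. -/
lemma exists_isBadlyApproximable_div_sub {P N : ℤ} (hN : 0 < N) (hPN : IsCoprime P N) (m : ℕ) :
    ∃ D : ℝ, N * m < D ∧ D < N * (m + 3) ∧
      (∃ η > 0, IsBadlyApproximable η (P / N - 1 / (N * D))) ∧
      ∀ a b : ℤ, N ≤ |b| → b * P ≠ a * N →
        1 / 8 ≤ |(b : ℝ)| * |b * (P / N - 1 / (N * D)) - a| := by
  obtain ⟨r, s, hdet, hs0, hsN⟩ := exists_det_eq_one hN hPN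
  have hN' : (0 : ℝ) < N := by exact_mod_cast hN
  have hs0' : (0 : ℝ) ≤ s := by exact_mod_cast hs0
  have hsN' : (s : ℝ) < N := by exact_mod_cast hsN
  have hdet' : (P : ℝ) * s - r * N = 1 := by exact_mod_cast hdet
  have hsqrt_ge : 1 ≤ √2 := Real.one_le_sqrt.mpr one_le_two
  have hsqrt_lt : √2 < 2 := (Real.sqrt_lt' two_pos).mpr (by norm_num)
  have ht1 : 1 ≤ m + √2 := le_add_of_nonneg_of_le m.cast_nonneg hsqrt_ge
  have ht : IsBadlyApproximable (1 / 4) (m + √2) := isBadlyApproximable_sqrt_two.natCast_add m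
  have : 0 < N * (m + √2) + s := by positivity
  have hpoint : P / N - 1 / (N * (N * (m + √2) + s)) =
      (P * (m + √2) + r) / (N * (m + √2) + s) := by
    field_simp
    linear_combination hdet'
  refine ⟨N * (m + √2) + s, by nlinarith, by nlinarith, ?_⟩
  rw [hpoint]
  refine ⟨⟨_, by positivity, ht.mobius ht1 hdet hN hs0⟩, fun a b hb hab => ?_⟩
  exact (by norm_num : (1 / 8 : ℝ) = min (1 / 4 / 2) (1 / 4)).trans_le
    (ht.min_le_mobius_of_le ht1 hdet hN hs0 hsN.le hb hab)

section Folding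

variable {p q k : ℤ} {δ : ℝ}

lemma IsBadlyApproximableBelow.mul_le (h : IsBadlyApproximableBelow q δ (p / q)) (hq : 0 < q)
    (a : ℤ) {b : ℤ} (hb : b ≠ 0) (hbq : |b| < q) :
    δ * q ≤ |(b : ℝ)| * |((b * p - a * q : ℤ) : ℝ)| := by
  have hq' : (0 : ℝ) < q := by exact_mod_cast hq
  have hδ := h a b hb hbq
  rw [abs_mul_div_sub hq', ← mul_div_assoc, le_div_iff₀ hq'] at hδ
  exact_mod_cast hδ

/-- Since `(1 + p q k) (1 - p q k) ≡ 1` modulo `q ^ 2 k`, the numerator `c` of the error of `a / b`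
at `(p q k + 1) / (q ^ 2 k)` is the denominator of a fraction whose error at `p / q` has the same
numerator as that of `a / b`. -/
lemma IsBadlyApproximableBelow.fold_of_le (h : IsBadlyApproximableBelow q δ (p / q)) (hq : 0 < q)
    (hδ : δ ≤ 1) {a b : ℤ} (hqb : q ≤ b) (hkb : q * k ≤ 2 * b) (hbN : b < q ^ 2 * k) :
    δ * (q ^ 2 * k) / 2 ≤ b * |((b * (p * q * k + 1) - a * (q ^ 2 * k) : ℤ) : ℝ)| := by
  have hb : 0 < b := hq.trans_le hqb
  have hk : 0 < k := pos_of_mul_pos_right (hb.trans hbN) (by positivity)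
  have hkb' : (q * k : ℝ) ≤ 2 * b := by exact_mod_cast hkb
  set c := b * (p * q * k + 1) - a * (q ^ 2 * k) with hc
  set e := b * p - a * q with he
  have hce : c - b = q * k * e := by rw [hc, he]; ring
  have hmirror : c * p - (a + k * p * e) * q = e := by rw [hc, he]; ring
  have hc0 : c ≠ 0 := fun hc0 => by
    have hbN' : b = q ^ 2 * k * (a + k * p * e) := by
      linear_combination q * k * hmirror + (1 - q * k * p) * hc0 - hce
    exact hbN.not_ge (Int.le_of_dvd hb ⟨_, hbN'⟩)
  rcases le_or_gt q |c| with hqc | hcq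
  · have hqc' : (q : ℝ) ≤ |(c : ℝ)| := by exact_mod_cast hqc
    calc δ * (q ^ 2 * k) / 2 ≤ 1 * (q ^ 2 * k) / 2 := by gcongr
      _ = (q * k / 2 : ℝ) * q := by ring
      _ ≤ b * |(c : ℝ)| := by gcongr; linarith
  · have hδc : δ * q ≤ |(c : ℝ)| * |(e : ℝ)| := by
      rw [← hmirror]
      exact h.mul_le hq _ hc0 hcq
    have heb : q * k * |e| ≤ 2 * b := by
      calc q * k * |e| = |c - b| := by rw [hce, abs_mul, abs_of_pos (mul_pos hq hk)]
        _ ≤ |c| + |b| := abs_sub _ _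
        _ ≤ 2 * b := by rw [abs_of_pos hb]; linarith
    have heb' : q * k * |(e : ℝ)| ≤ 2 * b := by exact_mod_cast heb
    calc δ * (q ^ 2 * k) / 2 = q * k / 2 * (δ * q) := by ring
      _ ≤ q * k / 2 * (|(c : ℝ)| * |(e : ℝ)|) := by gcongr
      _ = q * k * |(e : ℝ)| * |(c : ℝ)| / 2 := by ring
      _ ≤ 2 * b * |(c : ℝ)| / 2 := by gcongr
      _ = b * |(c : ℝ)| := by ring

lemma mul_abs_sub_le_abs_fold (hq : 0 < q) (hk : 0 < k) {b : ℤ} (hb : 0 ≤ b) (a : ℤ) :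
    q * k * |b * p - a * q| - b ≤ |b * (p * q * k + 1) - a * (q ^ 2 * k)| := by
  calc q * k * |b * p - a * q| - b = |q * k * (b * p - a * q)| - |-b| := by
        rw [abs_mul, abs_of_pos (mul_pos hq hk), abs_neg, abs_of_nonneg hb]
    _ ≤ |q * k * (b * p - a * q) - -b| := abs_sub_abs_le_abs_sub _ _
    _ = |b * (p * q * k + 1) - a * (q ^ 2 * k)| := by ring_nf

lemma IsBadlyApproximableBelow.fold (h : IsBadlyApproximableBelow q δ (p / q)) (hq : 0 < q)
    (hδ : δ ≤ 1) (hδk : 2 ≤ δ * k) {a b : ℤ} (hb : 0 < b) (hbN : b < q ^ 2 * k)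
    (hab : b * p ≠ a * q) :
    δ / 2 ≤ b * |b * (((p * q * k + 1 : ℤ) : ℝ) / ((q ^ 2 * k : ℤ) : ℝ)) - a| := by
  have hk : 0 < k := pos_of_mul_pos_right (hb.trans hbN) (by positivity)
  have hN : (0 : ℝ) < (q ^ 2 * k : ℤ) := by positivity
  have hnum : |b * ((p * q * k + 1 : ℤ) : ℝ) - a * (q ^ 2 * k : ℤ)|
      = |((b * (p * q * k + 1) - a * (q ^ 2 * k) : ℤ) : ℝ)| := by push_cast; rfl
  rw [abs_mul_div_sub hN, hnum, ← mul_div_assoc, le_div_iff₀ hN, div_mul_eq_mul_div]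
  have hb' : (0 : ℝ) < b := by exact_mod_cast hb
  have hc : q * k * |((b * p - a * q : ℤ) : ℝ)| - b
      ≤ |((b * (p * q * k + 1) - a * (q ^ 2 * k) : ℤ) : ℝ)| := by
    exact_mod_cast mul_abs_sub_le_abs_fold hq hk hb.le a
  rcases le_or_gt q b with hqb | hbq
  · rcases le_or_gt (q * k) (2 * b) with hkb | hbk
    · exact_mod_cast h.fold_of_le hq hδ hqb hkb hbN
    · have hqb' : (q : ℝ) ≤ b := by exact_mod_cast hqb
      have hbk' : (2 * b : ℝ) < q * k := by exact_mod_cast hbk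
      have he : (1 : ℝ) ≤ |((b * p - a * q : ℤ) : ℝ)| := by
        exact_mod_cast Int.one_le_abs (sub_ne_zero.mpr hab)
      calc δ * (q ^ 2 * k : ℤ) / 2 ≤ 1 * (q ^ 2 * k : ℤ) / 2 := by gcongr
        _ = q * (q * k * 1 - q * k / 2) := by push_cast; ring
        _ ≤ b * (q * k * |((b * p - a * q : ℤ) : ℝ)| - b) := by gcongr <;> linarith
        _ ≤ _ := by gcongr
  · have hbq' : (b : ℝ) < q := by exact_mod_cast hbq
    have he := h.mul_le hq a hb.ne' (by rwa [abs_of_pos hb])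
    rw [abs_of_pos hb'] at he
    calc δ * (q ^ 2 * k : ℤ) / 2 = q * k * (δ * q) - q ^ 2 * (δ * k) / 2 := by push_cast; ring
      _ ≤ q * k * (b * |((b * p - a * q : ℤ) : ℝ)|) - q ^ 2 * 2 / 2 := by gcongr
      _ ≤ q * k * (b * |((b * p - a * q : ℤ) : ℝ)|) - b ^ 2 := by gcongr; nlinarith
      _ = b * (q * k * |((b * p - a * q : ℤ) : ℝ)| - b) := by ring
      _ ≤ _ := by gcongr

end Folding

/-- For denominators `b ≤ δ q` this is the triangle inequality, and for the larger ones it holds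
because `p / q` differs from `a / b`. -/
lemma IsBadlyApproximable.isBadlyApproximableBelow {δ z : ℝ} {p q : ℤ}
    (hz : IsBadlyApproximable (2 * δ) z) (hδ0 : 0 ≤ δ) (hδ : δ ≤ 1) (hq : 0 < q)
    (hpq : IsCoprime p q) (hzpq : |z - p / q| ≤ 1 / (q : ℝ) ^ 2) :
    IsBadlyApproximableBelow q δ (p / q) := by
  intro a b hb hbq
  have hq' : (0 : ℝ) < q := by exact_mod_cast hq
  rcases le_or_gt |(b : ℝ)| (δ * q) with hbδ | hbδ
  · have hclose : (b : ℝ) ^ 2 * |z - p / q| ≤ δ := by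
      calc (b : ℝ) ^ 2 * |z - p / q| = |(b : ℝ)| ^ 2 * |z - p / q| := by rw [sq_abs]
        _ ≤ (δ * q) ^ 2 * (1 / (q : ℝ) ^ 2) := by gcongr
        _ = δ * δ := by field_simp
        _ ≤ δ := mul_le_of_le_one_left hδ0 hδ
    linarith [hz a b hb, abs_mul_abs_mul_sub_le a b z (p / q)]
  · have hne : b * p - a * q ≠ 0 := fun h => by
      have hqb : q ∣ b := hpq.symm.dvd_of_dvd_mul_right ⟨a, by linear_combination h⟩
      exact hb (Int.eq_zero_of_abs_lt_dvd hqb hbq)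
    have hone : (1 : ℝ) ≤ |(b : ℝ) * p - a * q| := by exact_mod_cast Int.one_le_abs hne
    rw [abs_mul_div_sub hq', ← mul_div_assoc, le_div_iff₀ hq']
    exact hbδ.le.trans (le_mul_of_one_le_right (abs_nonneg _) hone)

lemma IsBadlyApproximable.exists_isCoprime_abs_sub_le {η z : ℝ} (hz : IsBadlyApproximable η z)
    (hη : 0 < η) (M : ℕ) :
    ∃ (p : ℤ) (q : ℕ), M ≤ q ∧ 0 < q ∧ IsCoprime p (q : ℤ) ∧ |z - p / q| ≤ 1 / (q : ℝ) ^ 2 := by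
  obtain ⟨n, hn⟩ := exists_nat_gt (M / η)
  obtain ⟨x, hx, hxn⟩ := Real.exists_rat_abs_sub_le_and_den_le z n.succ_pos
  have hden : (0 : ℝ) < x.den := by exact_mod_cast x.den_pos
  have hxn' : (x.den : ℝ) ≤ n + 1 := by exact_mod_cast hxn
  rw [Rat.cast_def, Nat.cast_add_one] at hx
  refine ⟨x.num, x.den, ?_, x.den_pos, ?_, hx.trans ?_⟩
  · have hη_le := (hz.div_sq_le x.num x.den_pos).trans hx
    rw [div_le_div_iff₀ (by positivity) (by positivity)] at hη_le
    rw [div_lt_iff₀ hη] at hn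
    have : (M : ℝ) ≤ x.den := by nlinarith
    exact_mod_cast this
  · rw [Int.isCoprime_iff_nat_coprime, Int.natAbs_natCast]
    exact x.reduced
  · rw [sq]
    gcongr
    linarith

lemma isCoprime_mul_add_one_sq_mul (p q k : ℤ) : IsCoprime (p * q * k + 1) (q ^ 2 * k) :=
  ⟨1 - p * q * k, p ^ 2 * k, by ring⟩

lemma abs_add_one_div_sub_one_div_mul {N D : ℝ} (hN : 0 < N) (hD : 1 < D) (x : ℝ) :
    |x + 1 / N - 1 / (N * D) - x| = (1 - 1 / D) * (1 / N) := by
  have hD0 : 0 < D := by linarith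
  have : 0 < 1 - 1 / D := by rwa [sub_pos, div_lt_one hD0]
  rw [← abs_of_pos (by positivity : 0 < (1 - 1 / D) * (1 / N))]
  congr 1
  field_simp
  ring

section Perturbation

variable {p q k P N : ℤ} {δ : ℝ}

lemma IsBadlyApproximableBelow.fold_sub (h : IsBadlyApproximableBelow q δ (p / q)) (hq : 0 < q)
    (hδ : δ ≤ 1) (hδk : 2 ≤ δ * k) (hP : P = p * q * k + 1) (hN : N = q ^ 2 * k) {ε : ℝ}
    (hε0 : 0 ≤ ε) (hε : N ^ 2 * ε ≤ δ / 4) {a b : ℤ} (hb : 0 < b) (hbN : b < N)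
    (hab : b * p ≠ a * q) : δ / 4 ≤ b * |b * (P / N - ε) - a| := by
  have hb' : (0 : ℝ) < b := by exact_mod_cast hb
  have hbN' : (b : ℝ) < N := by exact_mod_cast hbN
  have hfold := h.fold hq hδ hδk hb (hN ▸ hbN) hab
  rw [← hP, ← hN] at hfold
  have htri := abs_mul_abs_mul_sub_le a b (P / N) (P / N - ε)
  rw [sub_sub_cancel, abs_of_nonneg hε0, abs_of_pos hb'] at htri
  have hnear : (b : ℝ) ^ 2 * ε ≤ N ^ 2 * ε := by gcongr
  linarith

/-- The point `z` is `P / N - 1 / (N D)` with `D ≈ N m`, so that its distances to `p / q` and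
`P / N` are slightly less than `1 / N` and about `1 / (N ^ 2 m)`. -/
lemma IsBadlyApproximableBelow.exists_isBadlyApproximable
    (h : IsBadlyApproximableBelow q δ (p / q)) (hq : 0 < q) (hδ0 : 0 < δ) (hδ : δ ≤ 1 / 2)
    (hδk : 2 ≤ δ * k) {m : ℕ} (hδm : 4 ≤ δ * m) (hP : P = p * q * k + 1) (hN : N = q ^ 2 * k) :
    ∃ z : ℝ, (∃ η > 0, IsBadlyApproximable η z) ∧
      |z - p / q| < 1 / N ∧ (1 - 1 / (N * m)) * (1 / N) < |z - p / q| ∧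
      1 / (N ^ 2 * (m + 3)) < |z - P / N| ∧
      ∀ a b : ℤ, 0 < b → b * p ≠ a * q → b * P ≠ a * N → δ / 4 ≤ b * |b * z - a| := by
  have hk : (0 : ℝ) < k := pos_of_mul_pos_right (two_pos.trans_le hδk) hδ0.le
  have hm : (0 : ℝ) < m := pos_of_mul_pos_right (four_pos.trans_le hδm) hδ0.le
  have hN0 : 0 < N := by
    rw [hN]
    exact mul_pos (pow_pos hq 2) (by exact_mod_cast hk)
  have hN1 : (1 : ℝ) ≤ N := by exact_mod_cast hN0
  have hPN : (P / N : ℝ) = p / q + 1 / N := by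
    rw [hP, hN]
    push_cast
    field_simp
  have hcop : IsCoprime P N := hP ▸ hN ▸ isCoprime_mul_add_one_sq_mul p q k
  obtain ⟨D, hDm, hDm3, hη, htail⟩ := exists_isBadlyApproximable_div_sub hN0 hcop m
  have hD1 : 1 < D := by nlinarith
  have hdist := abs_add_one_div_sub_one_div_mul (by positivity : (0 : ℝ) < N) hD1 (p / q)
  rw [← hPN] at hdist
  refine ⟨_, hη, ?_, ?_, ?_, fun a b hb hab hab' => ?_⟩
  · rw [hdist]
    exact mul_lt_of_lt_one_left (by positivity) (by rw [sub_lt_self_iff]; positivity)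
  · rw [hdist]
    gcongr
  · rw [sub_sub_cancel_left, abs_neg, abs_of_pos (by positivity), sq, mul_assoc]
    gcongr
  · rcases le_or_gt N b with hNb | hbN
    · have htail := htail a b (by rwa [abs_of_pos hb]) hab'
      rw [abs_of_pos (by positivity : (0 : ℝ) < b)] at htail
      linarith
    · refine h.fold_sub hq (by linarith) hδk hP hN (by positivity) ?_ hb hbN hab
      calc (N : ℝ) ^ 2 * (1 / (N * D)) ≤ N ^ 2 * (1 / (N * (N * m))) := by gcongr
        _ = 1 / (m : ℝ) := by field_simp
        _ ≤ δ / 4 := by rw [div_le_div_iff₀ hm four_pos]; linarith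

end Perturbation

lemma norm_coe_addCircle_inv_le (x : ℝ) (a : ℤ) (q : ℝ) :
    ‖(x : AddCircle q⁻¹)‖ ≤ |x - a / q| := by
  have hcoe : ((x - a / q : ℝ) : AddCircle q⁻¹) = x := by
    rw [AddCircle.coe_sub, div_eq_mul_inv, ← zsmul_eq_mul, AddCircle.coe_zsmul,
      AddCircle.coe_period, smul_zero, sub_zero]
  rw [← hcoe]
  exact QuotientAddGroup.norm_mk_le_norm

/-- The distance to the nearest fraction of denominator `q` is the norm in `ℝ / q⁻¹ℤ`. -/
lemma isOpen_forall_int_lt_abs_sub_div (c q : ℝ) :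
    IsOpen {x : ℝ | ∀ a : ℤ, c < |x - a / q|} := by
  suffices h : {x : ℝ | ∀ a : ℤ, c < |x - a / q|} = {x : ℝ | c < ‖(x : AddCircle q⁻¹)‖} by
    rw [h]
    exact isOpen_lt continuous_const (by fun_prop)
  ext x
  refine ⟨fun h => ?_, fun h a => h.trans_le (norm_coe_addCircle_inv_le x a q)⟩
  rw [mem_ofPred_eq, AddCircle.norm_eq, ← div_eq_mul_inv]
  exact h _

section Approximation

variable {Ψ ω : ℝ → ℝ}

lemma SquareDivisibility.eq_one_div (hsq : SquareDivisibility Ψ) {n : ℕ} (hn : 0 < n) :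
    ∃ k : ℕ, 0 < k ∧ Ψ n = 1 / ((n : ℝ) ^ 2 * k) := by
  obtain ⟨k, hk, hΨ⟩ := hsq n hn
  exact ⟨k, hk, by rw [← hΨ, one_div, inv_inv]⟩

lemma SquareDivisibility.pos_s4 (hsq : SquareDivisibility Ψ) {n : ℕ} (hn : 0 < n) : 0 < Ψ n := by
  obtain ⟨k, hk, hΨ⟩ := hsq.eq_one_div hn
  rw [hΨ]
  positivity

lemma SquareDivisibility.eventually_eq_one_div (hsq : SquareDivisibility Ψ)
    (hlim : Tendsto (fun q : ℕ => (q : ℝ) ^ 2 * Ψ q) atTop (nhds 0)) (K : ℝ) :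
    ∀ᶠ n : ℕ in atTop, ∃ k : ℕ, K < k ∧ Ψ n = 1 / ((n : ℝ) ^ 2 * k) := by
  have hsmall : ∀ᶠ n : ℕ in atTop, (n : ℝ) ^ 2 * Ψ n < 1 / max K 1 :=
    hlim.eventually_lt_const (by positivity)
  filter_upwards [hsmall, eventually_gt_atTop 0] with n hn hn0
  obtain ⟨k, hk, hΨ⟩ := hsq.eq_one_div hn0
  refine ⟨k, ?_, hΨ⟩
  have hk' : (n : ℝ) ^ 2 * Ψ n = 1 / k := by
    rw [hΨ]
    field_simp
  rw [hk', one_div_lt_one_div (by positivity) (by positivity)] at hn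
  exact (le_max_left _ _).trans_lt hn

lemma sq_mul_apply_mul_le (hmono : AntitoneOn (fun q : ℕ => (q : ℝ) ^ 2 * Ψ q) (Ioi 0)) {q j : ℕ}
    (hq : 0 < q) (hj : 0 < j) : (j : ℝ) ^ 2 * Ψ (q * j : ℕ) ≤ Ψ q := by
  have hle : ((q * j : ℕ) : ℝ) ^ 2 * Ψ (q * j : ℕ) ≤ (q : ℝ) ^ 2 * Ψ q :=
    hmono hq (Nat.mul_pos hq hj) (Nat.le_mul_of_pos_right q hj)
  rw [Nat.cast_mul, mul_pow, mul_assoc] at hle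
  exact_mod_cast le_of_mul_le_mul_left hle (by positivity)

lemma lt_abs_sub_of_mul_eq (hmono : AntitoneOn (fun q : ℕ => (q : ℝ) ^ 2 * Ψ q) (Ioi 0))
    {p a : ℤ} {q b : ℕ} {z : ℝ} (hq : 0 < q) (hb : 0 < b) (hpq : IsCoprime p (q : ℤ))
    (hab : b * p = a * q) (hΨ : 0 < Ψ b) (hω : 0 < ω b) (hz : (1 - ω q) * Ψ q < |z - p / q|)
    (hz4 : Ψ q / 4 < |z - p / q|) : (1 - ω b) * Ψ b < |z - a / b| := by
  have hfrac : (a / b : ℝ) = p / q := by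
    rw [div_eq_div_iff (by positivity) (by positivity), mul_comm (p : ℝ)]
    exact_mod_cast hab.symm
  rw [hfrac]
  obtain ⟨j, rfl⟩ : q ∣ b := Int.natCast_dvd_natCast.mp <|
    hpq.symm.dvd_of_dvd_mul_right ⟨a, by rw [hab, mul_comm]⟩
  have hj : 0 < j := Nat.pos_of_mul_pos_left hb
  obtain rfl | hj2 : j = 1 ∨ 2 ≤ j := by lia
  · rwa [mul_one]
  · have hj2' : (2 : ℝ) ≤ j := by exact_mod_cast hj2
    have hquarter : 4 * Ψ (q * j : ℕ) ≤ Ψ q := by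
      calc 4 * Ψ (q * j : ℕ) ≤ (j : ℝ) ^ 2 * Ψ (q * j : ℕ) := by gcongr; nlinarith
        _ ≤ Ψ q := sq_mul_apply_mul_le hmono hq hj
    linarith [mul_pos hω hΨ]

lemma lt_abs_sub_of_le_mul (z : ℝ) {δ : ℝ} {a : ℤ} {b : ℕ} (hb : 0 < b) (hΨ : 0 < Ψ b)
    (hω : 0 < ω b) (hδ : (b : ℝ) ^ 2 * Ψ b < δ) (hz : δ ≤ b * |b * z - a|) :
    (1 - ω b) * Ψ b < |z - a / b| := by
  have hb' : (0 : ℝ) < b := by exact_mod_cast hb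
  have hlt : Ψ b < |z - a / b| := by
    rw [abs_sub_div_eq hb', lt_div_iff₀ hb']
    nlinarith
  nlinarith [mul_pos hω hΨ]

lemma exists_isBadlyApproximable_abs_sub_lt
    (hmono : AntitoneOn (fun q : ℕ => (q : ℝ) ^ 2 * Ψ q) (Ioi 0)) (hsq : SquareDivisibility Ψ)
    {p : ℤ} {q k N m B : ℕ} {δ : ℝ} (hpq : IsCoprime p (q : ℤ))
    (hbelow : IsBadlyApproximableBelow q δ (p / (q : ℤ))) (hδ0 : 0 < δ) (hδ : δ ≤ 1 / 2)
    (hδk : 2 ≤ δ * k) (hδm : 4 ≤ δ * m) (hN : N = q ^ 2 * k) (hΨq : Ψ q = 1 / N)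
    (hΨN : Ψ N = 1 / ((N : ℝ) ^ 2 * (m + 3))) (hωq : 1 / (N * m) ≤ ω q) (hBq : B ≤ q)
    (hB : ∀ b : ℕ, B ≤ b → 0 < b ∧ 0 < ω b ∧ (b : ℝ) ^ 2 * Ψ b < δ / 4) :
    ∃ z : ℝ, (∃ η > 0, IsBadlyApproximable η z) ∧ |z - p / q| < Ψ q ∧
      ∀ b : ℕ, B ≤ b → ∀ a : ℤ, (1 - ω b) * Ψ b < |z - a / b| := by
  have hq : 0 < q := (hB q hBq).1
  have hk : 0 < k := by
    have : (0 : ℝ) < k := pos_of_mul_pos_right (two_pos.trans_le hδk) hδ0.le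
    exact_mod_cast this
  have : (2 : ℝ) ≤ m := by nlinarith
  have hqN : q ≤ N := by
    rw [hN]
    nlinarith [Nat.mul_pos hq hk]
  have hN0 : 0 < N := hq.trans_le hqN
  have hN1 : (1 : ℝ) ≤ N := by exact_mod_cast hN0
  have hcop : IsCoprime (p * q * k + 1) (N : ℤ) := by
    have := isCoprime_mul_add_one_sq_mul p q k
    rw [hN]
    exact_mod_cast this
  obtain ⟨z, hη, hlt, hgt, hgtN, hfar⟩ := hbelow.exists_isBadlyApproximable
    (k := k) (N := N) (by exact_mod_cast hq) hδ0 hδ (by exact_mod_cast hδk) hδm rfl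
    (by rw [hN]; push_cast; rfl)
  simp only [Int.cast_natCast] at hlt hgt hgtN
  rw [← hΨq] at hlt hgt
  rw [← hΨN] at hgtN
  have hΨq0 := hsq.pos_s4 hq
  refine ⟨z, hη, hlt, fun b hb a => ?_⟩
  obtain ⟨hb0, hω, hδb⟩ := hB b hb
  have hΨb := hsq.pos_s4 hb0
  by_cases hab : b * p = a * q
  · refine lt_abs_sub_of_mul_eq hmono hq hb0 hpq hab hΨb hω (hgt.trans_le' ?_) (hgt.trans_le' ?_)
    · gcongr
    · have : 1 / (N * m : ℝ) ≤ 1 / 2 := by gcongr; nlinarith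
      nlinarith
  by_cases habN : b * (p * q * k + 1) = a * N
  · have hΨN0 := hsq.pos_s4 hN0
    refine lt_abs_sub_of_mul_eq hmono hN0 hb0 hcop habN hΨb hω (hgtN.trans_le' ?_)
      (hgtN.trans_le' (by linarith))
    nlinarith [mul_pos (hB N (hBq.trans hqN)).2.1 hΨN0]
  · have hfar := hfar a b (by exact_mod_cast hb0) hab habN
    exact lt_abs_sub_of_le_mul z hb0 hΨb hω hδb (by exact_mod_cast hfar)

lemma SquareDivisibility.eventually_pos_of_le (hsq : SquareDivisibility Ψ) {C : ℝ} (hC : 0 < C)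
    (hbig : ∀ᶠ q : ℕ in atTop, C * Ψ (1 / Ψ q) / Ψ q ≤ ω q) : ∀ᶠ q : ℕ in atTop, 0 < ω q := by
  filter_upwards [hbig, eventually_gt_atTop 0] with q hq hq0
  obtain ⟨k, hk, hΨ⟩ := hsq.eq_one_div hq0
  have hinv : 1 / Ψ q = (q ^ 2 * k : ℕ) := by
    rw [hΨ, one_div_one_div]
    push_cast
    rfl
  have := hsq.pos_s4 hq0
  have : 0 < Ψ (1 / Ψ q) := hinv ▸ hsq.pos_s4 (by positivity)
  exact hq.trans_lt' (by positivity)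

lemma one_div_mul_le_of_apply_one_div_le {C : ℝ} {q N m : ℕ} (hN : 0 < N) (hm : 0 < m)
    (hC : 3 ≤ (C - 1) * m) (hΨq : Ψ q = 1 / N) (hΨN : Ψ N = 1 / ((N : ℝ) ^ 2 * (m + 3)))
    (hbig : C * Ψ (1 / Ψ q) / Ψ q ≤ ω q) : 1 / (N * m) ≤ ω q := by
  rw [hΨq, one_div_one_div, hΨN] at hbig
  calc 1 / (N * m) ≤ C / (N * (m + 3) : ℝ) := by
        rw [div_le_div_iff₀ (by positivity) (by positivity)]
        have : (0 : ℝ) < N := by exact_mod_cast hN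
        nlinarith
    _ = C * (1 / ((N : ℝ) ^ 2 * (m + 3))) / (1 / N) := by field_simp
    _ ≤ ω q := hbig

/-- Here `k = 1 / (q ^ 2 Ψ q)`, so that `N = q ^ 2 k = 1 / Ψ q`, and `m = 1 / (N ^ 2 Ψ N) - 3`. -/
lemma IsBadlyApproximableBelow.exists_isBadlyApproximable_of_le {C : ℝ} (hC : 1 < C)
    (hmono : AntitoneOn (fun q : ℕ => (q : ℝ) ^ 2 * Ψ q) (Ioi 0)) (hsq : SquareDivisibility Ψ)
    {p : ℤ} {q B : ℕ} {δ : ℝ} (hδ0 : 0 < δ) (hδ : δ ≤ 1 / 2) (hpq : IsCoprime p (q : ℤ))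
    (hbelow : IsBadlyApproximableBelow q δ (p / (q : ℤ))) (hBq : B ≤ q)
    (hB : ∀ b : ℕ, B ≤ b → 0 < b ∧ 0 < ω b ∧ (b : ℝ) ^ 2 * Ψ b < δ / 4)
    (hquot : ∀ b : ℕ, B ≤ b →
      ∃ k : ℕ, 3 + 4 / δ + 3 / (C - 1) < k ∧ Ψ b = 1 / ((b : ℝ) ^ 2 * k))
    (hbig : C * Ψ (1 / Ψ q) / Ψ q ≤ ω q) :
    ∃ z : ℝ, (∃ η > 0, IsBadlyApproximable η z) ∧ |z - p / q| < Ψ q ∧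
      ∀ b : ℕ, B ≤ b → ∀ a : ℤ, (1 - ω b) * Ψ b < |z - a / b| := by
  have hC' : 0 < C - 1 := by linarith
  have hδ4 : 0 < 4 / δ := by positivity
  have hC3 : 0 < 3 / (C - 1) := by positivity
  have hq : 0 < q := (hB q hBq).1
  obtain ⟨k, hk, hΨq⟩ := hquot q hBq
  have hk0 : 0 < k := by
    have : (0 : ℝ) < k := by linarith
    exact_mod_cast this
  have hqN : q ≤ q ^ 2 * k := by nlinarith [Nat.mul_pos hq hk0]
  obtain ⟨l, hl, hΨN⟩ := hquot (q ^ 2 * k) (hBq.trans hqN)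
  obtain ⟨m, rfl⟩ : ∃ m, l = m + 3 := by
    have : (3 : ℝ) < l := by linarith
    exact ⟨l - 3, (Nat.sub_add_cancel (by exact_mod_cast this.le)).symm⟩
  push_cast at hl
  have hm0 : 0 < m := by
    have : (0 : ℝ) < m := by linarith
    exact_mod_cast this
  have hδk : 4 ≤ δ * k := (div_le_iff₀' hδ0).mp (by linarith)
  have hδm : 4 ≤ δ * m := (div_le_iff₀' hδ0).mp (by linarith)
  have hCm : 3 ≤ (C - 1) * m := (div_le_iff₀' hC').mp (by linarith)
  have hΨq' : Ψ q = 1 / (q ^ 2 * k : ℕ) := by rw [hΨq]; push_cast; rfl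
  have hΨN' : Ψ (q ^ 2 * k : ℕ) = 1 / (((q ^ 2 * k : ℕ) : ℝ) ^ 2 * (m + 3)) := by
    rw [hΨN]; push_cast; rfl
  exact exists_isBadlyApproximable_abs_sub_lt hmono hsq hpq hbelow hδ0 hδ (by linarith) hδm rfl
    hΨq' hΨN' (one_div_mul_le_of_apply_one_div_le (by positivity) hm0 hCm hΨq' hΨN' hbig) hBq hB

lemma IsBadlyApproximable.exists_near {C : ℝ} (hC : 1 < C)
    (hlim : Tendsto (fun q : ℕ => (q : ℝ) ^ 2 * Ψ q) atTop (nhds 0))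
    (hmono : AntitoneOn (fun q : ℕ => (q : ℝ) ^ 2 * Ψ q) (Ioi 0)) (hsq : SquareDivisibility Ψ)
    (hbig : ∀ᶠ q : ℕ in atTop, C * Ψ (1 / Ψ q) / Ψ q ≤ ω q)
    {η z : ℝ} (hz : IsBadlyApproximable η z) (hη : 0 < η) :
    ∃ B : ℕ, ∀ M : ℕ, ∃ (p : ℤ) (q : ℕ) (z' : ℝ), M ≤ q ∧ 0 < q ∧ |z' - p / q| < Ψ q ∧ z' ≠ z ∧
      |z' - z| < 2 / q ∧ (∃ η' > 0, IsBadlyApproximable η' z') ∧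
      ∀ b : ℕ, B ≤ b → ∀ a : ℤ, (1 - ω b) * Ψ b < |z' - a / b| := by
  obtain ⟨δ, hδ0, hδ, hzδ⟩ : ∃ δ > 0, δ ≤ 1 / 2 ∧ IsBadlyApproximable (2 * δ) z := by
    refine ⟨min (1 / 2) (η / 2), by positivity, min_le_left _ _, hz.mono ?_⟩
    linarith [min_le_right (1 / 2) (η / 2)]
  have hlarge : ∀ᶠ b : ℕ in atTop, 0 < b ∧ 0 < ω b ∧ (b : ℝ) ^ 2 * Ψ b < δ / 4 :=
    (eventually_gt_atTop 0).and <| (hsq.eventually_pos_of_le (by linarith) hbig).and <|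
      hlim.eventually_lt_const (by positivity)
  obtain ⟨B, hB⟩ := eventually_atTop.mp <| hlarge.and <| hbig.and <|
    hsq.eventually_eq_one_div hlim (3 + 4 / δ + 3 / (C - 1))
  refine ⟨B, fun M => ?_⟩
  obtain ⟨p, q, hMq, hq, hpq, hzpq⟩ :=
    hzδ.exists_isCoprime_abs_sub_le (by positivity) (max M B)
  have hBq : B ≤ q := (le_max_right _ _).trans hMq
  have hbelow : IsBadlyApproximableBelow q δ (p / (q : ℤ)) :=
    hzδ.isBadlyApproximableBelow hδ0.le (by linarith) (by exact_mod_cast hq) hpq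
      (by simpa only [Int.cast_natCast] using hzpq)
  obtain ⟨z', hη', hz', havoid⟩ := hbelow.exists_isBadlyApproximable_of_le hC hmono hsq hδ0 hδ hpq
    hBq (fun b hb => (hB b hb).1) (fun b hb => (hB b hb).2.2) (hB q hBq).2.1
  have hq' : (1 : ℝ) ≤ q := by exact_mod_cast hq
  have hΨq : Ψ q < δ / 4 / (q : ℝ) ^ 2 := by
    rw [lt_div_iff₀ (by positivity), mul_comm]
    exact (hB q hBq).1.2.2
  refine ⟨p, q, z', (le_max_left _ _).trans hMq, hq, hz', ?_, ?_, hη', havoid⟩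
  · rintro rfl
    have := hzδ.div_sq_le p hq
    have : δ / 4 / (q : ℝ) ^ 2 < 2 * δ / (q : ℝ) ^ 2 := by gcongr; linarith
    linarith
  · have hsmall : δ / 4 / (q : ℝ) ^ 2 ≤ 1 / (q : ℝ) ^ 2 := by gcongr; linarith
    have hinv : 1 / (q : ℝ) ^ 2 ≤ 1 / q := by gcongr; nlinarith
    calc |z' - z| ≤ |z' - p / q| + |p / q - z| := abs_sub_le _ _ _
      _ < 2 * (1 / q) := by rw [abs_sub_comm (p / q : ℝ)]; linarith
      _ = 2 / q := by ring

/-- The badly approximable numbers that satisfy strictly, from `Q` on, the lower bound defining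
`E(Ψ, ω)`. This set is not closed; the Baire category theorem is applied to its closure. -/
def AvoidSet (Ψ ω : ℝ → ℝ) (Q : ℕ) : Set ℝ :=
  {z | (∃ δ > 0, IsBadlyApproximable δ z) ∧
    ∀ q : ℕ, Q ≤ q → ∀ p : ℤ, (1 - ω q) * Ψ q < |z - p / q|}

/-- The numbers within distance `Ψ q` of a fraction of some denominator `q ≥ M`: an open set.
The intersection of these sets over all `M` lies in `W(Ψ)`. -/
def ApproxSet (Ψ : ℝ → ℝ) (M : ℕ) : Set ℝ :=
  {x | ∃ (p : ℤ) (q : ℕ), M ≤ q ∧ 0 < q ∧ |x - p / q| < Ψ q}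

lemma isOpen_approxSet (M : ℕ) : IsOpen (ApproxSet Ψ M) := by
  simp only [ApproxSet, ofPred_exists, ofPred_and]
  refine isOpen_iUnion fun p => isOpen_iUnion fun q => ?_
  exact isOpen_const.inter (isOpen_const.inter (isOpen_lt (by fun_prop) continuous_const))

lemma iInter_approxSet_subset_wSet : ⋂ M, ApproxSet Ψ M ⊆ WSet Ψ := by
  intro x hx hfin
  obtain ⟨M, hM⟩ := (hfin.image Prod.snd).bddAbove
  obtain ⟨p, q, hMq, hq, hpq⟩ := mem_iInter.mp hx (M + 1)
  exact (hM ⟨(p, q), ⟨hq, hpq.le⟩, rfl⟩).not_gt hMq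

lemma le_abs_sub_of_mem_closure_avoidSet {Q : ℕ} {x : ℝ} (hx : x ∈ closure (AvoidSet Ψ ω Q))
    {q : ℕ} (hq : Q ≤ q) (p : ℤ) : (1 - ω q) * Ψ q ≤ |x - p / q| := by
  have hclosed : IsClosed {y : ℝ | (1 - ω q) * Ψ q ≤ |y - p / q|} :=
    isClosed_le continuous_const (by fun_prop)
  exact closure_minimal (fun y hy => (hy.2 q hq p).le) hclosed hx

lemma closure_avoidSet_inter_subset_eSet (Q : ℕ) :
    closure (AvoidSet Ψ ω Q) ∩ ⋂ M, ApproxSet Ψ M ⊆ ESet Ψ ω :=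
  fun _ hx => ⟨iInter_approxSet_subset_wSet hx.2, Q,
    fun _ hq p => le_abs_sub_of_mem_closure_avoidSet hx.1 hq p⟩

lemma exists_nonempty_avoidSet {C : ℝ} (hC : 0 < C)
    (hlim : Tendsto (fun q : ℕ => (q : ℝ) ^ 2 * Ψ q) atTop (nhds 0)) (hsq : SquareDivisibility Ψ)
    (hbig : ∀ᶠ q : ℕ in atTop, C * Ψ (1 / Ψ q) / Ψ q ≤ ω q) :
    ∃ Q : ℕ, (AvoidSet Ψ ω Q).Nonempty := by
  obtain ⟨Q, hQ⟩ := eventually_atTop.mp <| (eventually_gt_atTop 0).and <|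
    (hsq.eventually_pos_of_le hC hbig).and <|
      hlim.eventually_lt_const (show (0 : ℝ) < 1 / 4 by norm_num)
  refine ⟨Q, √2, ⟨1 / 4, by norm_num, isBadlyApproximable_sqrt_two⟩, fun b hb a => ?_⟩
  obtain ⟨hb0, hω, hΨ⟩ := hQ b hb
  refine lt_abs_sub_of_le_mul √2 hb0 (hsq.pos_s4 hb0) hω hΨ ?_
  simpa only [Int.cast_natCast, Nat.abs_cast] using
    isBadlyApproximable_sqrt_two a b (by exact_mod_cast hb0.ne')

/-- Large denominators are handled by the construction of nearby points, and the finitely many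
remaining ones by openness. -/
lemma accPt_avoidSet_inter_approxSet {C : ℝ} (hC : 1 < C)
    (hlim : Tendsto (fun q : ℕ => (q : ℝ) ^ 2 * Ψ q) atTop (nhds 0))
    (hmono : AntitoneOn (fun q : ℕ => (q : ℝ) ^ 2 * Ψ q) (Ioi 0)) (hsq : SquareDivisibility Ψ)
    (hbig : ∀ᶠ q : ℕ in atTop, C * Ψ (1 / Ψ q) / Ψ q ≤ ω q)
    {Q : ℕ} {z : ℝ} (hz : z ∈ AvoidSet Ψ ω Q) (M : ℕ) :
    AccPt z (𝓟 (AvoidSet Ψ ω Q ∩ ApproxSet Ψ M)) := by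
  obtain ⟨⟨η, hη, hzη⟩, hzQ⟩ := hz
  obtain ⟨B, hB⟩ := hzη.exists_near hC hlim hmono hsq hbig hη
  have hnear : ∃ᶠ y in nhds z, y ≠ z ∧ (∃ δ > 0, IsBadlyApproximable δ y) ∧ y ∈ ApproxSet Ψ M ∧
      ∀ b : ℕ, B ≤ b → ∀ a : ℤ, (1 - ω b) * Ψ b < |y - a / b| := by
    refine Metric.nhds_basis_ball.frequently_iff.mpr fun ε hε => ?_
    obtain ⟨n, hn⟩ := exists_nat_gt (2 / ε)
    obtain ⟨p, q, y, hMq, hq, hpq, hne, hyz, hbad, havoid⟩ := hB (max M n)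
    have hnq : (n : ℝ) ≤ q := by exact_mod_cast (le_max_right _ _).trans hMq
    refine ⟨y, hyz.trans_le ?_, hne, hbad, ⟨p, q, (le_max_left _ _).trans hMq, hq, hpq⟩, havoid⟩
    exact (div_le_comm₀ hε (by positivity)).mp (hn.le.trans hnq)
  have hfin : ∀ᶠ y : ℝ in nhds z, ∀ b : ℕ, b < B → Q ≤ b → ∀ a : ℤ, (1 - ω b) * Ψ b < |y - a / b| :=
    (eventually_all_finite (finite_lt_nat B)).mpr fun b _ =>
      eventually_imp_distrib_left.mpr fun hb =>
        (isOpen_forall_int_lt_abs_sub_div _ _).mem_nhds (hzQ b hb)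
  refine accPt_iff_frequently.mpr ((hnear.and_eventually hfin).mono ?_)
  rintro y ⟨⟨hne, hbad, happrox, hlarge⟩, hsmall⟩
  refine ⟨hne, ⟨hbad, fun b hb => ?_⟩, happrox⟩
  exact (lt_or_ge b B).elim (fun hbB => hsmall b hbB hb) (hlarge b)

end Approximation

theorem ESet_nonempty_uncountable_of_sqDiv_general {Ψ ω : ℝ → ℝ} {C : ℝ} (hC : 1 < C)
    (hΨlim : Tendsto (fun q : ℕ => (q : ℝ) ^ 2 * Ψ q) atTop (nhds 0))
    (hmono : AntitoneOn (fun q : ℕ => (q : ℝ) ^ 2 * Ψ q) (Ioi 0))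
    (hsq : SquareDivisibility Ψ)
    (hbig : ∀ᶠ q : ℕ in atTop, C * Ψ (1 / Ψ q) / Ψ q ≤ ω q) :
    (ESet Ψ ω).Nonempty ∧ ¬ (ESet Ψ ω).Countable := by
  obtain ⟨Q, hQ⟩ := exists_nonempty_avoidSet (by linarith) hΨlim hsq hbig
  have huncount : ¬ (ESet Ψ ω).Countable := fun hcount =>
    not_countable_closure_inter_iInter hQ isOpen_approxSet
      (fun _ hz => accPt_avoidSet_inter_approxSet hC hΨlim hmono hsq hbig hz)
      (hcount.mono (closure_avoidSet_inter_subset_eSet Q))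
  exact ⟨nonempty_iff_ne_empty.mpr fun h => huncount (h ▸ countable_empty), huncount⟩

lemma sq_mul_apply_one_div_mul_le {Ψ : ℝ → ℝ}
    (hmono : AntitoneOn (fun q : ℝ => q ^ 2 * Ψ q) (Ioi 0)) {c y : ℝ} (hc : 1 ≤ c) (hy : 0 < y) :
    c ^ 2 * Ψ (1 / y) ≤ Ψ (1 / (c * y)) := by
  have hx : 0 < 1 / (c * y) := by positivity
  have hle : (1 / y) ^ 2 * Ψ (1 / y) ≤ (1 / (c * y)) ^ 2 * Ψ (1 / (c * y)) :=
    hmono hx (one_div_pos.mpr hy) (one_div_le_one_div_of_le hy (le_mul_of_one_le_left hy.le hc))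
  have hscale : (1 / y) ^ 2 = (1 / (c * y)) ^ 2 * c ^ 2 := by field_simp
  rw [hscale, mul_assoc] at hle
  exact le_of_mul_le_mul_left hle (by positivity)

/-- **Theorem.** Suppose `q²Ψ(q) → 0`, `ω(q) → 0`, `q ↦ q²Ψ(q)` is non-increasing on `(0,∞)`,
`ω` maps `(0,∞)` into `(0,1)`, and `Ψ` satisfies the square divisibility condition.  If
`ω(q) ≥ (45/(16Ψ(q)))·Ψ(1/(8Ψ(q)))` for all sufficiently large `q`, then `E(Ψ,ω)` is
non-empty; moreover it is uncountable. -/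
theorem ESet_nonempty_uncountable_of_sqDiv (Ψ ω : ℝ → ℝ)
    (hΨpos : ∀ q : ℝ, 0 < q → 0 < Ψ q)
    (hωmem : ∀ q : ℝ, 0 < q → ω q ∈ Set.Ioo (0 : ℝ) 1)
    (hΨlim : Filter.Tendsto (fun q : ℝ => q ^ 2 * Ψ q) Filter.atTop (nhds 0))
    (hωlim : Filter.Tendsto ω Filter.atTop (nhds 0))
    (hmono : AntitoneOn (fun q : ℝ => q ^ 2 * Ψ q) (Set.Ioi 0))
    (hsq : SquareDivisibility Ψ)
    (hbig : ∀ᶠ q : ℝ in Filter.atTop,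
      45 / (16 * Ψ q) * Ψ (1 / (8 * Ψ q)) ≤ ω q) :
    (ESet Ψ ω).Nonempty ∧ ¬ (ESet Ψ ω).Countable := by
  refine ESet_nonempty_uncountable_of_sqDiv_general (C := 180) (by norm_num)
    (hΨlim.comp tendsto_natCast_atTop_atTop)
    (hmono.comp_MonotoneOn (Nat.mono_cast.monotoneOn _)
      fun _ hn => mem_Ioi.mpr (Nat.cast_pos.mpr hn)) hsq ?_
  filter_upwards [tendsto_natCast_atTop_atTop.eventually hbig, eventually_gt_atTop 0] with q hq hq0
  have hΨq := hsq.pos_s4 hq0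
  calc 180 * Ψ (1 / Ψ q) / Ψ q = 45 / (16 * Ψ q) * (8 ^ 2 * Ψ (1 / Ψ q)) := by field_simp; ring
    _ ≤ 45 / (16 * Ψ q) * Ψ (1 / (8 * Ψ q)) := by
      gcongr
      exact sq_mul_apply_one_div_mul_le hmono (by norm_num) hΨq
    _ ≤ ω q := hq
end

section
/- Let Ψ : (0,∞) → (0,∞) and suppose there exist functions d : (0,∞) → (0,∞) and e : (0,∞) → (0,∞) such that Ψ(q) = d(q)/e(q) for all q and d(q), e(q) ∈ ℕ for all q ∈ ℕ. If ω : (0,∞) → (0,∞) satisfies ω(q) < ((1 − ω(q·e(q)))/Ψ(q)) · Ψ(q·e(q)) for all sufficiently large q, then E(Ψ,ω) = ∅. -/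
/-!
A point `x ∈ E(Ψ, ω)` lies, for arbitrarily large `q`, in an interval `[p/q - Ψ q, p/q + Ψ q]`, at
distance at most `ω q * Ψ q` from one of its endpoints. If `Ψ q = k / l`, both endpoints are
fractions with denominator `q * l`, so `x` is also at distance at least
`(1 - ω (q * l)) * Ψ (q * l)` from each of them. Smallness of `ω` makes these two bounds
incompatible.
-/

open Filter Set

theorem finite_setOf_abs_sub_div_le (x r : ℝ) {q : ℝ} (hq : 0 < q) :
    {p : ℤ | |x - p / q| ≤ r}.Finite := by
  refine (finite_Icc ⌈(x - r) * q⌉ ⌊(x + r) * q⌋).subset fun p (hp : |x - p / q| ≤ r) ↦ ?_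
  obtain ⟨hlower, hupper⟩ := abs_sub_le_iff.mp hp
  refine ⟨Int.ceil_le.mpr ((le_div_iff₀ hq).mp ?_), Int.le_floor.mpr ((div_le_iff₀ hq).mp ?_)⟩ <;>
    linarith

theorem frequently_exists_abs_sub_div_le_of_mem_WSet {Ψ : ℝ → ℝ} {x : ℝ} (hx : x ∈ WSet Ψ) :
    ∃ᶠ q : ℕ in atTop, 0 < q ∧ ∃ p : ℤ, |x - p / q| ≤ Ψ q := by
  rw [Nat.frequently_atTop_iff_infinite]
  refine fun hfin ↦ hx (Finite.of_finite_fibers Prod.snd (hfin.subset ?_) ?_)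
  · rintro _ ⟨⟨p, q⟩, ⟨hq, hpq⟩, rfl⟩
    exact ⟨hq, p, hpq⟩
  · rintro _ ⟨⟨_, q⟩, ⟨hq, -⟩, rfl⟩
    refine ((finite_setOf_abs_sub_div_le x (Ψ q) (Nat.cast_pos.mpr hq)).image (·, q)).subset ?_
    rintro ⟨p, _⟩ ⟨⟨-, hpq⟩, rfl⟩
    exact ⟨p, hpq, rfl⟩

theorem abs_le_sub_of_le_abs_sub_of_le_abs_add {G : Type*} [AddCommGroup G] [LinearOrder G]
    [IsOrderedAddMonoid G] {y a δ : G} (hy : |y| ≤ a) (hsub : δ ≤ |y - a|) (hadd : δ ≤ |y + a|) :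
    |y| ≤ a - δ := by
  obtain ⟨hneg, hpos⟩ := abs_le.mp hy
  rw [abs_of_nonpos (sub_nonpos.mpr hpos), neg_sub] at hsub
  rw [abs_of_nonneg (neg_le_iff_add_nonneg.mp hneg)] at hadd
  exact abs_le'.mpr ⟨le_sub_comm.mp hsub, by rwa [le_sub_iff_add_le, neg_add_le_iff_le_add]⟩

theorem abs_sub_div_le_sub_of_forall_le {x δ : ℝ} {p k : ℤ} {q l : ℕ} (hq : 0 < q) (hl : 0 < l)
    (hx : |x - p / q| ≤ k / l) (hδ : ∀ m : ℤ, δ ≤ |x - m / (q * l : ℕ)|) :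
    |x - p / q| ≤ k / l - δ := by
  have hright : x - (p * l + k * q : ℤ) / (q * l : ℕ) = x - p / q - k / l := by
    push_cast; field_simp; ring
  have hleft : x - (p * l - k * q : ℤ) / (q * l : ℕ) = x - p / q + k / l := by
    push_cast; field_simp; ring
  exact abs_le_sub_of_le_abs_sub_of_le_abs_add hx (hright ▸ hδ _) (hleft ▸ hδ _)

theorem frequently_le_mul_of_mem_ESet {Ψ ω : ℝ → ℝ} {x : ℝ} (hx : x ∈ ESet Ψ ω) :
    ∃ᶠ q : ℕ in atTop, ∀ (k : ℤ) (l : ℕ), 0 < l → Ψ q = k / l →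
      (1 - ω (q * l)) * Ψ (q * l) ≤ ω q * Ψ q := by
  obtain ⟨hW, Q, hQ⟩ := hx
  refine ((frequently_exists_abs_sub_div_le_of_mem_WSet hW).and_eventually
    (eventually_ge_atTop Q)).mono ?_
  rintro q ⟨⟨hq, p, hpq⟩, hQq⟩ k l hl hΨ
  have hfar := hQ (q * l) (hQq.trans (Nat.le_mul_of_pos_right q hl))
  have hupper := abs_sub_div_le_sub_of_forall_le hq hl (hΨ ▸ hpq) hfar
  have hlower := hQ q hQq p
  rw [← hΨ] at hupper
  push_cast at hupper
  linarith

theorem ESet_eq_empty_of_rational_general {Ψ ω d e : ℝ → ℝ}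
    (hΨpos : ∀ q : ℕ, 0 < q → 0 < Ψ q)
    (hepos : ∀ q : ℕ, 0 < q → 0 < e q)
    (hΨde : ∀ q : ℕ, 0 < q → Ψ q = d q / e q)
    (hdnat : ∀ q : ℕ, 0 < q → ∃ k : ℕ, d q = k)
    (henat : ∀ q : ℕ, 0 < q → ∃ l : ℕ, e q = l)
    (hsmall : ∀ᶠ q : ℕ in atTop, ω q < (1 - ω (q * e q)) / Ψ q * Ψ (q * e q)) :
    ESet Ψ ω = ∅ := by
  refine eq_empty_of_forall_notMem fun x hx ↦ ?_
  obtain ⟨q, hle, hlt, hq⟩ := ((frequently_le_mul_of_mem_ESet hx).and_eventually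
    (hsmall.and (eventually_gt_atTop 0))).exists
  obtain ⟨k, hk⟩ := hdnat q hq
  obtain ⟨l, hl⟩ := henat q hq
  have hlpos : 0 < l := Nat.cast_pos.mp (hl ▸ hepos q hq)
  have hΨ : Ψ q = (k : ℤ) / l := by rw [hΨde q hq, hk, hl, Int.cast_natCast]
  rw [hl, div_mul_eq_mul_div, lt_div_iff₀ (hΨpos q hq)] at hlt
  exact hlt.not_ge (hle k l hlpos hΨ)

/-- **Theorem.** Suppose `Ψ = d/e` on `(0,∞)` where `d(q), e(q)` are positive integers for
every `q ∈ ℕ`.  If `ω : (0,∞) → (0,∞)` satisfies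
`ω(q) < ((1 − ω(q·e(q)))/Ψ(q))·Ψ(q·e(q))` for all sufficiently large `q`, then `E(Ψ,ω) = ∅`. -/
theorem ESet_eq_empty_of_rational (Ψ ω d e : ℝ → ℝ)
    (hΨpos : ∀ q : ℝ, 0 < q → 0 < Ψ q)
    (hωpos : ∀ q : ℝ, 0 < q → 0 < ω q)
    (hdpos : ∀ q : ℝ, 0 < q → 0 < d q)
    (hepos : ∀ q : ℝ, 0 < q → 0 < e q)
    (hΨde : ∀ q : ℝ, 0 < q → Ψ q = d q / e q)
    (hdnat : ∀ q : ℕ, 0 < q → ∃ k : ℕ, d (q : ℝ) = (k : ℝ))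
    (henat : ∀ q : ℕ, 0 < q → ∃ k : ℕ, e (q : ℝ) = (k : ℝ))
    (hsmall : ∀ᶠ q : ℝ in Filter.atTop,
      ω q < (1 - ω (q * e q)) / Ψ q * Ψ (q * e q)) :
    ESet Ψ ω = ∅ := by
  exact ESet_eq_empty_of_rational_general (fun q hq ↦ hΨpos q (mod_cast hq))
    (fun q hq ↦ hepos q (mod_cast hq)) (fun q hq ↦ hΨde q (mod_cast hq)) hdnat henat
    hsmall.natCast_atTop
end

section
/- For any function ω : (0,∞) → (0,∞) and any real number τ > 2 there exists a non-increasing function Ψ : (0,∞) → (0,∞) such that lim_{q→∞} (−log Ψ(q))/log q = τ and E(Ψ,ω) ≠ ∅. -/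
/-!
Let `d q` be the distance from `x` to the nearest fraction of denominator `q`. For a non-increasing
`φ` put `Ψ t = min (φ t) (min_{1 ≤ i ≤ t} d i)`, which is non-increasing with `Ψ q ≤ d q` for every
`q ≥ 1`. If `d q ≤ φ q`, an index `k ≤ q` minimising `d` on `[1, q]` satisfies `Ψ k = d k`; when
`d` is positive and `φ` tends to `0`, infinitely many such `q` produce infinitely many such `k`, so
`x ∈ E(Ψ, 0)`. It remains to find `x` for which `d q ≥ q ^ (-τ) / 10` always and `d q ≤ q ^ (-τ)`
infinitely often, since then `Ψ`, formed with `φ t = t ^ (-τ)`, has exact order `t ^ (-τ)`.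

Such an `x` is the limit of an increasing sequence of fractions `p n / q n` with
`p (n + 1) * q n - p n * q (n + 1) = 1` and `q (n + 1)` comparable to `(q n) ^ (τ - 1)`. It lies
within `2 / (q n * q (n + 1))` of `p n / q n`. If `q n ≤ Q < q (n + 1)`, a fraction `P / Q` is at
distance at least `1 / (Q * q (n + 1))` from `p (n + 1) / q (n + 1)`, and `x` is within half of that
distance of `p (n + 1) / q (n + 1)`, so `|x - P / Q| ≥ 1 / (2 * Q * q (n + 1))`.
-/

open Filter Set

open Asymptotics Topology

lemma ESet_mono {Ψ ω ω' : ℝ → ℝ} (hΨ : ∀ q : ℝ, 0 < q → 0 ≤ Ψ q)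
    (h : ∀ q : ℝ, 0 < q → ω q ≤ ω' q) : ESet Ψ ω ⊆ ESet Ψ ω' := by
  rintro x ⟨hxW, Q, hQ⟩
  refine ⟨hxW, max Q 1, fun q hq p => le_trans ?_ (hQ q (le_of_max_le_left hq) p)⟩
  have hq0 : (0 : ℝ) < q := Nat.cast_pos.2 (le_of_max_le_right hq)
  exact mul_le_mul_of_nonneg_right (sub_le_sub_left (h q hq0) 1) (hΨ q hq0)

/-- The distance from `x` to the nearest fraction of denominator `q`. For `q = 0`, where every
fraction is `0` by the convention on division, this is `|x|`. -/
noncomputable def fracDist (x : ℝ) (q : ℕ) : ℝ :=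
  |x - round (q * x) / q|

lemma fracDist_le (x : ℝ) (q : ℕ) (p : ℤ) : fracDist x q ≤ |x - p / q| := by
  rcases q.eq_zero_or_pos with rfl | hq
  · simp [fracDist]
  · have hq0 : (0 : ℝ) < q := Nat.cast_pos.2 hq
    have scale (z : ℤ) : |x - z / q| = |q * x - z| / q := by
      rw [← abs_of_pos hq0, ← abs_div, abs_of_pos hq0, sub_div, mul_div_cancel_left₀ _ hq0.ne']
    rw [fracDist, scale, scale]
    exact div_le_div_of_nonneg_right (round_le _ _) hq0.le

lemma le_fracDist_iff {x r : ℝ} {q : ℕ} : r ≤ fracDist x q ↔ ∀ p : ℤ, r ≤ |x - p / q| :=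
  ⟨fun h p => h.trans (fracDist_le x q p), fun h => h _⟩

lemma mem_WSet_of_frequently_fracDist_le {Ψ : ℝ → ℝ} {x : ℝ}
    (h : ∃ᶠ q : ℕ in atTop, fracDist x q ≤ Ψ q) : x ∈ WSet Ψ := by
  refine Set.Infinite.of_image Prod.snd (Set.infinite_of_forall_exists_gt fun N => ?_)
  obtain ⟨q, hNq, hq⟩ := frequently_atTop'.1 h N
  exact ⟨q, ⟨(round (q * x), q), ⟨N.zero_le.trans_lt hNq, hq⟩, rfl⟩, hNq⟩

/-- The function `t ↦ min (φ t) (min_{1 ≤ i ≤ t} d i)`, where `d i` is the distance from `x` to the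
nearest fraction of denominator `i`: for non-increasing `φ` it is the largest non-increasing
function bounded by `φ` and, at positive integers, by `d`. -/
noncomputable def approxEnvelope (φ : ℝ → ℝ) (x t : ℝ) : ℝ :=
  (Finset.Icc 1 ⌊t⌋₊).fold min (φ t) (fracDist x)

section approxEnvelope

variable {φ : ℝ → ℝ} {x t : ℝ}

lemma le_approxEnvelope_iff {r : ℝ} : r ≤ approxEnvelope φ x t ↔
    r ≤ φ t ∧ ∀ i : ℕ, 0 < i → (i : ℝ) ≤ t → r ≤ fracDist x i := by
  simp only [approxEnvelope, Finset.le_fold_min, Finset.mem_Icc, Nat.one_le_iff_ne_zero,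
    Nat.pos_iff_ne_zero, and_imp]
  refine and_congr_right fun _ => forall₂_congr fun i hi => ?_
  rw [Nat.le_floor_iff' hi]

lemma approxEnvelope_le : approxEnvelope φ x t ≤ φ t :=
  (le_approxEnvelope_iff.1 le_rfl).1

lemma approxEnvelope_le_fracDist {i : ℕ} (hi : 0 < i) (hit : (i : ℝ) ≤ t) :
    approxEnvelope φ x t ≤ fracDist x i :=
  (le_approxEnvelope_iff.1 le_rfl).2 i hi hit

lemma approxEnvelope_pos (hφ : 0 < φ t) (hx : ∀ q : ℕ, 0 < q → 0 < fracDist x q) :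
    0 < approxEnvelope φ x t :=
  (Finset.lt_fold_min _).2 ⟨hφ, fun i hi => hx i (Finset.mem_Icc.1 hi).1⟩

lemma antitoneOn_approxEnvelope {s : Set ℝ} (hφ : AntitoneOn φ s) :
    AntitoneOn (approxEnvelope φ x) s := fun _ ha _ hb hab =>
  le_approxEnvelope_iff.2 ⟨approxEnvelope_le.trans (hφ ha hb hab),
    fun _ hi hia => approxEnvelope_le_fracDist hi (hia.trans hab)⟩

lemma le_approxEnvelope {ψ : ℝ → ℝ} (hψ : AntitoneOn ψ (Ioi 0))
    (hx : ∀ q : ℕ, 0 < q → ψ q ≤ fracDist x q) (ht : 0 < t) (hψφ : ψ t ≤ φ t) :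
    ψ t ≤ approxEnvelope φ x t :=
  le_approxEnvelope_iff.2
    ⟨hψφ, fun i hi hit => (hψ (mem_Ioi.2 (Nat.cast_pos.2 hi)) ht hit).trans (hx i hi)⟩

lemma approxEnvelope_isTheta {c : ℝ} (hc : 0 < c) (hφ : AntitoneOn φ (Ioi 0))
    (hφ0 : ∀ t : ℝ, 0 < t → 0 < φ t) (hx : ∀ q : ℕ, 0 < q → c * φ q ≤ fracDist x q) :
    approxEnvelope φ x =Θ[atTop] φ := by
  set C := min c 1
  have hC : 0 < C := lt_min hc one_pos
  have hlow (t : ℝ) (ht : 0 < t) : C * φ t ≤ approxEnvelope φ x t :=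
    le_approxEnvelope (ψ := fun t => C * φ t)
      (fun a ha b hb hab => mul_le_mul_of_nonneg_left (hφ ha hb hab) hC.le)
      (fun q hq => (mul_le_mul_of_nonneg_right (min_le_left c 1)
        (hφ0 q (Nat.cast_pos.2 hq)).le).trans (hx q hq))
      ht (mul_le_of_le_one_left (hφ0 t ht).le (min_le_right c 1))
  refine ⟨IsBigO.of_bound 1 ?_, IsBigO.of_bound C⁻¹ ?_⟩ <;>
    filter_upwards [eventually_gt_atTop 0] with t ht <;>
    rw [Real.norm_of_nonneg ((mul_pos hC (hφ0 t ht)).le.trans (hlow t ht)),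
      Real.norm_of_nonneg (hφ0 t ht).le]
  · simpa using approxEnvelope_le
  · exact (le_inv_mul_iff₀ hC).2 (hlow t ht)

lemma frequently_fracDist_le_approxEnvelope (hφ : AntitoneOn φ (Ioi 0))
    (hφ0 : Tendsto φ atTop (𝓝 0)) (hx : ∀ q : ℕ, 0 < q → 0 < fracDist x q)
    (hfreq : ∃ᶠ q : ℕ in atTop, fracDist x q ≤ φ q) :
    ∃ᶠ q : ℕ in atTop, fracDist x q ≤ approxEnvelope φ x q := by
  refine frequently_atTop.2 fun N => ?_
  have hsmall : ∀ᶠ q : ℕ in atTop, ∀ i ∈ Finset.Icc 1 N, φ q < fracDist x i :=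
    (eventually_all_finset _).2 fun i hi =>
      (hφ0.comp tendsto_natCast_atTop_atTop).eventually_lt_const (hx i (Finset.mem_Icc.1 hi).1)
  obtain ⟨q, hqφ, hqN, hq⟩ := (hfreq.and_eventually (hsmall.and (eventually_ge_atTop 1))).exists
  obtain ⟨k, hk, hmin⟩ := (Finset.Icc 1 q).exists_min_image (fracDist x) ⟨q, by simpa using hq⟩
  obtain ⟨hk0, hkq⟩ := Finset.mem_Icc.1 hk
  have hkφ : fracDist x k ≤ φ q := (hmin q (Finset.right_mem_Icc.2 hq)).trans hqφ
  refine ⟨k, ?_, le_approxEnvelope_iff.2 ⟨hkφ.trans ?_, fun i hi hik => hmin i ?_⟩⟩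
  · by_contra! hkN
    exact (hqN k (Finset.mem_Icc.2 ⟨hk0, hkN.le⟩)).not_ge hkφ
  · exact hφ (mem_Ioi.2 (Nat.cast_pos.2 hk0)) (mem_Ioi.2 (Nat.cast_pos.2 hq)) (Nat.cast_le.2 hkq)
  · exact Finset.mem_Icc.2 ⟨hi, (Nat.cast_le.1 hik).trans hkq⟩

lemma mem_ESet_zero_approxEnvelope (hφ : AntitoneOn φ (Ioi 0)) (hφ0 : Tendsto φ atTop (𝓝 0))
    (hx : ∀ q : ℕ, 0 < q → 0 < fracDist x q)
    (hfreq : ∃ᶠ q : ℕ in atTop, fracDist x q ≤ φ q) : x ∈ ESet (approxEnvelope φ x) 0 := by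
  refine ⟨mem_WSet_of_frequently_fracDist_le
    (frequently_fracDist_le_approxEnvelope hφ hφ0 hx hfreq), 1, fun q hq p => ?_⟩
  simpa using (approxEnvelope_le_fracDist hq le_rfl).trans (fracDist_le x q p)

end approxEnvelope

lemma one_div_mul_le_abs_div_sub_div {a c : ℤ} {b d : ℕ} (hab : IsCoprime a (b : ℤ)) (hd : 0 < d)
    (hdb : d < b) : 1 / ((d : ℝ) * b) ≤ |(a : ℝ) / b - c / d| := by
  have hd0 : (0 : ℝ) < d := Nat.cast_pos.2 hd
  have hb0 : (0 : ℝ) < b := Nat.cast_pos.2 (hd.trans hdb)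
  have hne : a * d - c * b ≠ 0 := fun h => by
    have hdvd : (b : ℤ) ∣ a * d := ⟨c, by linarith⟩
    exact hdb.not_ge
      (Nat.le_of_dvd hd (Int.natCast_dvd_natCast.1 (hab.symm.dvd_of_dvd_mul_left hdvd)))
  have hnum : (1 : ℝ) ≤ |(a * d - c * b : ℝ)| := by exact_mod_cast Int.one_le_abs hne
  have hsub : (a : ℝ) / b - c / d = (a * d - c * b) / (d * b) := by field_simp
  rw [hsub, abs_div, abs_of_pos (mul_pos hd0 hb0)]
  gcongr

lemma one_div_two_mul_le_fracDist {x : ℝ} {a : ℤ} {b : ℕ} (hab : IsCoprime a (b : ℤ))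
    (hx : |x - a / b| ≤ 1 / (2 * (b : ℝ) ^ 2)) {q : ℕ} (hq : 0 < q) (hqb : q < b) :
    1 / (2 * ((q : ℝ) * b)) ≤ fracDist x q := by
  refine le_fracDist_iff.2 fun p => ?_
  have hq0 : (0 : ℝ) < q := Nat.cast_pos.2 hq
  have hqb' : (q : ℝ) ≤ b := Nat.cast_le.2 hqb.le
  have hb0 : (0 : ℝ) < b := hq0.trans_le hqb'
  have hfar : 1 / ((q : ℝ) * b) ≤ |(a : ℝ) / b - p / q| :=
    one_div_mul_le_abs_div_sub_div hab hq hqb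
  have hclose : |x - a / b| ≤ 1 / (2 * ((q : ℝ) * b)) := hx.trans (by rw [sq]; gcongr)
  have htri := abs_sub_le ((a : ℝ) / b) x (p / q)
  rw [abs_sub_comm _ x] at htri
  have hhalf : 1 / ((q : ℝ) * b) = 1 / (2 * (q * b)) + 1 / (2 * (q * b)) := by
    field_simp; norm_num
  linarith

/-- A sequence of fractions `p n / q n`, consecutive ones having determinant `1`, whose denominators
start at `1` and grow at least by a factor `4` at each step. The growth of the denominators
controls how well the limit of the fractions can be approximated. -/
structure IsFareyChain (p : ℕ → ℤ) (q : ℕ → ℕ) : Prop where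
  den_zero : q 0 = 1
  det : ∀ n, p (n + 1) * q n - p n * q (n + 1) = 1
  four_mul_den_le : ∀ n, 4 * q n ≤ q (n + 1)

lemma exists_det_eq_one_of_isCoprime {a : ℤ} {b : ℕ} (hb : 0 < b) (hab : IsCoprime a (b : ℤ))
    {T : ℝ} (hT : 0 ≤ T) :
    ∃ (a' : ℤ) (b' : ℕ), a' * b - a * b' = 1 ∧ T ≤ b' ∧ (b' : ℝ) < T + b := by
  obtain ⟨u, v, huv⟩ := hab
  obtain ⟨m, ⟨hTm, hmT⟩, -⟩ :=
    existsUnique_add_zsmul_mem_Ico (Nat.cast_pos.2 hb : (0 : ℝ) < b) (-u) T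
  rw [zsmul_eq_mul] at hTm hmT
  have hcast : ((-u + m * b : ℤ) : ℝ) = -u + m * b := by push_cast; rfl
  obtain ⟨b', hb'⟩ := Int.eq_ofNat_of_zero_le (a := -u + m * b)
    (by exact_mod_cast hcast ▸ hT.trans hTm)
  have hb'R : (b' : ℝ) = -u + m * b := by rw [← hcast, hb', Int.cast_natCast]
  exact ⟨v + m * a, b', by rw [← hb']; linear_combination huv, hb'R ▸ hTm, hb'R ▸ hmT⟩

lemma exists_isFareyChain {F : ℕ → ℝ} (hF : ∀ k : ℕ, 4 * (k : ℝ) ≤ F k) :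
    ∃ (p : ℕ → ℤ) (q : ℕ → ℕ), IsFareyChain p q ∧
      ∀ n, F (q n) ≤ q (n + 1) ∧ (q (n + 1) : ℝ) < F (q n) + q n := by
  let S := {s : ℤ × ℕ // 0 < s.2 ∧ IsCoprime s.1 (s.2 : ℤ)}
  have hstep (s : S) : ∃ s' : S, s'.1.1 * s.1.2 - s.1.1 * s'.1.2 = 1 ∧ 4 * s.1.2 ≤ s'.1.2 ∧
      F s.1.2 ≤ s'.1.2 ∧ (s'.1.2 : ℝ) < F s.1.2 + s.1.2 := by
    obtain ⟨⟨a, b⟩, hb, hab⟩ := s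
    obtain ⟨a', b', hdet, hle, hlt⟩ := exists_det_eq_one_of_isCoprime hb hab
      ((by positivity : (0 : ℝ) ≤ 4 * b).trans (hF b))
    have hbb' : 4 * b ≤ b' := by exact_mod_cast (hF b).trans hle
    have hcop : IsCoprime a' (b' : ℤ) := ⟨b, -a, by linear_combination hdet⟩
    exact ⟨⟨(a', b'), by dsimp only at hb ⊢; omega, hcop⟩, hdet, hbb', hle, hlt⟩
  choose next hdet hfour hle hlt using hstep
  let s (n : ℕ) : S := next^[n] ⟨(0, 1), one_pos, isCoprime_one_right⟩
  have hs (n : ℕ) : s (n + 1) = next (s n) := Function.iterate_succ_apply' _ _ _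
  refine ⟨fun n => (s n).1.1, fun n => (s n).1.2, ⟨rfl, fun n => ?_, fun n => ?_⟩, fun n => ?_⟩ <;>
    simp only [hs]
  exacts [hdet (s n), hfour (s n), ⟨hle (s n), hlt (s n)⟩]

namespace IsFareyChain

variable {p : ℕ → ℤ} {q : ℕ → ℕ}

lemma den_pos (h : IsFareyChain p q) (n : ℕ) : 0 < q n := by
  induction n with
  | zero => simp [h.den_zero]
  | succ n ih => have := h.four_mul_den_le n; omega

lemma strictMono_den (h : IsFareyChain p q) : StrictMono q :=
  strictMono_nat_of_lt_succ fun n => by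
    have := h.den_pos n
    have := h.four_mul_den_le n
    omega

lemma isCoprime (h : IsFareyChain p q) (n : ℕ) : IsCoprime (p n) (q n : ℤ) :=
  ⟨-q (n + 1), p (n + 1), by linear_combination h.det n⟩

lemma div_succ (h : IsFareyChain p q) (n : ℕ) :
    (p (n + 1) : ℝ) / q (n + 1) = p n / q n + 1 / (q n * q (n + 1)) := by
  have hq : (q n : ℝ) ≠ 0 := Nat.cast_ne_zero.2 (h.den_pos n).ne'
  have hq' : (q (n + 1) : ℝ) ≠ 0 := Nat.cast_ne_zero.2 (h.den_pos (n + 1)).ne'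
  have hdet : (p (n + 1) * q n - p n * q (n + 1) : ℝ) = 1 := by exact_mod_cast h.det n
  field_simp
  linarith

lemma monotone_div (h : IsFareyChain p q) : Monotone fun n => (p n : ℝ) / q n :=
  monotone_nat_of_le_succ fun n => by
    rw [h.div_succ]
    exact le_add_of_nonneg_right (by positivity)

lemma antitone_div_add (h : IsFareyChain p q) :
    Antitone fun n => (p n : ℝ) / q n + 2 / (q n * q (n + 1)) :=
  antitone_nat_of_succ_le fun n => by
    have hpos (m : ℕ) : (0 : ℝ) < q m := Nat.cast_pos.2 (h.den_pos m)
    have hgrow : 2 * (q n : ℝ) ≤ q (n + 2) := by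
      have := h.four_mul_den_le n
      have : 4 * q (n + 1) ≤ q (n + 2) := h.four_mul_den_le (n + 1)
      exact_mod_cast (by omega : 2 * q n ≤ q (n + 2))
    have htail : 2 / ((q (n + 1) : ℝ) * q (n + 2)) ≤ 1 / (q n * q (n + 1)) := by
      rw [div_le_div_iff₀ (mul_pos (hpos _) (hpos _)) (mul_pos (hpos _) (hpos _))]
      nlinarith [hpos (n + 1)]
    calc (p (n + 1) : ℝ) / q (n + 1) + 2 / (q (n + 1) * q (n + 2))
        ≤ p n / q n + 1 / (q n * q (n + 1)) + 1 / (q n * q (n + 1)) := by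
          rw [h.div_succ]; gcongr
      _ = p n / q n + 2 / (q n * q (n + 1)) := by ring

lemma exists_abs_sub_div_le (h : IsFareyChain p q) :
    ∃ x : ℝ, ∀ n, |x - p n / q n| ≤ 2 / (q n * q (n + 1)) := by
  have hmem := h.monotone_div.ciSup_mem_iInter_Icc_of_antitone h.antitone_div_add
    fun n => le_add_of_nonneg_right (by positivity)
  refine ⟨⨆ n, (p n : ℝ) / q n, fun n => ?_⟩
  obtain ⟨hlo, hhi⟩ := mem_iInter.1 hmem n
  rw [abs_of_nonneg (sub_nonneg.2 hlo)]
  exact sub_le_iff_le_add'.2 hhi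

lemma one_div_le_fracDist (h : IsFareyChain p q) {x : ℝ}
    (hx : ∀ n, |x - p n / q n| ≤ 2 / (q n * q (n + 1))) {n Q : ℕ} (hQ : 0 < Q) (hQn : Q < q n) :
    1 / (2 * ((Q : ℝ) * q n)) ≤ fracDist x Q := by
  have hpos (m : ℕ) : (0 : ℝ) < q m := Nat.cast_pos.2 (h.den_pos m)
  have hgrow : 4 * (q n : ℝ) ≤ q (n + 1) := by exact_mod_cast h.four_mul_den_le n
  refine one_div_two_mul_le_fracDist (h.isCoprime n) ((hx n).trans ?_) hQ hQn
  calc 2 / ((q n : ℝ) * q (n + 1)) ≤ 2 / (q n * (4 * q n)) := by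
        have := hpos n
        gcongr
    _ = 1 / (2 * (q n : ℝ) ^ 2) := by field_simp; norm_num

lemma exists_den_le_lt_den_succ (h : IsFareyChain p q) {Q : ℕ} (hQ : 0 < Q) :
    ∃ n, q n ≤ Q ∧ Q < q (n + 1) := by
  obtain ⟨n, hn, hn'⟩ := h.strictMono_den.exists_between_of_tendsto_atTop
    h.strictMono_den.tendsto_atTop (x := Q + 1) (by rw [h.den_zero]; omega)
  exact ⟨n, Nat.lt_succ_iff.1 hn, hn'⟩

end IsFareyChain

lemma exists_frequently_fracDist_le_of_monotone {F : ℕ → ℝ} (hmono : Monotone F)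
    (hF : ∀ k : ℕ, 4 * (k : ℝ) ≤ F k) :
    ∃ x : ℝ, (∃ᶠ q : ℕ in atTop, fracDist x q ≤ 2 / (q * F q)) ∧
      ∀ q : ℕ, 0 < q → 1 / (2 * (q * (F q + q))) ≤ fracDist x q := by
  obtain ⟨p, q, h, hbounds⟩ := exists_isFareyChain hF
  obtain ⟨x, hx⟩ := h.exists_abs_sub_div_le
  refine ⟨x, h.strictMono_den.tendsto_atTop.frequently (Frequently.of_forall fun n => ?_),
    fun Q hQ => ?_⟩
  · have hq0 : (0 : ℝ) < q n := Nat.cast_pos.2 (h.den_pos n)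
    have hF0 : 0 < F (q n) := by linarith [hF (q n)]
    refine (fracDist_le x (q n) (p n)).trans ((hx n).trans ?_)
    gcongr
    exact (hbounds n).1
  · obtain ⟨n, hnQ, hQn⟩ := h.exists_den_le_lt_den_succ hQ
    have : (0 : ℝ) < Q := Nat.cast_pos.2 hQ
    have : (0 : ℝ) < q (n + 1) := Nat.cast_pos.2 (h.den_pos (n + 1))
    refine le_trans ?_ (h.one_div_le_fracDist hx hQ hQn)
    gcongr
    calc (q (n + 1) : ℝ) ≤ F (q n) + q n := (hbounds n).2.le
      _ ≤ F Q + Q := add_le_add (hmono hnQ) (Nat.cast_le.2 hnQ)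

lemma exists_fracDist_exact_order {τ : ℝ} (hτ : 2 ≤ τ) :
    ∃ x : ℝ, (∃ᶠ q : ℕ in atTop, fracDist x q ≤ (q : ℝ) ^ (-τ)) ∧
      ∀ q : ℕ, 0 < q → 1 / 10 * (q : ℝ) ^ (-τ) ≤ fracDist x q := by
  have hle_rpow {q : ℕ} (hq : 0 < q) : (q : ℝ) ≤ (q : ℝ) ^ (τ - 1) :=
    Real.self_le_rpow_of_one_le (Nat.one_le_cast.2 hq) (by linarith)
  have hrpow {q : ℕ} (hq : 0 < q) : (q : ℝ) ^ (-τ) = 1 / (q * (q : ℝ) ^ (τ - 1)) := by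
    have hq0 : (0 : ℝ) < q := Nat.cast_pos.2 hq
    rw [Real.rpow_neg hq0.le, Real.rpow_sub_one hq0.ne', mul_div_cancel₀ _ hq0.ne', one_div]
  obtain ⟨x, hfreq, hlow⟩ :=
    exists_frequently_fracDist_le_of_monotone (F := fun k => 4 * (k : ℝ) ^ (τ - 1))
      (fun a b hab => by dsimp only; gcongr; linarith) (fun k => by
        rcases k.eq_zero_or_pos with rfl | hk
        · simpa using Real.rpow_nonneg le_rfl _
        · linarith [hle_rpow hk])
  refine ⟨x, (hfreq.and_eventually (eventually_gt_atTop 0)).mono fun q ⟨hq, hq0⟩ => hq.trans ?_,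
    fun q hq0 => le_trans ?_ (hlow q hq0)⟩
  · have := Nat.cast_pos (α := ℝ).2 hq0
    rw [hrpow hq0, div_le_div_iff₀ (by positivity) (by positivity)]
    nlinarith [show 0 < (q : ℝ) * (q : ℝ) ^ (τ - 1) by positivity]
  · have := Nat.cast_pos (α := ℝ).2 hq0
    rw [hrpow hq0, div_mul_div_comm, one_mul]
    refine one_div_le_one_div_of_le (by positivity) ?_
    nlinarith [hle_rpow hq0]

lemma isBigO_one_log_sub_log_of_isTheta {α : Type*} {l : Filter α} {f g : α → ℝ}
    (h : f =Θ[l] g) : (fun a => Real.log (f a) - Real.log (g a)) =O[l] fun _ => (1 : ℝ) := by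
  obtain ⟨C, hC, hfg⟩ := h.1.exists_pos
  obtain ⟨D, hD, hgf⟩ := h.2.exists_pos
  refine IsBigO.of_bound (max |Real.log C| |Real.log D|) ?_
  filter_upwards [hfg.bound, hgf.bound, h.eq_zero_iff] with a hCa hDa hzero
  by_cases hga : g a = 0
  · simp [hga, hzero.2 hga]
  have hfa : f a ≠ 0 := hzero.not.2 hga
  have hlogC := Real.log_le_log (norm_pos_iff.2 hfa) hCa
  have hlogD := Real.log_le_log (norm_pos_iff.2 hga) hDa
  rw [Real.log_mul hC.ne' (norm_ne_zero_iff.2 hga)] at hlogC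
  rw [Real.log_mul hD.ne' (norm_ne_zero_iff.2 hfa)] at hlogD
  simp only [Real.norm_eq_abs, Real.log_abs] at hlogC hlogD
  rw [norm_one, mul_one, Real.norm_eq_abs, abs_le']
  exact ⟨le_max_of_le_left (by linarith [le_abs_self (Real.log C)]),
    le_max_of_le_right (by linarith [le_abs_self (Real.log D)])⟩

lemma tendsto_log_div_log_of_isTheta_rpow {f : ℝ → ℝ} {s : ℝ} (h : f =Θ[atTop] fun t => t ^ s) :
    Tendsto (fun t => Real.log (f t) / Real.log t) atTop (𝓝 s) := by
  have hlim := ((isBigO_one_log_sub_log_of_isTheta h).trans_isLittleO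
    Real.isLittleO_const_log_atTop).tendsto_div_nhds_zero
  refine (by simpa using hlim.const_add s : Tendsto _ atTop (𝓝 s)).congr' ?_
  filter_upwards [eventually_gt_atTop 1] with t ht
  have hlog : Real.log t ≠ 0 := (Real.log_pos ht).ne'
  rw [Real.log_rpow (one_pos.trans ht)]
  field_simp
  ring

theorem exists_Psi_ESet_nonempty_general {τ : ℝ} (hτ : 2 ≤ τ) :
    ∃ Ψ : ℝ → ℝ, (∀ q : ℝ, 0 < q → 0 < Ψ q) ∧ AntitoneOn Ψ (Set.Ioi 0) ∧
      Tendsto (fun q : ℝ => -Real.log (Ψ q) / Real.log q) atTop (𝓝 τ) ∧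
      (ESet Ψ 0).Nonempty := by
  obtain ⟨x, hfreq, hlow⟩ := exists_fracDist_exact_order hτ
  set φ : ℝ → ℝ := fun t => t ^ (-τ)
  have hφpos (t : ℝ) (ht : 0 < t) : 0 < φ t := Real.rpow_pos_of_pos ht _
  have hφ : AntitoneOn φ (Ioi 0) := Real.antitoneOn_rpow_Ioi_of_exponent_nonpos (by linarith)
  have hφ0 : Tendsto φ atTop (𝓝 0) := tendsto_rpow_neg_atTop (by linarith)
  have hx (q : ℕ) (hq : 0 < q) : 0 < fracDist x q :=
    (mul_pos (by norm_num) (hφpos q (Nat.cast_pos.2 hq))).trans_le (hlow q hq)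
  have htheta : approxEnvelope φ x =Θ[atTop] φ :=
    approxEnvelope_isTheta (by norm_num) hφ hφpos hlow
  refine ⟨approxEnvelope φ x, fun t ht => approxEnvelope_pos (hφpos t ht) hx,
    antitoneOn_approxEnvelope hφ, ?_, x, mem_ESet_zero_approxEnvelope hφ hφ0 hx hfreq⟩
  simpa [neg_div] using (tendsto_log_div_log_of_isTheta_rpow htheta).neg

/-- **Theorem.** For any `ω : (0,∞) → (0,∞)` and any `τ > 2` there exists a non-increasing
`Ψ : (0,∞) → (0,∞)` with `(−log Ψ(q))/log q → τ` as `q → ∞` and `E(Ψ,ω) ≠ ∅`. -/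
theorem exists_Psi_ESet_nonempty (ω : ℝ → ℝ) (hω : ∀ q : ℝ, 0 < q → 0 < ω q)
    (τ : ℝ) (hτ : 2 < τ) :
    ∃ Ψ : ℝ → ℝ, (∀ q : ℝ, 0 < q → 0 < Ψ q) ∧ AntitoneOn Ψ (Set.Ioi 0) ∧
      Filter.Tendsto (fun q : ℝ => -Real.log (Ψ q) / Real.log q) Filter.atTop (nhds τ) ∧
      (ESet Ψ ω).Nonempty := by
  obtain ⟨Ψ, hpos, hanti, hlim, hne⟩ := exists_Psi_ESet_nonempty_general hτ.le
  exact ⟨Ψ, hpos, hanti, hlim,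
    hne.mono (ESet_mono (fun q hq => (hpos q hq).le) fun q hq => (hω q hq).le)⟩
end
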